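/- Let Ω ⊂ ℝⁿ be a bounded open convex set with nonempty interior, and let f be a continuous function on the closure of Ω that is positive and subharmonic on Ω (Δf ≥ 0). Then ∫_Ω f dx ≤ (|Ω|^{1/n} / (ω_n^{1/n} √n)) ∫_{∂Ω} f dσ, where ω_n is the volume of the unit ball in ℝⁿ. -/

import Mathlib

open MeasureTheory

/-- The Laplacian of `f : ℝⁿ → ℝ`, as the sum of the second partial derivatives. -/
noncomputable def laplacian {n : ℕ} (f : EuclideanSpace ℝ (Fin n) → ℝ)
    (x : EuclideanSpace ℝ (Fin n)) : ℝ :=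
  ∑ i : Fin n,
    fderiv ℝ (fun y => fderiv ℝ f y (EuclideanSpace.single i (1 : ℝ))) x
      (EuclideanSpace.single i (1 : ℝ))

/-!
Let `u` be the torsion function of `Ω`: `-Δu = 1` in `Ω` and `u = 0` on `∂Ω`. Since `f` is
subharmonic and `u ≥ 0`, Green's identity gives `∫_Ω f = -∫_Ω f Δu ≤ ∫_{∂Ω} f |∇u|`, so it is enough
to show `|∇u| ≤ r / √n`, where `r` is the radius of the ball with the volume of `Ω`.

* With `M = max u`, the function `√(2M) t - t² / 2` of the distance `t` to a supporting hyperplane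
  is a barrier, so `u ≤ √(2M) dist(·, ∂Ω)`; comparing `u` with its translates, this boundary
  estimate propagates to the Lipschitz bound `√(2M)` for `u`.
* Talenti's comparison of `u` with the torsion function of a ball gives `M ≤ r² / (2n)`. The
  isoperimetric inequality it uses, for the level sets of `u`, is a consequence of the
  Prékopa–Leindler inequality.

The torsion function itself is obtained as the limit of the mean exit times of lattice walks with
mesh tending to `0`, for which the maximum principle is an induction on the number of steps. As
`f` is merely twice differentiable in `Ω`, its weak subharmonicity is derived from its
sup-convolutions; after that, `f` is contracted into `Ω` and mollified. Replacing `u` by the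
mollified torsion function of a slightly larger set makes Green's identity one for smooth functions
up to the boundary, for which the inequality `∫_Ω div X ≤ ∫_{∂Ω} |X|` suffices. A partition of unity
reduces that to fields of constant direction, where it is integration along lines.
-/

open Set Filter Metric
open scoped Topology ENNReal Pointwise

local notation "𝔼" n:max => EuclideanSpace ℝ (Fin n)

/-! ### The Prékopa–Leindler and Brunn–Minkowski inequalities -/

section BrunnMinkowski

theorem volume_add_volume_le_of_isCompact {A B : Set ℝ} (hA : IsCompact A) (hB : IsCompact B)
    (hAne : A.Nonempty) (hBne : B.Nonempty) :
    volume A + volume B ≤ volume (A + B) := by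
  obtain ⟨a, haA, ha⟩ := hA.exists_isGreatest hAne
  obtain ⟨b, hbB, hb⟩ := hB.exists_isLeast hBne
  have translates_subset : (· + b) '' A ∪ (a + ·) '' B ⊆ A + B := by
    rintro _ (⟨x, hx, rfl⟩ | ⟨x, hx, rfl⟩)
    · exact Set.add_mem_add hx hbB
    · exact Set.add_mem_add haA hx
  have translates_inter : AEDisjoint volume ((· + b) '' A) ((a + ·) '' B) := by
    refine measure_mono_null (t := {a + b}) ?_ (by simp)
    rintro _ ⟨⟨x, hx, rfl⟩, ⟨y, hy, hxy⟩⟩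
    have hxa : x ≤ a := ha hx
    have hby : b ≤ y := hb hy
    simp only [mem_singleton_iff] at *
    linarith
  calc volume A + volume B = volume ((· + b) '' A) + volume ((a + ·) '' B) := by simp
    _ = volume ((· + b) '' A ∪ (a + ·) '' B) :=
        (measure_union₀ (hB.image (by fun_prop)).measurableSet.nullMeasurableSet
          translates_inter).symm
    _ ≤ volume (A + B) := measure_mono translates_subset

theorem volume_add_volume_le_volume_add {A B : Set ℝ} (hA : MeasurableSet A)
    (hB : MeasurableSet B) (hAne : A.Nonempty) (hBne : B.Nonempty) :
    volume A + volume B ≤ volume (A + B) := by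
  obtain ⟨a, ha⟩ := hAne
  obtain ⟨b, hb⟩ := hBne
  have inner_regular {S : Set ℝ} (hS : MeasurableSet S) :
      volume S = ⨆ K, ⨆ _ : K ⊆ S ∧ IsCompact K, volume K := by
    simp only [hS.measure_eq_iSup_isCompact, iSup_and]
  rw [inner_regular hA, inner_regular hB]
  refine ENNReal.biSup_add_biSup_le' ⟨∅, empty_subset A, isCompact_empty⟩
    ⟨∅, empty_subset B, isCompact_empty⟩ fun K ⟨hKA, hK⟩ L ⟨hLB, hL⟩ => ?_
  calc volume K + volume L ≤ volume (insert a K) + volume (insert b L) := by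
        gcongr <;> exact subset_insert _ _
    _ ≤ volume (insert a K + insert b L) :=
        volume_add_volume_le_of_isCompact (hK.insert a) (hL.insert b) (insert_nonempty _ _)
          (insert_nonempty _ _)
    _ ≤ volume (A + B) := by
        gcongr
        exacts [insert_subset ha hKA, insert_subset hb hLB]

theorem lintegral_eq_lintegral_meas_ofReal_lt {α : Type*} [MeasurableSpace α] (μ : Measure α)
    {f : α → ℝ≥0∞} (hf : Measurable f) (hfin : ∀ x, f x ≠ ∞) :
    ∫⁻ x, f x ∂μ = ∫⁻ s in Ioi (0 : ℝ), μ {x | ENNReal.ofReal s < f x} := by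
  have h := lintegral_eq_lintegral_meas_lt μ (f := fun x => (f x).toReal)
    (Eventually.of_forall fun _ => ENNReal.toReal_nonneg) hf.ennreal_toReal.aemeasurable
  simp only [ENNReal.ofReal_toReal (hfin _)] at h
  rw [h]
  refine setLIntegral_congr_fun measurableSet_Ioi fun s hs => ?_
  simp only [ENNReal.ofReal_lt_iff_lt_toReal (le_of_lt hs) (hfin _)]

theorem rpow_mul_rpow_le_weighted_add {a b : ℝ} (ha : 0 < a) (hb : 0 < b) (hab : a + b = 1)
    (x y : ℝ≥0∞) : x ^ a * y ^ b ≤ ENNReal.ofReal a * x + ENNReal.ofReal b * y := by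
  rcases eq_or_ne x ∞ with rfl | hx
  · rw [ENNReal.mul_top (by simpa using ha)]; simp
  rcases eq_or_ne y ∞ with rfl | hy
  · rw [ENNReal.mul_top (by simpa using hb)]; simp
  lift x to NNReal using hx
  lift y to NNReal using hy
  have amgm := NNReal.geom_mean_le_arith_mean2_weighted a.toNNReal b.toNNReal x y
    (by rw [← Real.toNNReal_add ha.le hb.le, hab, Real.toNNReal_one])
  rw [Real.coe_toNNReal _ ha.le, Real.coe_toNNReal _ hb.le] at amgm
  rw [← ENNReal.coe_rpow_of_nonneg _ ha.le, ← ENNReal.coe_rpow_of_nonneg _ hb.le]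
  unfold ENNReal.ofReal
  exact_mod_cast amgm

theorem weighted_lintegral_add_le_of_iSup_eq_one {a b : ℝ} (ha : 0 < a) (hb : 0 < b)
    {f g h : ℝ → ℝ≥0∞} (hf : Measurable f) (hg : Measurable g) (hh : Measurable h)
    (hfsup : ⨆ x, f x = 1) (hgsup : ⨆ x, g x = 1)
    (hfgh : ∀ x y, min (f x) (g y) ≤ h (a * x + b * y)) :
    ENNReal.ofReal a * (∫⁻ x, f x) + ENNReal.ofReal b * (∫⁻ x, g x) ≤ ∫⁻ x, h x := by
  have hf1 (x : ℝ) : f x ≤ 1 := hfsup ▸ le_iSup f x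
  have hg1 (x : ℝ) : g x ≤ 1 := hgsup ▸ le_iSup g x
  have ne_top {t : ℝ≥0∞} (ht : t ≤ 1) : t ≠ ∞ := ne_top_of_le_ne_top ENNReal.one_ne_top ht
  have meas_antitone (k : ℝ → ℝ≥0∞) : Antitone fun s => volume {x | ENNReal.ofReal s < k x} :=
    fun s t hst => measure_mono fun x hx => (ENNReal.ofReal_le_ofReal hst).trans_lt hx
  refine le_trans ?_ (lintegral_mono fun x => min_le_left (h x) 1)
  rw [lintegral_eq_lintegral_meas_ofReal_lt _ hf fun x => ne_top (hf1 x),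
    lintegral_eq_lintegral_meas_ofReal_lt _ hg fun x => ne_top (hg1 x),
    lintegral_eq_lintegral_meas_ofReal_lt _ (hh.min measurable_const)
      fun x => ne_top (min_le_right _ _),
    ← lintegral_const_mul _ (meas_antitone f).measurable,
    ← lintegral_const_mul _ (meas_antitone g).measurable,
    ← lintegral_add_left ((meas_antitone f).measurable.const_mul _)]
  refine lintegral_mono fun s => ?_
  rcases le_or_gt 1 (ENNReal.ofReal s) with hs | hs
  · simp [fun x => ((hf1 x).trans hs).not_gt, fun x => ((hg1 x).trans hs).not_gt]
  have superlevels := volume_add_volume_le_volume_add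
    (A := a • {x | ENNReal.ofReal s < f x}) (B := b • {x | ENNReal.ofReal s < g x})
    ((measurableSet_lt measurable_const hf).const_smul_of_ne_zero ha.ne')
    ((measurableSet_lt measurable_const hg).const_smul_of_ne_zero hb.ne')
    (Set.Nonempty.smul_set (lt_iSup_iff.1 (hs.trans_eq hfsup.symm)))
    (Set.Nonempty.smul_set (lt_iSup_iff.1 (hs.trans_eq hgsup.symm)))
  simp only [Measure.addHaar_smul, Module.finrank_self, pow_one, abs_of_pos ha,
    abs_of_pos hb] at superlevels
  refine superlevels.trans (measure_mono ?_)
  rintro _ ⟨_, ⟨x, hx, rfl⟩, _, ⟨y, hy, rfl⟩, rfl⟩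
  exact lt_min ((lt_min hx hy).trans_le (hfgh x y)) hs

theorem div_rpow_mul_div_rpow {a b : ℝ} (ha : 0 < a) (hb : 0 < b) {s t : ℝ≥0∞}
    (hs : s ≠ 0) (hs' : s ≠ ∞) (x y : ℝ≥0∞) :
    (x / s) ^ a * (y / t) ^ b = x ^ a * y ^ b / (s ^ a * t ^ b) := by
  rw [ENNReal.div_rpow_of_nonneg _ _ ha.le, ENNReal.div_rpow_of_nonneg _ _ hb.le]
  simp only [div_eq_mul_inv]
  rw [ENNReal.mul_inv (by simp [hs, hs']) (by simp [hs, hs'])]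
  ring

theorem min_le_rpow_mul_rpow {a b : ℝ} (ha : 0 < a) (hb : 0 < b) (hab : a + b = 1)
    (x y : ℝ≥0∞) : min x y ≤ x ^ a * y ^ b := by
  calc min x y = min x y ^ a * min x y ^ b := by
        rw [← ENNReal.rpow_add_of_nonneg _ _ ha.le hb.le, hab, ENNReal.rpow_one]
    _ ≤ x ^ a * y ^ b := by
        gcongr
        exacts [min_le_left _ _, min_le_right _ _]

theorem prekopa_leindler_real_of_bounded {a b : ℝ} (ha : 0 < a) (hb : 0 < b) (hab : a + b = 1)
    {f g h : ℝ → ℝ≥0∞} (hf : Measurable f) (hg : Measurable g) (hh : Measurable h)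
    (hfbdd : ⨆ x, f x ≠ ∞) (hgbdd : ⨆ x, g x ≠ ∞)
    (hfgh : ∀ x y, f x ^ a * g y ^ b ≤ h (a * x + b * y)) :
    (∫⁻ x, f x) ^ a * (∫⁻ x, g x) ^ b ≤ ∫⁻ x, h x := by
  set s := ⨆ x, f x
  set t := ⨆ x, g x
  rcases eq_or_ne s 0 with hs | hs
  · have : f = 0 := funext fun x => le_antisymm ((le_iSup f x).trans hs.le) bot_le
    simp [this, ha]
  rcases eq_or_ne t 0 with ht | ht
  · have : g = 0 := funext fun x => le_antisymm ((le_iSup g x).trans ht.le) bot_le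
    simp [this, hb]
  set c := s ^ a * t ^ b
  have hc : c ≠ 0 := by simp [c, hs, hfbdd, ht, hgbdd]
  have hc' : c ≠ ∞ := ENNReal.mul_ne_top (ENNReal.rpow_ne_top_of_nonneg ha.le hfbdd)
    (ENNReal.rpow_ne_top_of_nonneg hb.le hgbdd)
  have normalized := weighted_lintegral_add_le_of_iSup_eq_one ha hb (hf.div_const s)
    (hg.div_const t) (hh.div_const c)
    (by rw [← ENNReal.iSup_div, ENNReal.div_self hs hfbdd])
    (by rw [← ENNReal.iSup_div, ENNReal.div_self ht hgbdd]) fun x y =>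
      calc min (f x / s) (g y / t) ≤ (f x / s) ^ a * (g y / t) ^ b :=
            min_le_rpow_mul_rpow ha hb hab _ _
        _ = f x ^ a * g y ^ b / c := div_rpow_mul_div_rpow ha hb hs hfbdd _ _
        _ ≤ h (a * x + b * y) / c := by gcongr; exact hfgh x y
  have scaled := (rpow_mul_rpow_le_weighted_add ha hb hab _ _).trans normalized
  simp only [div_eq_mul_inv] at scaled
  rw [lintegral_mul_const _ hf, lintegral_mul_const _ hg, lintegral_mul_const _ hh] at scaled
  simp only [← div_eq_mul_inv] at scaled
  rwa [div_rpow_mul_div_rpow ha hb hs hfbdd, ENNReal.div_le_iff hc hc',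
    ENNReal.div_mul_cancel hc hc'] at scaled

theorem tendsto_lintegral_min_natCast {α : Type*} [MeasurableSpace α] {μ : Measure α}
    {f : α → ℝ≥0∞} (hf : Measurable f) :
    Tendsto (fun k : ℕ => ∫⁻ x, min (f x) k ∂μ) atTop (𝓝 (∫⁻ x, f x ∂μ)) := by
  refine lintegral_tendsto_of_tendsto_of_monotone
    (fun k => (hf.min measurable_const).aemeasurable)
    (Eventually.of_forall fun x k l hkl => by dsimp only; gcongr)
    (Eventually.of_forall fun x => ?_)
  simpa using (tendsto_const_nhds (x := f x)).min ENNReal.tendsto_nat_nhds_top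

theorem prekopa_leindler_real {a b : ℝ} (ha : 0 < a) (hb : 0 < b) (hab : a + b = 1)
    {f g h : ℝ → ℝ≥0∞} (hf : Measurable f) (hg : Measurable g) (hh : Measurable h)
    (hfgh : ∀ x y, f x ^ a * g y ^ b ≤ h (a * x + b * y)) :
    (∫⁻ x, f x) ^ a * (∫⁻ x, g x) ^ b ≤ ∫⁻ x, h x := by
  rcases eq_or_ne (∫⁻ x, f x) 0 with hf0 | hf0
  · simp [hf0, ha]
  rcases eq_or_ne (∫⁻ x, g x) 0 with hg0 | hg0
  · simp [hg0, hb]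
  have truncated := ENNReal.Tendsto.mul
    ((ENNReal.continuous_rpow_const (y := a)).continuousAt.tendsto.comp
      (tendsto_lintegral_min_natCast (μ := volume) hf)) (Or.inl (by simp [hf0, ha.le]))
    ((ENNReal.continuous_rpow_const (y := b)).continuousAt.tendsto.comp
      (tendsto_lintegral_min_natCast (μ := volume) hg)) (Or.inl (by simp [hg0, hb.le]))
  refine le_of_tendsto' truncated fun k => ?_
  refine prekopa_leindler_real_of_bounded ha hb hab (hf.min measurable_const)
    (hg.min measurable_const) hh
    (ne_top_of_le_ne_top (ENNReal.natCast_ne_top k) (iSup_le fun x => min_le_right _ _))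
    (ne_top_of_le_ne_top (ENNReal.natCast_ne_top k) (iSup_le fun x => min_le_right _ _))
    fun x y => le_trans ?_ (hfgh x y)
  gcongr <;> exact min_le_left _ _

theorem prekopa_leindler_pi {a b : ℝ} (ha : 0 < a) (hb : 0 < b) (hab : a + b = 1) (n : ℕ)
    {f g h : (Fin n → ℝ) → ℝ≥0∞} (hf : Measurable f) (hg : Measurable g) (hh : Measurable h)
    (hfgh : ∀ x y, f x ^ a * g y ^ b ≤ h (a • x + b • y)) :
    (∫⁻ x, f x) ^ a * (∫⁻ x, g x) ^ b ≤ ∫⁻ x, h x := by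
  induction n with
  | zero =>
    rw [Measure.volume_pi_eq_dirac]
    simp only [lintegral_dirac]
    convert hfgh isEmptyElim isEmptyElim using 2
  | succ n ih =>
    set e := (MeasurableEquiv.piFinSuccAbove (fun _ : Fin (n + 1) => ℝ) 0).symm with he
    have fubini {k : (Fin (n + 1) → ℝ) → ℝ≥0∞} (hk : Measurable k) :
        ∫⁻ x, k x = ∫⁻ x : ℝ, ∫⁻ y : Fin n → ℝ, k (e (x, y)) := by
      rw [← (volume_preserving_piFinSuccAbove (fun _ : Fin (n + 1) => ℝ) 0).symm.lintegral_comp hk]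
      exact lintegral_prod _ (hk.comp e.measurable).aemeasurable
    have slice {k : (Fin (n + 1) → ℝ) → ℝ≥0∞} (hk : Measurable k) (x : ℝ) :
        Measurable fun y => k (e (x, y)) :=
      hk.comp (e.measurable.comp measurable_prodMk_left)
    have marginal {k : (Fin (n + 1) → ℝ) → ℝ≥0∞} (hk : Measurable k) :
        Measurable fun x : ℝ => ∫⁻ y : Fin n → ℝ, k (e (x, y)) :=
      (hk.comp e.measurable).lintegral_prod_right'
    rw [fubini hf, fubini hg, fubini hh]
    refine prekopa_leindler_real ha hb hab (marginal hf) (marginal hg) (marginal hh) fun x y =>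
      ih (slice hf x) (slice hg y) (slice hh _) fun u v =>
        (hfgh (e (x, u)) (e (y, v))).trans (le_of_eq (congrArg h ?_))
    ext i
    simp only [he, MeasurableEquiv.piFinSuccAbove]
    refine Fin.cases ?_ (fun j => ?_) i <;> simp [Fin.insertNthEquiv]

variable {n : ℕ}

theorem prekopa_leindler {a b : ℝ} (ha : 0 < a) (hb : 0 < b) (hab : a + b = 1)
    {f g h : 𝔼 n → ℝ≥0∞} (hf : Measurable f) (hg : Measurable g) (hh : Measurable h)
    (hfgh : ∀ x y, f x ^ a * g y ^ b ≤ h (a • x + b • y)) :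
    (∫⁻ x, f x) ^ a * (∫⁻ x, g x) ^ b ≤ ∫⁻ x, h x := by
  have toLp := PiLp.volume_preserving_toLp (Fin n)
  rw [← toLp.lintegral_comp hf, ← toLp.lintegral_comp hg, ← toLp.lintegral_comp hh]
  exact prekopa_leindler_pi ha hb hab n (hf.comp toLp.measurable) (hg.comp toLp.measurable)
    (hh.comp toLp.measurable) fun x y => hfgh _ _

theorem prekopa_leindler_sets {a b : ℝ} (ha : 0 < a) (hb : 0 < b) (hab : a + b = 1)
    {A B C : Set (𝔼 n)} (hA : MeasurableSet A) (hB : MeasurableSet B) (hC : MeasurableSet C)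
    (hABC : a • A + b • B ⊆ C) : volume A ^ a * volume B ^ b ≤ volume C := by
  have h := prekopa_leindler ha hb hab (measurable_one.indicator hA)
    (measurable_one.indicator hB) (measurable_one.indicator hC) (n := n) fun x y => by
      by_cases hx : x ∈ A
      · by_cases hy : y ∈ B
        · simp [hx, hy, hABC (add_mem_add (smul_mem_smul_set hx) (smul_mem_smul_set hy))]
        · simp [hy, hb]
      · simp [hx, ha]
  rwa [lintegral_indicator_one hA, lintegral_indicator_one hB, lintegral_indicator_one hC] at h

theorem brunn_minkowski {A B C : Set (𝔼 n)} (hA : MeasurableSet A) (hB : MeasurableSet B)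
    (hC : MeasurableSet C) (hABC : A + B ⊆ C) {s t : ℝ} (hs : 0 < s) (ht : 0 < t)
    (hAs : volume A = ENNReal.ofReal (s ^ n)) (hBt : volume B = ENNReal.ofReal (t ^ n)) :
    ENNReal.ofReal ((s + t) ^ n) ≤ volume C := by
  have rescaled {D : Set (𝔼 n)} {r : ℝ} (hr : 0 < r) (hD : volume D = ENNReal.ofReal (r ^ n)) :
      volume ((r / (s + t))⁻¹ • D) = ENNReal.ofReal ((s + t) ^ n) := by
    rw [Measure.addHaar_smul, finrank_euclideanSpace_fin, hD, abs_of_pos (by positivity),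
      ← ENNReal.ofReal_mul (by positivity), ← mul_pow]
    congr 2
    field_simp
  have hvol0 : ENNReal.ofReal ((s + t) ^ n) ≠ 0 := (ENNReal.ofReal_pos.2 (by positivity)).ne'
  have key := prekopa_leindler_sets (a := s / (s + t)) (b := t / (s + t)) (by positivity)
    (by positivity) (by field_simp)
    (hA.const_smul_of_ne_zero (a := (s / (s + t))⁻¹) (by positivity))
    (hB.const_smul_of_ne_zero (a := (t / (s + t))⁻¹) (by positivity)) hC
    (by rwa [smul_inv_smul₀ (by positivity), smul_inv_smul₀ (by positivity)])
  rwa [rescaled hs hAs, rescaled ht hBt,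
    ← ENNReal.rpow_add _ _ hvol0 ENNReal.ofReal_ne_top, ← add_div,
    div_self (by positivity), ENNReal.rpow_one] at key

end BrunnMinkowski

section VolumeRadius

variable {n : ℕ}

/-- The radius of the Euclidean ball with the same volume as `A`; the quantity
`|A|^(1/n) / ω_n^(1/n)`. -/
noncomputable def volumeRadius (A : Set (𝔼 n)) : ℝ :=
  volume.real A ^ (n : ℝ)⁻¹ / volume.real (ball (0 : 𝔼 n) 1) ^ (n : ℝ)⁻¹

theorem volume_unitBall_pos : 0 < volume.real (ball (0 : 𝔼 n) 1) :=
  ENNReal.toReal_pos (measure_ball_pos _ _ one_pos).ne' measure_ball_lt_top.ne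

theorem volumeRadius_nonneg (A : Set (𝔼 n)) : 0 ≤ volumeRadius A := by
  unfold volumeRadius; positivity

theorem unitBall_mul_volumeRadius_pow (hn : n ≠ 0) (A : Set (𝔼 n)) :
    volume.real (ball (0 : 𝔼 n) 1) * volumeRadius A ^ n = volume.real A := by
  rw [volumeRadius, div_pow, Real.rpow_inv_natCast_pow measureReal_nonneg hn,
    Real.rpow_inv_natCast_pow measureReal_nonneg hn, mul_div_cancel₀ _ volume_unitBall_pos.ne']

theorem volumeRadius_pos (hn : n ≠ 0) {A : Set (𝔼 n)} (hA : volume A ≠ 0) (hA' : volume A ≠ ∞) :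
    0 < volumeRadius A :=
  (volumeRadius_nonneg A).lt_of_ne fun h => (ENNReal.toReal_pos hA hA').ne' <| by
    rw [← measureReal_def, ← unitBall_mul_volumeRadius_pow hn, ← h, zero_pow hn, mul_zero]

theorem volumeRadius_mono {A B : Set (𝔼 n)} (h : A ⊆ B) (hB : volume B ≠ ∞) :
    volumeRadius A ≤ volumeRadius B := by
  unfold volumeRadius
  gcongr

theorem unitBall_mul_volumeRadius_add_pow_le (hn : n ≠ 0) {A : Set (𝔼 n)} (hA : IsOpen A)
    (hA0 : volume A ≠ 0) (hAfin : volume A ≠ ∞) {r : ℝ} (hr : 0 < r) :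
    ENNReal.ofReal (volume.real (ball (0 : 𝔼 n) 1) * (volumeRadius A + r) ^ n) ≤
      volume (thickening r A) := by
  set ω := volume.real (ball (0 : 𝔼 n) 1)
  have hω : 0 < ω := volume_unitBall_pos
  have hωpow : (ω ^ (n : ℝ)⁻¹) ^ n = ω := Real.rpow_inv_natCast_pow hω.le hn
  have hR := volumeRadius_pos hn hA0 hAfin
  have hvolA : volume A = ENNReal.ofReal ((ω ^ (n : ℝ)⁻¹ * volumeRadius A) ^ n) := by
    rw [mul_pow, hωpow, unitBall_mul_volumeRadius_pow hn, measureReal_def,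
      ENNReal.ofReal_toReal hAfin]
  have hvolBall : volume (ball (0 : 𝔼 n) r) = ENNReal.ofReal ((ω ^ (n : ℝ)⁻¹ * r) ^ n) := by
    rw [mul_pow, hωpow, Measure.addHaar_ball_of_pos _ _ hr, finrank_euclideanSpace_fin,
      mul_comm ω, ENNReal.ofReal_mul (by positivity)]
    exact congrArg _ (ENNReal.ofReal_toReal measure_ball_lt_top.ne).symm
  have key := brunn_minkowski hA.measurableSet measurableSet_ball isOpen_thickening.measurableSet
    (by rw [add_ball, zero_vadd]) (by positivity) (by positivity) hvolA hvolBall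
  rwa [← mul_add, mul_pow, hωpow] at key

theorem isoperimetric_thickening (hn : n ≠ 0) {A : Set (𝔼 n)} (hA : IsOpen A)
    (hA0 : volume A ≠ 0) (hAfin : volume A ≠ ∞) {r : ℝ} (hr : 0 < r) :
    volume A + ENNReal.ofReal
      (r * (n * volume.real (ball (0 : 𝔼 n) 1) * volumeRadius A ^ (n - 1))) ≤
      volume (thickening r A) := by
  have hR := volumeRadius_nonneg A
  refine le_trans ?_ (unitBall_mul_volumeRadius_add_pow_le hn hA hA0 hAfin hr)
  rw [← ENNReal.ofReal_toReal hAfin, ← measureReal_def, ← unitBall_mul_volumeRadius_pow hn,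
    ← ENNReal.ofReal_add (by positivity) (by positivity)]
  refine ENNReal.ofReal_le_ofReal ?_
  have bernoulli := pow_add_mul_le_add_pow hR (b := r) (by positivity) n
  nlinarith [volume_unitBall_pos (n := n)]

end VolumeRadius

/-! ### The Laplacian of `C²` functions -/

section Laplacian

variable {n : ℕ}

theorem contDiff_one_fderiv_apply {f : 𝔼 n → ℝ} (hf : ContDiff ℝ 2 f) (e : 𝔼 n) :
    ContDiff ℝ 1 fun x => fderiv ℝ f x e :=
  (hf.fderiv_right le_rfl).clm_apply contDiff_const

theorem continuous_fderiv_fderiv_apply {f : 𝔼 n → ℝ} (hf : ContDiff ℝ 2 f) (e : 𝔼 n) :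
    Continuous fun x => fderiv ℝ (fun y => fderiv ℝ f y e) x e :=
  ((contDiff_one_fderiv_apply hf e).continuous_fderiv one_ne_zero).clm_apply continuous_const

theorem continuous_laplacian {f : 𝔼 n → ℝ} (hf : ContDiff ℝ 2 f) : Continuous (laplacian f) :=
  continuous_finsetSum _ fun _ _ => continuous_fderiv_fderiv_apply hf _

theorem tsupport_laplacian_subset (f : 𝔼 n → ℝ) : tsupport (laplacian f) ⊆ tsupport f := by
  have vanish {x : 𝔼 n} (hx : x ∉ tsupport f) : laplacian f x = 0 :=
    Finset.sum_eq_zero fun i _ => image_eq_zero_of_notMem_tsupport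
      (f := fun y => fderiv ℝ (fun z => fderiv ℝ f z _) y _) fun h =>
        hx (tsupport_fderiv_apply_subset ℝ _ (tsupport_fderiv_apply_subset ℝ _ h))
  exact closure_minimal (fun x hx => not_imp_comm.1 vanish hx) (isClosed_tsupport f)

theorem hasCompactSupport_laplacian {f : 𝔼 n → ℝ} (hf : HasCompactSupport f) :
    HasCompactSupport (laplacian f) :=
  hf.mono' (subset_closure.trans (tsupport_laplacian_subset f))

theorem norm_sq_eq_sum_apply_single_sq (L : 𝔼 n →L[ℝ] ℝ) :
    ‖L‖ ^ 2 = ∑ i, L (EuclideanSpace.single i 1) ^ 2 := by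
  obtain ⟨g, rfl⟩ := (InnerProductSpace.toDual ℝ (𝔼 n)).surjective L
  simp [EuclideanSpace.real_norm_sq_eq, EuclideanSpace.inner_single_right]

theorem integral_mul_laplacian {g w : 𝔼 n → ℝ} (hg : ContDiff ℝ 1 g) (hw : ContDiff ℝ 2 w)
    (hwc : HasCompactSupport w) :
    ∫ x, g x * laplacian w x = -∫ x, ∑ i, fderiv ℝ g x (EuclideanSpace.single i 1) *
      fderiv ℝ w x (EuclideanSpace.single i 1) := by
  have hdg (e : 𝔼 n) : Continuous fun x => fderiv ℝ g x e :=
    (hg.continuous_fderiv one_ne_zero).clm_apply continuous_const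
  have hdw (e : 𝔼 n) := contDiff_one_fderiv_apply hw e
  have hdwc (e : 𝔼 n) : HasCompactSupport fun x => fderiv ℝ w x e := hwc.fderiv_apply ℝ e
  have hint_g_ddw (e : 𝔼 n) :
      Integrable fun x => g x * fderiv ℝ (fun y => fderiv ℝ w y e) x e :=
    (hg.continuous.mul (continuous_fderiv_fderiv_apply hw e)).integrable_of_hasCompactSupport
      ((hdwc e).fderiv_apply ℝ e).mul_left
  have hint_dg_dw (e : 𝔼 n) : Integrable fun x => fderiv ℝ g x e * fderiv ℝ w x e :=
    ((hdg e).mul (hdw e).continuous).integrable_of_hasCompactSupport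
      (hdwc e).mul_left
  have by_parts (e : 𝔼 n) : ∫ x, g x * fderiv ℝ (fun y => fderiv ℝ w y e) x e =
      -∫ x, fderiv ℝ g x e * fderiv ℝ w x e :=
    integral_mul_fderiv_eq_neg_fderiv_mul_of_integrable (hint_dg_dw e) (hint_g_ddw e)
      ((hg.continuous.mul (hdw e).continuous).integrable_of_hasCompactSupport
        (hdwc e).mul_left)
      (fun x _ => hg.differentiable one_ne_zero x)
      (fun x _ => (hdw e).differentiable one_ne_zero x)
  simp only [laplacian, Finset.mul_sum]
  rw [integral_finsetSum _ fun i _ => hint_g_ddw _,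
    integral_finsetSum _ fun i _ => hint_dg_dw _, ← Finset.sum_neg_distrib]
  exact Finset.sum_congr rfl fun i _ => by_parts _

theorem integral_comp_mul_laplacian {w : 𝔼 n → ℝ} (hw : ContDiff ℝ 2 w)
    (hwc : HasCompactSupport w) {Φ Ψ : ℝ → ℝ} (hΦ : ∀ s, HasDerivAt Φ (Ψ s) s)
    (hΨ : Continuous Ψ) :
    ∫ x, Φ (w x) * laplacian w x = -∫ x, Ψ (w x) * ‖fderiv ℝ w x‖ ^ 2 := by
  have hΦ1 : ContDiff ℝ 1 Φ := contDiff_one_iff_deriv.2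
    ⟨fun s => (hΦ s).differentiableAt, by rwa [funext fun s => (hΦ s).deriv]⟩
  have chain (x : 𝔼 n) : fderiv ℝ (fun y => Φ (w y)) x = Ψ (w x) • fderiv ℝ w x :=
    ((hΦ (w x)).comp_hasFDerivAt x (hw.differentiable two_ne_zero x).hasFDerivAt).fderiv
  rw [integral_mul_laplacian (g := fun x => Φ (w x)) (hΦ1.comp (hw.of_le one_le_two)) hw hwc]
  congr! 3 with x
  rw [norm_sq_eq_sum_apply_single_sq, Finset.mul_sum]
  refine Finset.sum_congr rfl fun i _ => ?_
  simp only [chain, smul_apply, smul_eq_mul]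
  ring

end Laplacian

/-! ### Talenti's bound for the torsion problem -/

section Talenti

variable {n : ℕ} {w : 𝔼 n → ℝ}

theorem volume_superlevel_lt_top (hwc : HasCompactSupport w) {a : ℝ} (ha : 0 ≤ a) :
    volume {x | a < w x} < ∞ :=
  (measure_mono fun _ hx => subset_tsupport _ (ha.trans_lt hx).ne').trans_lt
    hwc.isCompact.measure_lt_top

theorem exists_primitive_of_le_indicator {a b : ℝ} (hab : a ≤ b) {Ψ : ℝ → ℝ} (hΨ : Continuous Ψ)
    (hΨ0 : ∀ s, 0 ≤ Ψ s) (hΨ1 : ∀ s, Ψ s ≤ (Ioo a b).indicator 1 s) :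
    ∃ Φ : ℝ → ℝ, (∀ s, HasDerivAt Φ (Ψ s) s) ∧ (∀ s ≤ a, Φ s = 0) ∧ (∀ s, 0 ≤ Φ s) ∧
      ∀ s, Φ s ≤ b - a := by
  have vanish {s : ℝ} (hs : s ≤ a) : ∫ t in a..s, Ψ t = 0 := by
    refine intervalIntegral.integral_zero_ae (Eventually.of_forall fun t ht => ?_)
    rw [uIoc_of_ge hs] at ht
    exact le_antisymm ((hΨ1 t).trans_eq (indicator_of_notMem (fun h => ht.2.not_gt h.1) _)) (hΨ0 t)
  refine ⟨fun s => ∫ t in a..s, Ψ t, fun s => hΨ.integral_hasStrictDerivAt a s |>.hasDerivAt,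
    fun s hs => vanish hs, fun s => ?_, fun s => ?_⟩ <;> rcases le_total s a with hs | hs
  · exact (vanish hs).ge
  · exact intervalIntegral.integral_nonneg hs fun t _ => hΨ0 t
  · exact (vanish hs).trans_le (sub_nonneg.2 hab)
  have integrable_one : IntegrableOn (1 : ℝ → ℝ) (Ioo a b) := integrableOn_const (by simp)
  calc ∫ t in a..s, Ψ t = ∫ t in Ioc a s, Ψ t := intervalIntegral.integral_of_le hs
    _ ≤ ∫ t in Ioc a s, (Ioo a b).indicator 1 t :=
        integral_mono hΨ.integrableOn_Ioc (integrable_one.integrable_indicator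
          measurableSet_Ioo).integrableOn hΨ1
    _ ≤ ∫ t, (Ioo a b).indicator 1 t :=
        setIntegral_le_integral (integrable_one.integrable_indicator measurableSet_Ioo)
          (Eventually.of_forall fun t => indicator_nonneg (fun _ _ => zero_le_one) t)
    _ = b - a := by simp [integral_indicator_one measurableSet_Ioo, hab]

theorem integral_comp_mul_norm_fderiv_sq_le (hw : ContDiff ℝ 2 w) (hwc : HasCompactSupport w)
    (hΔ : ∀ x, -laplacian w x ≤ 1) {a b : ℝ} (ha : 0 ≤ a) (hab : a ≤ b) {Ψ : ℝ → ℝ}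
    (hΨ : Continuous Ψ) (hΨ0 : ∀ s, 0 ≤ Ψ s) (hΨ1 : ∀ s, Ψ s ≤ (Ioo a b).indicator 1 s) :
    ∫ x, Ψ (w x) * ‖fderiv ℝ w x‖ ^ 2 ≤ (b - a) * volume.real {x | a < w x} := by
  obtain ⟨Φ, hΦ, hΦa, hΦ0, hΦ1⟩ := exists_primitive_of_le_indicator hab hΨ hΨ0 hΨ1
  have hΦc : Continuous Φ := continuous_iff_continuousAt.2 fun s => (hΦ s).continuousAt
  have hmeas : MeasurableSet {x | a < w x} :=
    (isOpen_lt continuous_const hw.continuous).measurableSet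
  have hfin : IntegrableOn (fun _ => b - a) {x | a < w x} :=
    integrableOn_const (volume_superlevel_lt_top hwc ha).ne
  rw [← neg_eq_iff_eq_neg.2 (integral_comp_mul_laplacian hw hwc hΦ hΨ), ← integral_neg]
  calc ∫ x, -(Φ (w x) * laplacian w x)
      ≤ ∫ x, {x | a < w x}.indicator (fun _ => b - a) x := by
        refine integral_mono (Continuous.integrable_of_hasCompactSupport
          ((hΦc.comp hw.continuous).mul (continuous_laplacian hw))
          (hasCompactSupport_laplacian hwc).mul_left).neg (hfin.integrable_indicator hmeas) ?_
        intro x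
        dsimp only
        by_cases hx : a < w x
        · rw [indicator_of_mem (by exact hx)]
          nlinarith [hΔ x, hΦ0 (w x), hΦ1 (w x)]
        · rw [indicator_of_notMem (by exact hx), hΦa _ (not_lt.1 hx)]
          simp
    _ = (b - a) * volume.real {x | a < w x} := by
        rw [integral_indicator_const _ hmeas, smul_eq_mul, mul_comm]

theorem exists_continuous_tendsto_indicator_Ioo (a b : ℝ) :
    ∃ Ψ : ℕ → ℝ → ℝ, (∀ k, Continuous (Ψ k)) ∧ (∀ k s, 0 ≤ Ψ k s) ∧
      (∀ k s, Ψ k s ≤ (Ioo a b).indicator 1 s) ∧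
      ∀ s, Tendsto (fun k => Ψ k s) atTop (𝓝 ((Ioo a b).indicator 1 s)) := by
  refine ⟨fun k s => max 0 (min 1 (k * min (s - a) (b - s))), fun k => by fun_prop,
    fun k s => le_max_left _ _, fun k s => ?_, fun s => ?_⟩ <;> by_cases hs : s ∈ Ioo a b
  · rw [indicator_of_mem hs]
    exact max_le zero_le_one (min_le_left _ _)
  · rw [indicator_of_notMem hs]
    refine max_le le_rfl ((min_le_right _ _).trans (mul_nonpos_of_nonneg_of_nonpos
      (Nat.cast_nonneg k) (min_le_iff.2 ?_)))
    by_contra! h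
    exact hs ⟨by linarith, by linarith⟩
  · rw [indicator_of_mem hs, Pi.one_apply]
    have hmin : 0 < min (s - a) (b - s) := lt_min (by linarith [hs.1]) (by linarith [hs.2])
    refine tendsto_const_nhds.congr' ?_
    filter_upwards [(tendsto_natCast_atTop_atTop.atTop_mul_const hmin).eventually_ge_atTop 1]
      with k hk
    rw [min_eq_left hk, max_eq_right zero_le_one]
  · rw [indicator_of_notMem hs]
    refine tendsto_const_nhds.congr fun k => (max_eq_left ((min_le_right _ _).trans
      (mul_nonpos_of_nonneg_of_nonpos (Nat.cast_nonneg k) (min_le_iff.2 ?_)))).symm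
    by_contra! h
    exact hs ⟨by linarith, by linarith⟩

theorem integrable_norm_fderiv_sq (hw : ContDiff ℝ 2 w) (hwc : HasCompactSupport w) :
    Integrable fun x => ‖fderiv ℝ w x‖ ^ 2 :=
  Continuous.integrable_of_hasCompactSupport ((hw.continuous_fderiv two_ne_zero).norm.pow 2)
    ((hwc.fderiv ℝ).comp_left (g := fun L : 𝔼 n →L[ℝ] ℝ => ‖L‖ ^ 2) (by simp))

theorem integral_strip_norm_fderiv_sq_le (hw : ContDiff ℝ 2 w) (hwc : HasCompactSupport w)
    (hΔ : ∀ x, -laplacian w x ≤ 1) {a b : ℝ} (ha : 0 ≤ a) (hab : a ≤ b) :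
    ∫ x in w ⁻¹' Ioo a b, ‖fderiv ℝ w x‖ ^ 2 ≤ (b - a) * volume.real {x | a < w x} := by
  obtain ⟨Ψ, hΨ, hΨ0, hΨ1, hΨlim⟩ := exists_continuous_tendsto_indicator_Ioo a b
  refine le_of_tendsto' (x := atTop) ?_ fun k =>
    integral_comp_mul_norm_fderiv_sq_le hw hwc hΔ ha hab (hΨ k) (hΨ0 k) (hΨ1 k)
  rw [← integral_indicator (hw.continuous.measurable measurableSet_Ioo)]
  refine tendsto_integral_of_dominated_convergence (fun x => ‖fderiv ℝ w x‖ ^ 2)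
    (fun k => (((hΨ k).comp hw.continuous).mul
      ((hw.continuous_fderiv two_ne_zero).norm.pow 2)).aestronglyMeasurable)
    (integrable_norm_fderiv_sq hw hwc) (fun k => Eventually.of_forall fun x => ?_)
    (Eventually.of_forall fun x => ?_)
  · rw [Real.norm_of_nonneg (mul_nonneg (hΨ0 k _) (by positivity))]
    exact mul_le_of_le_one_left (by positivity) ((hΨ1 k _).trans
      (indicator_le_self' (fun _ _ => zero_le_one) _))
  · convert (hΨlim (w x)).mul_const (‖fderiv ℝ w x‖ ^ 2) using 2
    by_cases hx : w x ∈ Ioo a b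
    · rw [indicator_of_mem (by exact hx), indicator_of_mem hx, Pi.one_apply, one_mul]
    · rw [indicator_of_notMem (by exact hx), indicator_of_notMem hx, zero_mul]

theorem exists_forall_le_add_norm_fderiv_mul (hw : ContDiff ℝ 2 w) (hwc : HasCompactSupport w) :
    ∃ C K : ℝ, 0 ≤ C ∧ (∀ x, ‖fderiv ℝ w x‖ ≤ K) ∧
      ∀ x y, w y ≤ w x + ‖fderiv ℝ w x‖ * ‖y - x‖ + C * ‖y - x‖ ^ 2 := by
  have w'_smooth : ContDiff ℝ 1 (fderiv ℝ w) := hw.fderiv_right le_rfl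
  obtain ⟨C, hC⟩ := w'_smooth.lipschitzWith_of_hasCompactSupport (hwc.fderiv ℝ) one_ne_zero
  obtain ⟨K, hK⟩ := (hwc.fderiv ℝ).exists_bound_of_continuous w'_smooth.continuous
  refine ⟨C, K, C.2, hK, fun x y => ?_⟩
  have remainder := (convex_closedBall x ‖y - x‖).norm_image_sub_le_of_norm_hasFDerivWithin_le'
    (φ := fderiv ℝ w x) (C := C * ‖y - x‖)
    (fun z _ => (hw.differentiable two_ne_zero z).hasFDerivAt.hasFDerivWithinAt)
    (fun z hz => by
      rw [← dist_eq_norm]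
      exact (hC.dist_le_mul z x).trans (mul_le_mul_of_nonneg_left hz C.2))
    (mem_closedBall_self (norm_nonneg _)) (mem_closedBall_iff_norm.2 le_rfl)
  have linear := (le_abs_self _).trans ((fderiv ℝ w x).le_opNorm (y - x))
  linarith [(le_abs_self _).trans remainder]

theorem ofReal_mul_le_lintegral_volume_Ioo_inter_Ico {α : Type*} [MeasurableSpace α]
    {μ : Measure α} [SFinite μ] {w q : α → ℝ} (hw : Measurable w) (hq : Measurable q) {c b : ℝ}
    {p : ℝ≥0∞} (hp : ∀ t ∈ Ioo c b, p ≤ μ {x | w x ≤ t ∧ t < q x}) :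
    p * ENNReal.ofReal (b - c) ≤ ∫⁻ x, volume (Ioo c b ∩ Ico (w x) (q x)) ∂μ := by
  have hmeas : MeasurableSet {z : α × ℝ | z.2 ∈ Ioo c b ∧ w z.1 ≤ z.2 ∧ z.2 < q z.1} :=
    (measurable_snd measurableSet_Ioo).inter
      ((measurableSet_le (hw.comp measurable_fst) measurable_snd).inter
        (measurableSet_lt measurable_snd (hq.comp measurable_fst)))
  calc p * ENNReal.ofReal (b - c) = ∫⁻ _ in Ioo c b, p := by
        rw [setLIntegral_const, Real.volume_Ioo]
    _ ≤ ∫⁻ t in Ioo c b, μ {x | t ∈ Ioo c b ∧ w x ≤ t ∧ t < q x} :=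
        setLIntegral_mono' measurableSet_Ioo fun t ht => by simpa only [ht, true_and] using hp t ht
    _ ≤ ∫⁻ t, μ {x | t ∈ Ioo c b ∧ w x ≤ t ∧ t < q x} := setLIntegral_le_lintegral _ _
    _ = ∫⁻ x, volume (Ioo c b ∩ Ico (w x) (q x)) ∂μ :=
        (Measure.prod_apply_symm hmeas).symm.trans (Measure.prod_apply hmeas)

/-- The surface area of the Euclidean ball with the same volume as `A`, which by the isoperimetric
inequality bounds the surface area of `A` from below. -/
noncomputable def isoperimetricArea (A : Set (𝔼 n)) : ℝ :=
  n * volume.real (ball (0 : 𝔼 n) 1) * volumeRadius A ^ (n - 1)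

theorem isoperimetricArea_nonneg (A : Set (𝔼 n)) : 0 ≤ isoperimetricArea A := by
  have := volumeRadius_nonneg A
  unfold isoperimetricArea
  positivity

theorem isoperimetricArea_mono {A B : Set (𝔼 n)} (hAB : A ⊆ B) (hB : volume B ≠ ∞) :
    isoperimetricArea A ≤ isoperimetricArea B := by
  have := volumeRadius_nonneg A
  have := volumeRadius_mono hAB hB
  unfold isoperimetricArea
  gcongr

theorem ofReal_mul_isoperimetricArea_le_volume (hn : n ≠ 0) (hw : Continuous w)
    (hwc : HasCompactSupport w) {q : 𝔼 n → ℝ} {r : ℝ} (hr : 0 < r)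
    (hwq : ∀ x y, dist x y < r → w y ≤ q x) {t b : ℝ} (ht : 0 ≤ t) (htb : t ≤ b)
    (hb : volume {x | b < w x} ≠ 0) :
    ENNReal.ofReal (r * isoperimetricArea {x | b < w x}) ≤ volume {x | w x ≤ t ∧ t < q x} := by
  have superlevel_anti : {x | b < w x} ⊆ {x | t < w x} := fun x hx => htb.trans_lt hx
  have hfin := (volume_superlevel_lt_top hwc ht).ne
  have thickening_subset : thickening r {x | t < w x} ⊆ {x | t < q x} := fun x hx => by
    obtain ⟨y, hy, hxy⟩ := mem_thickening_iff.1 hx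
    exact lt_of_lt_of_le hy (hwq x y hxy)
  calc ENNReal.ofReal (r * isoperimetricArea {x | b < w x})
      ≤ ENNReal.ofReal (r * isoperimetricArea {x | t < w x}) := by
        have := isoperimetricArea_mono superlevel_anti hfin
        gcongr
    _ ≤ volume {x | t < q x} - volume {x | t < w x} := by
        refine ENNReal.le_sub_of_add_le_left hfin (le_trans ?_ (measure_mono thickening_subset))
        exact isoperimetric_thickening hn (isOpen_lt continuous_const hw)
          (mt (measure_mono_null superlevel_anti) hb) hfin hr
    _ ≤ volume ({x | t < q x} \ {x | t < w x}) := le_measure_sdiff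
    _ = volume {x | w x ≤ t ∧ t < q x} := by
        congr 1
        ext x
        simp [and_comm]

theorem integrable_norm_fderiv (hw : ContDiff ℝ 2 w) (hwc : HasCompactSupport w) :
    Integrable fun x => ‖fderiv ℝ w x‖ :=
  (hw.continuous_fderiv two_ne_zero).norm.integrable_of_hasCompactSupport (hwc.fderiv ℝ).norm

theorem volume_strip_ne_top (hwc : HasCompactSupport w) {a : ℝ} (ha : 0 ≤ a) (b : ℝ) :
    volume (w ⁻¹' Ioo a b) ≠ ∞ :=
  ne_top_of_le_ne_top (volume_superlevel_lt_top hwc ha).ne (measure_mono fun _ hx => hx.1)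

theorem isoperimetricArea_mul_sub_le_of_gap (hn : n ≠ 0) (hw : Continuous w)
    (hwc : HasCompactSupport w) {gap : 𝔼 n → ℝ} (hgap : Continuous gap) {θ : ℝ}
    (hgap0 : ∀ x, 0 ≤ gap x) (hgapθ : ∀ x, gap x ≤ θ) {r : ℝ} (hr : 0 < r)
    (hwgap : ∀ x y, dist x y < r → w y ≤ w x + gap x) {a b : ℝ} (ha : 0 ≤ a)
    (hb : volume {x | b < w x} ≠ 0) :
    r * isoperimetricArea {x | b < w x} * (b - (a + θ)) ≤ ∫ x in w ⁻¹' Ioo a b, gap x := by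
  have hstrip : MeasurableSet (w ⁻¹' Ioo a b) := hw.measurable measurableSet_Ioo
  have hθ : 0 ≤ θ := (hgap0 0).trans (hgapθ 0)
  have layers := ofReal_mul_le_lintegral_volume_Ioo_inter_Ico (μ := volume) (c := a + θ) (b := b)
    (q := fun x => w x + gap x) hw.measurable (hw.add hgap).measurable fun t ht =>
      ofReal_mul_isoperimetricArea_le_volume hn hw hwc hr hwgap
        (by linarith [ht.1]) ht.2.le hb
  have layer_le (x : 𝔼 n) : volume (Ioo (a + θ) b ∩ Ico (w x) (w x + gap x)) ≤
      (w ⁻¹' Ioo a b).indicator (fun x => ENNReal.ofReal (gap x)) x := by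
    by_cases hx : x ∈ w ⁻¹' Ioo a b
    · rw [indicator_of_mem hx]
      exact (measure_mono inter_subset_right).trans_eq
        (by rw [Real.volume_Ico, add_sub_cancel_left])
    · have disjoint : Ioo (a + θ) b ∩ Ico (w x) (w x + gap x) = ∅ :=
        eq_empty_of_forall_notMem fun t ht =>
          hx ⟨by linarith [ht.1.1, ht.2.2, hgapθ x], ht.2.1.trans_lt ht.1.2⟩
      rw [disjoint, measure_empty]
      exact bot_le
  have gap_integrable : IntegrableOn gap (w ⁻¹' Ioo a b) :=
    Measure.integrableOn_of_bounded (volume_strip_ne_top hwc ha b)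
      hgap.aestronglyMeasurable (M := θ)
      (Eventually.of_forall fun x => by rw [Real.norm_of_nonneg (hgap0 x)]; exact hgapθ x)
  replace layers := layers.trans (lintegral_mono layer_le)
  rw [lintegral_indicator hstrip, ← ofReal_integral_eq_lintegral_ofReal gap_integrable
    (Eventually.of_forall hgap0), ← ENNReal.ofReal_mul (mul_nonneg hr.le
      (isoperimetricArea_nonneg _))] at layers
  exact (ENNReal.ofReal_le_ofReal_iff (integral_nonneg hgap0)).1 layers

theorem isoperimetricArea_mul_sub_le_integral_strip (hn : n ≠ 0) (hw : ContDiff ℝ 2 w)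
    (hwc : HasCompactSupport w) {a b : ℝ} (ha : 0 ≤ a) (hb : volume {x | b < w x} ≠ 0) :
    isoperimetricArea {x | b < w x} * (b - a) ≤ ∫ x in w ⁻¹' Ioo a b, ‖fderiv ℝ w x‖ := by
  set p := isoperimetricArea {x | b < w x}
  set V := volume.real (w ⁻¹' Ioo a b)
  obtain ⟨C, K, hC, hK, hTaylor⟩ := exists_forall_le_add_norm_fderiv_mul hw hwc
  have at_scale {r : ℝ} (hr : 0 < r) : p * (b - (a + r * (K + C * r))) ≤
      (∫ x in w ⁻¹' Ioo a b, ‖fderiv ℝ w x‖) + C * r * V := by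
    have key := isoperimetricArea_mul_sub_le_of_gap hn hw.continuous hwc
      (gap := fun x => r * (‖fderiv ℝ w x‖ + C * r)) (θ := r * (K + C * r))
      (by have := hw.continuous_fderiv two_ne_zero; fun_prop) (fun x => by positivity)
      (fun x => by gcongr; exact hK x) hr (fun x y hxy => ?_) ha hb
    · rw [integral_const_mul, integral_add (integrable_norm_fderiv hw hwc).integrableOn
        (integrableOn_const (volume_strip_ne_top hwc ha b)), setIntegral_const, smul_eq_mul,
        mul_comm _ (C * r), mul_assoc] at key
      exact le_of_mul_le_mul_left key hr
    · rw [dist_comm, dist_eq_norm] at hxy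
      calc w y ≤ w x + ‖fderiv ℝ w x‖ * ‖y - x‖ + C * ‖y - x‖ ^ 2 := hTaylor x y
        _ ≤ w x + ‖fderiv ℝ w x‖ * r + C * r ^ 2 := by gcongr
        _ = w x + r * (‖fderiv ℝ w x‖ + C * r) := by ring
  refine le_of_tendsto_of_tendsto (b := 𝓝[>] (0 : ℝ))
    (((Continuous.tendsto' (by fun_prop) _ _ (by simp)).mono_left nhdsWithin_le_nhds))
    (((Continuous.tendsto' (by fun_prop) _ _ (by simp)).mono_left nhdsWithin_le_nhds))
    (eventually_mem_nhdsWithin.mono fun r hr => at_scale hr)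

theorem sq_integral_le_measureReal_mul_integral_sq {α : Type*} [MeasurableSpace α]
    {μ : Measure α} [IsFiniteMeasure μ] {g : α → ℝ} (hg : Integrable g μ)
    (hg2 : Integrable (fun x => g x ^ 2) μ) :
    (∫ x, g x ∂μ) ^ 2 ≤ μ.real univ * ∫ x, g x ^ 2 ∂μ := by
  have integrable_cross (c : ℝ) : Integrable (fun x => g x ^ 2 - 2 * c * g x) μ :=
    hg2.sub (hg.const_mul _)
  have quadratic_nonneg (c : ℝ) : 0 ≤ μ.real univ * (c * c) + (-2 * ∫ x, g x ∂μ) * c +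
      ∫ x, g x ^ 2 ∂μ := by
    calc 0 ≤ ∫ x, (g x - c) ^ 2 ∂μ := integral_nonneg fun x => sq_nonneg _
      _ = ∫ x, (g x ^ 2 - 2 * c * g x + c * c) ∂μ := by congr! 2 with x; ring
      _ = _ := by
        rw [integral_add (integrable_cross c) (integrable_const _),
          integral_sub hg2 (hg.const_mul _), integral_const_mul, integral_const, smul_eq_mul]
        ring
  have := discrim_le_zero quadratic_nonneg
  rw [discrim] at this
  linarith

theorem isoperimetricArea_sq_mul_sub_le (hn : n ≠ 0) (hw : ContDiff ℝ 2 w)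
    (hwc : HasCompactSupport w) (hΔ : ∀ x, -laplacian w x ≤ 1) {a b : ℝ} (ha : 0 ≤ a)
    (hab : a < b) (hb : volume {x | b < w x} ≠ 0) :
    isoperimetricArea {x | b < w x} ^ 2 * (b - a) ≤
      volume.real {x | a < w x} * (volume.real {x | a < w x} - volume.real {x | b < w x}) := by
  set p := isoperimetricArea {x | b < w x}
  have hp : 0 ≤ p := isoperimetricArea_nonneg _
  have hba : 0 < b - a := sub_pos.2 hab
  have coarea := isoperimetricArea_mul_sub_le_integral_strip hn hw hwc ha hb
  have energy := integral_strip_norm_fderiv_sq_le hw hwc hΔ ha hab.le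
  have : IsFiniteMeasure (volume.restrict (w ⁻¹' Ioo a b)) :=
    ⟨by simpa using (volume_strip_ne_top hwc ha b).lt_top⟩
  have cauchy_schwarz := sq_integral_le_measureReal_mul_integral_sq
    (integrable_norm_fderiv hw hwc).integrableOn (integrable_norm_fderiv_sq hw hwc).integrableOn
    (μ := volume.restrict (w ⁻¹' Ioo a b))
  rw [measureReal_restrict_apply_univ] at cauchy_schwarz
  have strip_disjoint : Disjoint (w ⁻¹' Ioo a b) {x | b < w x} :=
    disjoint_left.2 fun x hx hx' => lt_asymm hx.2 hx'
  have strip_add : volume.real (w ⁻¹' Ioo a b) + volume.real {x | b < w x} ≤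
      volume.real {x | a < w x} := by
    rw [← measureReal_union strip_disjoint
      (isOpen_lt continuous_const hw.continuous).measurableSet (volume_strip_ne_top hwc ha b)
      (volume_superlevel_lt_top hwc (ha.trans hab.le)).ne]
    exact measureReal_mono (union_subset (fun x hx => hx.1) fun x hx => hab.trans hx)
      (volume_superlevel_lt_top hwc ha).ne
  refine le_of_mul_le_mul_left ?_ hba
  calc (b - a) * (p ^ 2 * (b - a)) = (p * (b - a)) ^ 2 := by ring
    _ ≤ (∫ x in w ⁻¹' Ioo a b, ‖fderiv ℝ w x‖) ^ 2 := by gcongr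
    _ ≤ volume.real (w ⁻¹' Ioo a b) * ∫ x in w ⁻¹' Ioo a b, ‖fderiv ℝ w x‖ ^ 2 :=
        cauchy_schwarz
    _ ≤ (volume.real {x | a < w x} - volume.real {x | b < w x}) *
          ((b - a) * volume.real {x | a < w x}) :=
        mul_le_mul (by linarith) energy (integral_nonneg fun x => by positivity)
          (by linarith [measureReal_nonneg (μ := volume) (s := w ⁻¹' Ioo a b)])
    _ = _ := by ring

theorem pow_succ_sub_pow_succ_le {x y : ℝ} (hy : 0 ≤ y) (hyx : y ≤ x) (m : ℕ) :
    x ^ (m + 1) - y ^ (m + 1) ≤ (m + 1) * x ^ m * (x - y) := by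
  have hx : 0 ≤ x := hy.trans hyx
  have bernoulli := pow_add_mul_le_add_pow hx (b := y - x) (by linarith) (m + 1)
  rw [add_sub_cancel, Nat.cast_succ, Nat.add_sub_cancel] at bernoulli
  linarith

theorem mul_sub_le_sub_of_forall_small {F : ℝ → ℝ} {K d s T : ℝ} (hd : 0 < d) (hsT : s ≤ T)
    (h : ∀ a b, s ≤ a → a < b → b ≤ T → b - a ≤ d → K * (b - a) ≤ F a - F b) :
    K * (T - s) ≤ F s - F T := by
  obtain ⟨N, hN⟩ := Archimedean.arch (T - s) hd
  induction N generalizing T with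
  | zero =>
    obtain rfl : s = T := le_antisymm hsT (by simpa using hN)
    simp
  | succ N ih =>
    rcases hsT.eq_or_lt with rfl | hsT
    · simp
    have hcT : max s (T - d) < T := max_lt hsT (by linarith)
    have initial := ih (T := max s (T - d)) (le_max_left _ _)
      (fun a b ha hab hb => h a b ha hab (hb.trans hcT.le))
      (by
        rw [succ_nsmul] at hN
        have : 0 ≤ N • d := nsmul_nonneg hd.le N
        exact sub_le_iff_le_add.2 (max_le (by linarith) (by linarith)))
    have last := h _ T (le_max_left _ _) hcT le_rfl (by linarith [le_max_right s (T - d)])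
    linarith

theorem two_mul_mul_le_sq_sub_sq {m : ℕ} {c l δ x y : ℝ} (hc : 0 ≤ c) (hl : 0 ≤ l) (hδ : 0 < δ)
    (hδ1 : δ < 1) (hx : 0 < x) (hy : 0 < y) (hyx : y ≤ x) (hsmall : 2 * c * l ≤ δ * x ^ 2)
    (h : c * l * y ^ (2 * m) ≤ x ^ (2 * m + 1) * (x - y)) :
    2 * c * (1 - δ) ^ (2 * m + 1) * l ≤ x ^ 2 - y ^ 2 := by
  have hδ' : 0 < 1 - δ := sub_pos.2 hδ1
  rcases le_or_gt ((1 - δ) * x) y with hxy | hxy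
  · have linear : c * l * (1 - δ) ^ (2 * m) ≤ x * (x - y) := by
      refine le_of_mul_le_mul_right ?_ (pow_pos hx (2 * m))
      calc c * l * (1 - δ) ^ (2 * m) * x ^ (2 * m) = c * l * ((1 - δ) * x) ^ (2 * m) := by
            rw [mul_pow, mul_assoc]
        _ ≤ c * l * y ^ (2 * m) := by gcongr
        _ ≤ x ^ (2 * m + 1) * (x - y) := h
        _ = x * (x - y) * x ^ (2 * m) := by ring
    calc 2 * c * (1 - δ) ^ (2 * m + 1) * l
        = 2 * (1 - δ) * (c * l * (1 - δ) ^ (2 * m)) := by ring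
      _ ≤ 2 * (1 - δ) * (x * (x - y)) := by gcongr
      _ = 2 * ((1 - δ) * x) * (x - y) := by ring
      _ ≤ (x + y) * (x - y) :=
        mul_le_mul_of_nonneg_right (by nlinarith) (sub_nonneg.2 hyx)
      _ = x ^ 2 - y ^ 2 := by ring
  · calc 2 * c * (1 - δ) ^ (2 * m + 1) * l = 2 * c * l * (1 - δ) ^ (2 * m + 1) := by ring
      _ ≤ 2 * c * l := mul_le_of_le_one_right (by positivity) (pow_le_one₀ hδ'.le (by linarith))
      _ ≤ δ * x ^ 2 := hsmall
      _ ≤ x ^ 2 - ((1 - δ) * x) ^ 2 := by nlinarith [mul_pos (mul_pos hδ hδ') (pow_pos hx 2)]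
      _ ≤ x ^ 2 - y ^ 2 := by gcongr

theorem two_mul_mul_sub_le_sq {m : ℕ} {ρ : ℝ → ℝ} {s T c : ℝ} (hc : 0 < c) (hsT : s ≤ T)
    (hpos : ∀ a ∈ Icc s T, 0 < ρ a) (hanti : AntitoneOn ρ (Icc s T))
    (hρ : ∀ a b, s ≤ a → a < b → b ≤ T →
      c * (b - a) * ρ b ^ (2 * m) ≤ ρ a ^ (2 * m + 1) * (ρ a - ρ b)) :
    2 * c * (T - s) ≤ ρ s ^ 2 := by
  have hρT : 0 < ρ T := hpos T (right_mem_Icc.2 hsT)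
  have at_scale {δ : ℝ} (hδ : 0 < δ) (hδ1 : δ < 1) :
      2 * c * (1 - δ) ^ (2 * m + 1) * (T - s) ≤ ρ s ^ 2 := by
    refine (mul_sub_le_sub_of_forall_small (F := fun t => ρ t ^ 2)
      (d := δ * ρ T ^ 2 / (2 * c)) (by positivity) hsT fun a b ha hab hb hba => ?_).trans
        (sub_le_self _ (sq_nonneg _))
    have ha' : a ∈ Icc s T := ⟨ha, hab.le.trans hb⟩
    have hb' : b ∈ Icc s T := ⟨ha.trans hab.le, hb⟩
    refine two_mul_mul_le_sq_sub_sq hc.le (sub_nonneg.2 hab.le) hδ hδ1 (hpos a ha') (hpos b hb')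
      (hanti ha' hb' hab.le) ?_ (hρ a b ha hab hb)
    rw [le_div_iff₀' (by positivity)] at hba
    have := hanti ha' (right_mem_Icc.2 hsT) ha'.2
    exact hba.trans (by gcongr)
  refine le_of_tendsto (x := 𝓝[>] (0 : ℝ)) (f := fun δ => 2 * c * (1 - δ) ^ (2 * m + 1) * (T - s))
    ((Continuous.tendsto' (by fun_prop) _ _ (by simp)).mono_left nhdsWithin_le_nhds) ?_
  filter_upwards [Ioo_mem_nhdsGT zero_lt_one] with δ hδ using at_scale hδ.1 hδ.2

theorem volumeRadius_superlevel_growth (hw : ContDiff ℝ 2 w)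
    (hwc : HasCompactSupport w) (hΔ : ∀ x, -laplacian w x ≤ 1) {m : ℕ} (hnm : n = m + 1) {a b : ℝ}
    (ha : 0 ≤ a) (hab : a < b) (hb : volume {x | b < w x} ≠ 0) :
    n * (b - a) * volumeRadius {x | b < w x} ^ (2 * m) ≤ volumeRadius {x | a < w x} ^ (2 * m + 1) *
      (volumeRadius {x | a < w x} - volumeRadius {x | b < w x}) := by
  subst hnm
  have hω := volume_unitBall_pos (n := m + 1)
  have growth := isoperimetricArea_sq_mul_sub_le m.succ_ne_zero hw hwc hΔ ha hab hb
  rw [isoperimetricArea, ← unitBall_mul_volumeRadius_pow m.succ_ne_zero {x | a < w x},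
    ← unitBall_mul_volumeRadius_pow m.succ_ne_zero {x | b < w x}, Nat.succ_sub_one] at growth
  set ω := volume.real (ball (0 : 𝔼(m + 1)) 1)
  set ρa := volumeRadius {x | a < w x}
  set ρb := volumeRadius {x | b < w x}
  have hρa : 0 ≤ ρa := volumeRadius_nonneg _
  have hρab : ρb ≤ ρa :=
    volumeRadius_mono (fun x hx => hab.trans hx) (volume_superlevel_lt_top hwc ha).ne
  have pow_diff := pow_succ_sub_pow_succ_le (volumeRadius_nonneg _ : 0 ≤ ρb) hρab m
  have hscale : 0 < ω ^ 2 * (m + 1) := by positivity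
  refine le_of_mul_le_mul_left ?_ hscale
  push_cast at growth ⊢
  calc ω ^ 2 * (m + 1) * ((m + 1) * (b - a) * ρb ^ (2 * m))
      = ((m + 1) * ω * ρb ^ m) ^ 2 * (b - a) := by ring
    _ ≤ ω * ρa ^ (m + 1) * (ω * ρa ^ (m + 1) - ω * ρb ^ (m + 1)) := growth
    _ = ω ^ 2 * ρa ^ (m + 1) * (ρa ^ (m + 1) - ρb ^ (m + 1)) := by ring
    _ ≤ ω ^ 2 * ρa ^ (m + 1) * ((m + 1) * ρa ^ m * (ρa - ρb)) := by gcongr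
    _ = ω ^ 2 * (m + 1) * (ρa ^ (2 * m + 1) * (ρa - ρb)) := by ring

theorem le_volumeRadius_sq_of_neg_laplacian_le_one (hn : n ≠ 0) (hw : ContDiff ℝ 2 w)
    (hwc : HasCompactSupport w) (hΔ : ∀ x, -laplacian w x ≤ 1) (x : 𝔼 n) :
    2 * n * w x ≤ volumeRadius {x | 0 < w x} ^ 2 := by
  obtain ⟨m, rfl⟩ := Nat.exists_eq_succ_of_ne_zero hn
  rcases le_or_gt (w x) 0 with hx | hx
  · exact (mul_nonpos_of_nonneg_of_nonpos (by positivity) hx).trans (sq_nonneg _)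
  have superlevel_ne_zero {b : ℝ} (hb : b < w x) : volume {x | b < w x} ≠ 0 :=
    ((isOpen_lt continuous_const hw.continuous).measure_pos volume ⟨x, hb⟩).ne'
  have below {T : ℝ} (hT : 0 < T) (hTx : T < w x) :
      2 * ((m + 1 : ℕ) : ℝ) * T ≤ volumeRadius {x | 0 < w x} ^ 2 := by
    rw [← sub_zero T]
    refine two_mul_mul_sub_le_sq (m := m) (ρ := fun t => volumeRadius {x | t < w x})
      (by positivity) hT.le (fun a ha => ?_) (fun a ha b _ hab => ?_) fun a b ha hab hb => ?_
    · exact volumeRadius_pos hn (superlevel_ne_zero (ha.2.trans_lt hTx))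
        (volume_superlevel_lt_top hwc ha.1).ne
    · exact volumeRadius_mono (fun x hx => lt_of_le_of_lt hab hx)
        (volume_superlevel_lt_top hwc ha.1).ne
    · exact volumeRadius_superlevel_growth hw hwc hΔ rfl ha hab
        (superlevel_ne_zero (hb.trans_lt hTx))
  refine le_of_tendsto (x := 𝓝[<] w x)
    ((Continuous.tendsto (by fun_prop) (w x)).mono_left nhdsWithin_le_nhds) ?_
  filter_upwards [Ioo_mem_nhdsLT hx] with T hT using below hT.1 hT.2

end Talenti

/-! ### The torsion function of a lattice walk -/

section WalkMean

variable {n : ℕ} {h : ℝ} {u v : 𝔼 n → ℝ} {x : 𝔼 n}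

/-- The mean of `v` over the `2n` lattice neighbours `x ± h eᵢ` of `x`; `walkMean h v - v` is the
discrete counterpart of `h ^ 2 / (2 * n)` times the Laplacian. -/
noncomputable def walkMean (h : ℝ) (v : 𝔼 n → ℝ) (x : 𝔼 n) : ℝ :=
  (∑ i, (v (x + EuclideanSpace.single i h) + v (x - EuclideanSpace.single i h))) / (2 * n)

theorem walkMean_le_walkMean
    (hadd : ∀ i, u (x + EuclideanSpace.single i h) ≤ v (x + EuclideanSpace.single i h))
    (hsub : ∀ i, u (x - EuclideanSpace.single i h) ≤ v (x - EuclideanSpace.single i h)) :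
    walkMean h u x ≤ walkMean h v x := by
  unfold walkMean
  gcongr with i
  exacts [hadd i, hsub i]

theorem walkMean_mono (huv : ∀ y, u y ≤ v y) : walkMean h u x ≤ walkMean h v x :=
  walkMean_le_walkMean (fun _ => huv _) fun _ => huv _

theorem walkMean_eq_add (hn : n ≠ 0) {q : Fin n → ℝ}
    (hq : ∀ i, v (x + EuclideanSpace.single i h) + v (x - EuclideanSpace.single i h) =
      2 * v x + q i) :
    walkMean h v x = v x + (∑ i, q i) / (2 * n) := by
  rw [walkMean, Finset.sum_congr rfl fun i _ => hq i, Finset.sum_add_distrib]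
  simp only [Finset.sum_const, Finset.card_univ, Fintype.card_fin, nsmul_eq_mul]
  field_simp

theorem walkMean_add_const (hn : n ≠ 0) (c : ℝ) :
    walkMean h (fun y => v y + c) x = walkMean h v x + c := by
  simp only [walkMean, add_add_add_comm _ c, Finset.sum_add_distrib, Finset.sum_const,
    Finset.card_univ, Fintype.card_fin, nsmul_eq_mul]
  field_simp
  ring

theorem walkMean_comp_add_right (z : 𝔼 n) :
    walkMean h (fun y => v (y + z)) x = walkMean h v (x + z) := by
  simp only [walkMean, add_right_comm x _ z, add_sub_right_comm x z]

theorem walkMean_const_sub_norm_sq (hn : n ≠ 0) (c : ℝ) :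
    walkMean h (fun y => (c - ‖y‖ ^ 2) / (2 * n)) x + h ^ 2 / (2 * n) =
      (c - ‖x‖ ^ 2) / (2 * n) := by
  rw [walkMean_eq_add hn (q := fun _ => -(h ^ 2) / n)]
  · simp only [Finset.sum_const, Finset.card_univ, Fintype.card_fin, nsmul_eq_mul]
    field_simp
    ring
  · intro i
    have parallelogram := parallelogram_law_with_norm ℝ x (EuclideanSpace.single i h)
    rw [PiLp.norm_single, Real.norm_eq_abs, sq_abs] at parallelogram
    field_simp
    linarith

theorem walkMean_quadratic_inner (hn : n ≠ 0) {ν : 𝔼 n} (hν : ‖ν‖ = 1) (c t : ℝ) :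
    walkMean h (fun y => c * (inner ℝ ν y + t) - (inner ℝ ν y + t) ^ 2 / 2) x + h ^ 2 / (2 * n) =
      c * (inner ℝ ν x + t) - (inner ℝ ν x + t) ^ 2 / 2 := by
  rw [walkMean_eq_add hn (q := fun i => -(h ^ 2 * ν i ^ 2))]
  · rw [Finset.sum_neg_distrib, ← Finset.mul_sum, ← EuclideanSpace.real_norm_sq_eq, hν]
    ring
  · intro i
    simp only [inner_add_right, inner_sub_right, EuclideanSpace.inner_single_right, conj_trivial]
    ring

theorem tendsto_walkMean {ι : Type*} {l : Filter ι} {v : ι → 𝔼 n → ℝ}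
    (hv : ∀ x, Tendsto (fun j => v j x) l (𝓝 (u x))) :
    Tendsto (fun j => walkMean h (v j) x) l (𝓝 (walkMean h u x)) :=
  (tendsto_finsetSum _ fun _ _ => (hv _).add (hv _)).div_const _

theorem measurable_walkMean (hv : Measurable v) : Measurable (walkMean h v) := by
  unfold walkMean
  fun_prop

end WalkMean

section TorsionIterate

variable {n : ℕ} {Ω : Set (𝔼 n)} {h M R : ℝ} {x y : 𝔼 n} {k : ℕ}

open Classical in
/-- Fixed point iteration, started at `0`, for the discrete torsion problem
`v = walkMean h v + h ^ 2 / (2 * n)` in `Ω` with `v = 0` outside `Ω`. -/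
noncomputable def torsionIterate (Ω : Set (𝔼 n)) (h : ℝ) : ℕ → 𝔼 n → ℝ
  | 0, _ => 0
  | k + 1, x => if x ∈ Ω then walkMean h (torsionIterate Ω h k) x + h ^ 2 / (2 * n) else 0

theorem torsionIterate_succ_of_mem (hx : x ∈ Ω) :
    torsionIterate Ω h (k + 1) x = walkMean h (torsionIterate Ω h k) x + h ^ 2 / (2 * n) :=
  if_pos hx

theorem torsionIterate_of_notMem (hx : x ∉ Ω) : torsionIterate Ω h k x = 0 := by
  cases k with
  | zero => rfl
  | succ k => exact if_neg hx

theorem torsionIterate_le_succ (Ω : Set (𝔼 n)) (h : ℝ) (k : ℕ) (x : 𝔼 n) :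
    torsionIterate Ω h k x ≤ torsionIterate Ω h (k + 1) x := by
  induction k generalizing x with
  | zero =>
    by_cases hx : x ∈ Ω
    · rw [torsionIterate_succ_of_mem hx]
      simp only [torsionIterate, walkMean, add_zero, Finset.sum_const_zero, zero_div, zero_add]
      positivity
    · rw [torsionIterate_of_notMem hx, torsionIterate_of_notMem hx]
  | succ k ih =>
    by_cases hx : x ∈ Ω
    · rw [torsionIterate_succ_of_mem hx, torsionIterate_succ_of_mem hx]
      grw [walkMean_mono ih]
    · rw [torsionIterate_of_notMem hx, torsionIterate_of_notMem hx]

theorem torsionIterate_monotone (Ω : Set (𝔼 n)) (h : ℝ) (x : 𝔼 n) :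
    Monotone fun k => torsionIterate Ω h k x :=
  monotone_nat_of_le_succ fun k => torsionIterate_le_succ Ω h k x

theorem torsionIterate_nonneg : 0 ≤ torsionIterate Ω h k x :=
  torsionIterate_monotone Ω h x k.zero_le

theorem measurable_torsionIterate (hΩ : MeasurableSet Ω) (k : ℕ) :
    Measurable (torsionIterate Ω h k) := by
  induction k with
  | zero => exact measurable_const
  | succ k ih => exact ((measurable_walkMean ih).add_const _).ite hΩ measurable_const

theorem torsionIterate_le_of_supersolution {N : Set (𝔼 n)} {g : 𝔼 n → ℝ} (hg : ∀ x ∈ N, 0 ≤ g x)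
    (hsuper : ∀ x ∈ N, x ∈ Ω → (∀ k, torsionIterate Ω h k x ≤ g x) ∨
      (∀ i, x + EuclideanSpace.single i h ∈ N ∧ x - EuclideanSpace.single i h ∈ N) ∧
        walkMean h g x + h ^ 2 / (2 * n) ≤ g x)
    (hx : x ∈ N) : torsionIterate Ω h k x ≤ g x := by
  induction k generalizing x with
  | zero => exact hg x hx
  | succ k ih =>
    by_cases hxΩ : x ∈ Ω
    · rcases hsuper x hx hxΩ with hle | ⟨hN, hmean⟩
      · exact hle _
      · rw [torsionIterate_succ_of_mem hxΩ]
        grw [← hmean, walkMean_le_walkMean (fun i => ih (hN i).1) fun i => ih (hN i).2]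
    · exact (torsionIterate_of_notMem hxΩ).trans_le (hg x hx)

theorem norm_single_of_nonneg (hh : 0 ≤ h) (i : Fin n) :
    ‖(EuclideanSpace.single i h : 𝔼 n)‖ = h := by
  rw [PiLp.norm_single, Real.norm_of_nonneg hh]

theorem torsionIterate_le_of_subset_ball (hn : n ≠ 0) (hh : 0 ≤ h) (hR : Ω ⊆ ball 0 R) :
    torsionIterate Ω h k x ≤ (R + h) ^ 2 / (2 * n) := by
  by_cases hx : x ∈ Ω
  swap
  · rw [torsionIterate_of_notMem hx]
    positivity
  have hclosedBall {y : 𝔼 n} : y ∈ closedBall 0 (R + h) ↔ ‖y‖ ≤ R + h := mem_closedBall_zero_iff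
  have hΩ {y : 𝔼 n} (hy : y ∈ Ω) : ‖y‖ < R := mem_ball_zero_iff.1 (hR hy)
  calc torsionIterate Ω h k x ≤ ((R + h) ^ 2 - ‖x‖ ^ 2) / (2 * n) := by
        refine torsionIterate_le_of_supersolution (N := closedBall 0 (R + h))
          (g := fun y => ((R + h) ^ 2 - ‖y‖ ^ 2) / (2 * n)) (fun y hy => ?_)
          (fun y _ hy => .inr ⟨fun i => ⟨?_, ?_⟩, (walkMean_const_sub_norm_sq hn _).le⟩)
          (hclosedBall.2 (by linarith [hΩ hx]))
        · rw [hclosedBall] at hy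
          exact div_nonneg (sub_nonneg.2 (by gcongr)) (by positivity)
        · rw [hclosedBall]
          grw [norm_add_le, norm_single_of_nonneg hh, hΩ hy]
        · rw [hclosedBall]
          grw [norm_sub_le, norm_single_of_nonneg hh, hΩ hy]
    _ ≤ (R + h) ^ 2 / (2 * n) := by
        gcongr
        exact sub_le_self _ (sq_nonneg _)

theorem abs_inner_single_le {ν : 𝔼 n} (hν : ‖ν‖ = 1) (hh : 0 ≤ h) (i : Fin n) :
    |inner ℝ ν (EuclideanSpace.single i h)| ≤ h := by
  simpa only [hν, norm_single_of_nonneg hh, one_mul] using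
    abs_real_inner_le_norm ν (EuclideanSpace.single i h)

theorem torsionIterate_le_of_halfSpace (hn : n ≠ 0) (hh : 0 ≤ h) (hM : 0 ≤ M)
    (hv : ∀ k x, torsionIterate Ω h k x ≤ M) {ν : 𝔼 n} (hν : ‖ν‖ = 1) {c : ℝ}
    (hΩ : ∀ y ∈ Ω, 0 ≤ inner ℝ ν y + c) (hx : x ∈ Ω) :
    torsionIterate Ω h k x ≤ (√(2 * M) + h) * (inner ℝ ν x + c + h) := by
  set a := √(2 * M)
  have ha : 0 ≤ a := Real.sqrt_nonneg _
  have ha2 : a ^ 2 = 2 * M := Real.sq_sqrt (by positivity)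
  rcases le_or_gt a (inner ℝ ν x + c) with hxa | hxa
  · calc torsionIterate Ω h k x ≤ M := hv k x
      _ ≤ a * a := by nlinarith
      _ ≤ (a + h) * (inner ℝ ν x + c + h) := by gcongr <;> linarith
  calc torsionIterate Ω h k x
      ≤ (a + h) * (inner ℝ ν x + (c + h)) - (inner ℝ ν x + (c + h)) ^ 2 / 2 := by
        refine torsionIterate_le_of_supersolution
          (N := {y | inner ℝ ν y + c ∈ Icc (-h) (a + h)})
          (g := fun y => (a + h) * (inner ℝ ν y + (c + h)) - (inner ℝ ν y + (c + h)) ^ 2 / 2)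
          (fun y ⟨hy1, hy2⟩ => by nlinarith) (fun y ⟨hy1, hy2⟩ hy => ?_)
          ⟨by linarith [hΩ x hx], by linarith⟩
        rcases le_or_gt a (inner ℝ ν y + c) with hya | hya
        · exact .inl fun k => (hv k y).trans (by nlinarith)
        · have hstep i := abs_le.1 (abs_inner_single_le hν hh i)
          refine .inr ⟨fun i => ⟨?_, ?_⟩, (walkMean_quadratic_inner hn hν _ _).le⟩
          · rw [mem_ofPred_eq, inner_add_right]
            constructor <;> linarith [hΩ y hy, hstep i]
          · rw [mem_ofPred_eq, inner_sub_right]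
            constructor <;> linarith [hΩ y hy, hstep i]
    _ ≤ (a + h) * (inner ℝ ν x + c + h) := by
        rw [add_assoc]
        exact sub_le_self _ (by positivity)

theorem exists_unit_forall_inner_sub_pos (hΩo : IsOpen Ω) (hΩc : Convex ℝ Ω)
    (hne : Ω.Nonempty) (hx : x ∉ Ω) :
    ∃ ν : 𝔼 n, ‖ν‖ = 1 ∧ ∀ y ∈ Ω, 0 < inner ℝ ν (y - x) := by
  obtain ⟨L, hL⟩ := geometric_hahn_banach_open_point hΩc hΩo hx
  obtain ⟨ξ, rfl⟩ := (InnerProductSpace.toDual ℝ (𝔼 n)).surjective L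
  simp only [InnerProductSpace.toDual_apply_apply] at hL
  have hξ : ξ ≠ 0 := by
    rintro rfl
    obtain ⟨y, hy⟩ := hne
    simpa using hL y hy
  refine ⟨-(‖ξ‖⁻¹ • ξ), (norm_neg _).trans (norm_smul_inv_norm (𝕜 := ℝ) hξ), fun y hy => ?_⟩
  rw [inner_neg_left, real_inner_smul_left, inner_sub_right, ← mul_neg, neg_sub]
  exact mul_pos (inv_pos.2 (norm_pos_iff.2 hξ)) (sub_pos.2 (hL y hy))

theorem torsionIterate_le_of_notMem (hn : n ≠ 0) (hΩo : IsOpen Ω) (hΩc : Convex ℝ Ω)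
    (hh : 0 ≤ h) (hM : 0 ≤ M) (hv : ∀ k x, torsionIterate Ω h k x ≤ M) (hx : x ∉ Ω) :
    torsionIterate Ω h k y ≤ (√(2 * M) + h) * (‖y - x‖ + h) := by
  by_cases hy : y ∈ Ω
  swap
  · rw [torsionIterate_of_notMem hy]
    positivity
  obtain ⟨ν, hν, hpos⟩ := exists_unit_forall_inner_sub_pos hΩo hΩc ⟨y, hy⟩ hx
  simp only [inner_sub_right, sub_pos] at hpos
  calc torsionIterate Ω h k y ≤ (√(2 * M) + h) * (inner ℝ ν y + -inner ℝ ν x + h) :=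
        torsionIterate_le_of_halfSpace hn hh hM hv hν (fun z hz => by linarith [hpos z hz]) hy
    _ ≤ (√(2 * M) + h) * (‖y - x‖ + h) := by
        rw [← sub_eq_add_neg, ← inner_sub_right]
        grw [real_inner_le_norm, hν, one_mul]

theorem torsionIterate_add_le (hn : n ≠ 0) (hΩo : IsOpen Ω) (hΩc : Convex ℝ Ω)
    (hh : 0 ≤ h) (hM : 0 ≤ M) (hv : ∀ k x, torsionIterate Ω h k x ≤ M) (x z : 𝔼 n) :
    torsionIterate Ω h k (x + z) ≤ torsionIterate Ω h k x + (√(2 * M) + h) * (‖z‖ + h) := by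
  induction k generalizing x with
  | zero =>
    simp only [torsionIterate, zero_add]
    positivity
  | succ k ih =>
    by_cases hx : x ∈ Ω
    swap
    · rw [torsionIterate_of_notMem hx, zero_add]
      simpa using torsionIterate_le_of_notMem (y := x + z) hn hΩo hΩc hh hM hv hx
    by_cases hxz : x + z ∈ Ω
    · rw [torsionIterate_succ_of_mem hx, torsionIterate_succ_of_mem hxz,
        ← walkMean_comp_add_right, add_right_comm]
      grw [walkMean_mono ih, walkMean_add_const hn]
    · rw [torsionIterate_of_notMem hxz]
      have := torsionIterate_nonneg (Ω := Ω) (h := h) (k := k + 1) (x := x)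
      positivity

end TorsionIterate

section DiscreteTorsion

variable {n : ℕ} {Ω : Set (𝔼 n)} {h M : ℝ} {x : 𝔼 n}

/-- The expected exit time from `Ω` of the lattice walk with steps `± h eᵢ` started at `x`, each
step taking time `h ^ 2 / (2 * n)`. The supremum is finite for bounded `Ω`. -/
noncomputable def discreteTorsion (Ω : Set (𝔼 n)) (h : ℝ) (x : 𝔼 n) : ℝ :=
  ⨆ k, torsionIterate Ω h k x

theorem discreteTorsion_nonneg : 0 ≤ discreteTorsion Ω h x :=
  Real.iSup_nonneg fun _ => torsionIterate_nonneg

theorem discreteTorsion_of_notMem (hx : x ∉ Ω) : discreteTorsion Ω h x = 0 := by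
  simp only [discreteTorsion, torsionIterate_of_notMem hx, ciSup_const]

theorem measurable_discreteTorsion (hΩ : MeasurableSet Ω) : Measurable (discreteTorsion Ω h) :=
  .iSup fun k => measurable_torsionIterate hΩ k

theorem discreteTorsion_le (hM : ∀ k x, torsionIterate Ω h k x ≤ M) : discreteTorsion Ω h x ≤ M :=
  ciSup_le fun k => hM k x

theorem torsionIterate_le_discreteTorsion (hM : ∀ k x, torsionIterate Ω h k x ≤ M) (k : ℕ)
    (x : 𝔼 n) : torsionIterate Ω h k x ≤ discreteTorsion Ω h x :=
  le_ciSup (f := fun k => torsionIterate Ω h k x) ⟨M, forall_mem_range.2 fun k => hM k x⟩ k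

theorem tendsto_torsionIterate (hM : ∀ k x, torsionIterate Ω h k x ≤ M) (x : 𝔼 n) :
    Tendsto (fun k => torsionIterate Ω h k x) atTop (𝓝 (discreteTorsion Ω h x)) :=
  tendsto_atTop_ciSup (torsionIterate_monotone Ω h x) ⟨M, forall_mem_range.2 fun k => hM k x⟩

theorem discreteTorsion_eq_of_mem (hM : ∀ k x, torsionIterate Ω h k x ≤ M) (hx : x ∈ Ω) :
    discreteTorsion Ω h x = walkMean h (discreteTorsion Ω h) x + h ^ 2 / (2 * n) :=
  tendsto_nhds_unique (((tendsto_add_atTop_iff_nat 1).2 (tendsto_torsionIterate hM x)).congr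
      fun _ => torsionIterate_succ_of_mem hx)
    ((tendsto_walkMean (tendsto_torsionIterate hM)).add_const _)

theorem discreteTorsion_le_walkMean_add (hM : ∀ k x, torsionIterate Ω h k x ≤ M) (x : 𝔼 n) :
    discreteTorsion Ω h x ≤ walkMean h (discreteTorsion Ω h) x + h ^ 2 / (2 * n) := by
  by_cases hx : x ∈ Ω
  · exact (discreteTorsion_eq_of_mem hM hx).le
  · rw [discreteTorsion_of_notMem hx, walkMean]
    refine add_nonneg (div_nonneg (Finset.sum_nonneg fun i _ => ?_) (by positivity)) (by positivity)
    exact add_nonneg discreteTorsion_nonneg discreteTorsion_nonneg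

theorem discreteTorsion_add_le (hn : n ≠ 0) (hΩo : IsOpen Ω) (hΩc : Convex ℝ Ω)
    (hh : 0 ≤ h) (hM : 0 ≤ M) (hv : ∀ k x, torsionIterate Ω h k x ≤ M) (x z : 𝔼 n) :
    discreteTorsion Ω h (x + z) ≤ discreteTorsion Ω h x + (√(2 * M) + h) * (‖z‖ + h) :=
  le_of_tendsto_of_tendsto' (tendsto_torsionIterate hv _)
    ((tendsto_torsionIterate hv x).add_const _)
    fun _ => torsionIterate_add_le hn hΩo hΩc hh hM hv x z

end DiscreteTorsion

/-! ### The Laplacian as a limit of difference quotients -/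

section DifferenceQuotient

variable {n : ℕ} {h : ℝ} {φ v : 𝔼 n → ℝ}

theorem abs_symm_diff_sub_mul_sq_le {g g' g'' : ℝ → ℝ} (hg : ∀ s, HasDerivAt g (g' s) s)
    (hg' : ∀ s, HasDerivAt g' (g'' s) s) {c η h : ℝ} (hh : 0 ≤ h)
    (hg'' : ∀ s, |s| ≤ h → |g'' s - c| ≤ η) :
    |g h + g (-h) - 2 * g 0 - c * h ^ 2| ≤ 2 * η * h ^ 2 := by
  have hη : 0 ≤ η := (abs_nonneg _).trans (hg'' 0 (by simpa using hh))
  have first_deriv (s : ℝ) : HasDerivAt (fun s => g s + g (-s) - c * s ^ 2)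
      (g' s - g' (-s) - c * (2 * s)) s := by
    simpa [sub_eq_add_neg] using ((hg s).fun_add ((hg (-s)).comp s (hasDerivAt_neg s))).fun_sub
      ((hasDerivAt_pow 2 s).const_mul c)
  have second_deriv (s : ℝ) : HasDerivAt (fun s => g' s - g' (-s) - c * (2 * s))
      (g'' s + g'' (-s) - c * 2) s := by
    simpa using ((hg' s).fun_sub ((hg' (-s)).comp s (hasDerivAt_neg s))).fun_sub
      (((hasDerivAt_id s).const_mul 2).const_mul c)
  have second_bound : ∀ s ∈ Icc 0 h, ‖g'' s + g'' (-s) - c * 2‖ ≤ 2 * η := fun s hs => by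
    have hs' : |s| ≤ h := (abs_of_nonneg hs.1).trans_le hs.2
    have := abs_le.1 (hg'' s hs')
    have := abs_le.1 (hg'' (-s) ((abs_neg s).trans_le hs'))
    rw [Real.norm_eq_abs, abs_le]
    constructor <;> linarith
  have first_bound : ∀ s ∈ Icc 0 h, ‖g' s - g' (-s) - c * (2 * s)‖ ≤ 2 * η * h := fun s hs => by
    have := (convex_Icc 0 h).norm_image_sub_le_of_norm_hasDerivWithin_le
      (fun t _ => (second_deriv t).hasDerivWithinAt) second_bound (left_mem_Icc.2 hh) hs
    simp only [neg_zero, sub_self, mul_zero, sub_zero, Real.norm_of_nonneg hs.1] at this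
    exact this.trans (by gcongr; exact hs.2)
  have := (convex_Icc 0 h).norm_image_sub_le_of_norm_hasDerivWithin_le
    (fun t _ => (first_deriv t).hasDerivWithinAt) first_bound (left_mem_Icc.2 hh)
    (right_mem_Icc.2 hh)
  simp only [neg_zero, sub_zero, Real.norm_of_nonneg hh, Real.norm_eq_abs] at this
  calc |g h + g (-h) - 2 * g 0 - c * h ^ 2|
      = |g h + g (-h) - c * h ^ 2 - (g 0 + g 0 - c * 0 ^ 2)| := by ring_nf
    _ ≤ 2 * η * h * h := this
    _ = 2 * η * h ^ 2 := by ring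

theorem abs_second_difference_sub_le (hφ : ContDiff ℝ 2 φ) {η : ℝ} (hh : 0 ≤ h)
    {x e : 𝔼 n} (he : ‖e‖ = 1)
    (hη : ∀ y, dist y x ≤ h → |fderiv ℝ (fun z => fderiv ℝ φ z e) y e -
      fderiv ℝ (fun z => fderiv ℝ φ z e) x e| ≤ η) :
    |φ (x + h • e) + φ (x - h • e) - 2 * φ x - fderiv ℝ (fun z => fderiv ℝ φ z e) x e * h ^ 2| ≤
      2 * η * h ^ 2 := by
  have line (s : ℝ) : HasDerivAt (fun s : ℝ => x + s • e) e s := by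
    simpa using ((hasDerivAt_id s).smul_const e).const_add x
  have key := abs_symm_diff_sub_mul_sq_le (g := fun s => φ (x + s • e))
    (fun s => (hφ.differentiable two_ne_zero _).hasFDerivAt.comp_hasDerivAt s (line s))
    (fun s => ((contDiff_one_fderiv_apply hφ e).differentiable one_ne_zero
      _).hasFDerivAt.comp_hasDerivAt s (line s)) hh
    (fun s hs => hη (x + s • e) (by simpa [norm_smul, he] using hs))
  simpa [sub_eq_add_neg] using key

theorem tendstoUniformly_second_difference (hφ : ContDiff ℝ 2 φ) (hφc : HasCompactSupport φ)
    {e : 𝔼 n} (he : ‖e‖ = 1) :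
    TendstoUniformly (fun (h : ℝ) x => (φ (x + h • e) + φ (x - h • e) - 2 * φ x) / h ^ 2)
      (fun x => fderiv ℝ (fun y => fderiv ℝ φ y e) x e) (𝓝[>] 0) := by
  have huc : UniformContinuous fun x => fderiv ℝ (fun y => fderiv ℝ φ y e) x e :=
    (continuous_fderiv_fderiv_apply hφ e).uniformContinuous_of_tendsto_cocompact
      ((hφc.fderiv_apply ℝ e).fderiv_apply ℝ e).is_zero_at_infty
  rw [Metric.tendstoUniformly_iff]
  intro ε hε
  obtain ⟨δ, hδ, hclose⟩ := Metric.uniformContinuous_iff.1 huc (ε / 4) (by positivity)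
  filter_upwards [Ioo_mem_nhdsGT hδ] with h hh x
  have hh2 : 0 < h ^ 2 := pow_pos hh.1 2
  have key := abs_second_difference_sub_le hφ hh.1.le he (x := x)
    fun y hy => (hclose (hy.trans_lt hh.2)).le
  rw [dist_comm, Real.dist_eq, div_sub' hh2.ne', mul_comm (h ^ 2), abs_div, abs_of_pos hh2,
    div_lt_iff₀ hh2]
  exact key.trans_lt (by nlinarith)

theorem tendstoUniformly_finsetSum {ι κ X : Type*} {l : Filter ι} {F : κ → ι → X → ℝ}
    {g : κ → X → ℝ} (hF : ∀ k, TendstoUniformly (F k) (g k) l) (s : Finset κ) :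
    TendstoUniformly (fun j x => ∑ k ∈ s, F k j x) (fun x => ∑ k ∈ s, g k x) l := by
  classical
  induction s using Finset.induction_on with
  | empty => simpa [Metric.tendstoUniformly_iff] using fun ε hε => .of_forall fun _ _ => hε
  | insert k s hk ih =>
    simp only [Finset.sum_insert hk]
    exact (hF k).add ih

/-- The second order difference quotient of `v` on the lattice of mesh `h` through `x`. -/
noncomputable def discreteLaplacian (h : ℝ) (v : 𝔼 n → ℝ) (x : 𝔼 n) : ℝ :=
  ∑ i, (v (x + EuclideanSpace.single i h) + v (x - EuclideanSpace.single i h) - 2 * v x) / h ^ 2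

theorem discreteLaplacian_eq_walkMean_sub (hn : n ≠ 0) (h : ℝ) (v : 𝔼 n → ℝ) (x : 𝔼 n) :
    discreteLaplacian h v x = 2 * n / h ^ 2 * (walkMean h v x - v x) := by
  simp only [discreteLaplacian, walkMean, ← Finset.sum_div, Finset.sum_sub_distrib,
    Finset.sum_const, Finset.card_univ, Fintype.card_fin, nsmul_eq_mul]
  field_simp

theorem discreteLaplacian_eq_sum_smul (h : ℝ) (v : 𝔼 n → ℝ) (x : 𝔼 n) :
    discreteLaplacian h v x = ∑ i,
      (v (x + h • EuclideanSpace.single i 1) + v (x - h • EuclideanSpace.single i 1) - 2 * v x) /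
        h ^ 2 := by
  have single_eq_smul (i : Fin n) :
      (EuclideanSpace.single i h : 𝔼 n) = h • EuclideanSpace.single i 1 := by
    ext j
    by_cases hij : j = i <;> simp [hij]
  exact Finset.sum_congr rfl fun i _ => by rw [single_eq_smul]

theorem tendstoUniformly_discreteLaplacian (hφ : ContDiff ℝ 2 φ) (hφc : HasCompactSupport φ) :
    TendstoUniformly (fun h => discreteLaplacian h φ) (laplacian φ) (𝓝[>] 0) := by
  have hsum := tendstoUniformly_finsetSum (l := 𝓝[>] (0 : ℝ))
    (fun i : Fin n => tendstoUniformly_second_difference hφ hφc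
      (e := EuclideanSpace.single i 1) (by simp)) Finset.univ
  simp only [← discreteLaplacian_eq_sum_smul] at hsum
  exact hsum

theorem integrable_comp_add_mul (hφ : Continuous φ) (hφc : HasCompactSupport φ) (hv : Measurable v)
    {M : ℝ} (hM : ∀ x, |v x| ≤ M) (a : 𝔼 n) : Integrable fun x => φ (x + a) * v x :=
  ((hφ.integrable_of_hasCompactSupport hφc).comp_add_right a).mul_bdd hv.aestronglyMeasurable
    (.of_forall hM)

theorem integrable_discreteLaplacian_mul (hφv : ∀ a, Integrable fun x => φ (x + a) * v x)
    (h : ℝ) : Integrable fun x => discreteLaplacian h φ x * v x := by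
  have hprod : Integrable fun x => φ x * v x := by simpa using hφv 0
  have hsecond (a b : 𝔼 n) :
      Integrable fun x => φ (x + a) * v x + φ (x + b) * v x - 2 * (φ x * v x) :=
    ((hφv a).add (hφv b)).sub (hprod.const_mul 2)
  simp only [discreteLaplacian, div_mul_eq_mul_div, Finset.sum_mul, add_mul, sub_mul, mul_assoc,
    sub_eq_add_neg (_ : 𝔼 n)]
  exact integrable_finsetSum _ fun i _ => (hsecond _ _).div_const _

theorem integral_mul_comp_add_right (a : 𝔼 n) :
    ∫ x, φ x * v (x + a) = ∫ x, φ (x - a) * v x := by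
  simpa using integral_add_right_eq_self (fun x => φ (x - a) * v x) a

theorem integrable_mul_comp_add_right (hφv : ∀ a, Integrable fun x => φ (x + a) * v x) (a : 𝔼 n) :
    Integrable fun x => φ x * v (x + a) := by
  simpa using (hφv (-a)).comp_add_right a

theorem integrable_mul_discreteLaplacian (hφv : ∀ a, Integrable fun x => φ (x + a) * v x) (h : ℝ) :
    Integrable fun x => φ x * discreteLaplacian h v x := by
  simpa only [mul_comm] using integrable_discreteLaplacian_mul (φ := v) (v := φ)
    (fun a => by simpa only [mul_comm] using integrable_mul_comp_add_right hφv a) h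

theorem integral_discreteLaplacian_mul (hφv : ∀ a, Integrable fun x => φ (x + a) * v x) (h : ℝ) :
    ∫ x, discreteLaplacian h φ x * v x = ∫ x, φ x * discreteLaplacian h v x := by
  have hφv' := integrable_mul_comp_add_right hφv
  have hprod : Integrable fun x => φ x * v x := by simpa using hφv 0
  have hsum (a b : 𝔼 n) : Integrable fun x => φ (x + a) * v x + φ (x + b) * v x :=
    (hφv a).add (hφv b)
  have hsum' (a b : 𝔼 n) : Integrable fun x => φ x * v (x + a) + φ x * v (x + b) :=
    (hφv' a).add (hφv' b)
  have hsecond (a b : 𝔼 n) :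
      Integrable fun x => φ (x + a) * v x + φ (x + b) * v x - 2 * (φ x * v x) :=
    (hsum a b).sub (hprod.const_mul 2)
  have hsecond' (a b : 𝔼 n) :
      Integrable fun x => φ x * v (x + a) + φ x * v (x + b) - 2 * (φ x * v x) :=
    (hsum' a b).sub (hprod.const_mul 2)
  simp only [discreteLaplacian, mul_div_assoc', div_mul_eq_mul_div, Finset.mul_sum, Finset.sum_mul,
    mul_add, add_mul, mul_sub, sub_mul, mul_assoc, mul_left_comm (φ _) 2, sub_eq_add_neg (_ : 𝔼 n)]
  rw [integral_finsetSum _ fun i _ => (hsecond _ _).div_const _,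
    integral_finsetSum _ fun i _ => (hsecond' _ _).div_const _]
  refine Finset.sum_congr rfl fun i _ => ?_
  rw [integral_div, integral_div, integral_sub (hsum _ _) (hprod.const_mul 2),
    integral_sub (hsum' _ _) (hprod.const_mul 2), integral_add (hφv _) (hφv _),
    integral_add (hφv' _) (hφv' _), integral_mul_comp_add_right, integral_mul_comp_add_right,
    add_comm (∫ x, φ (x - _) * v x)]
  simp only [sub_eq_add_neg, neg_neg]

end DifferenceQuotient

/-! ### Uniform limits -/

section UniformLimits

variable {ι X : Type*} {l : Filter ι}

theorem tendstoUniformlyOn_of_dist_le [PseudoMetricSpace X] {K : Set X} (hK : TotallyBounded K)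
    [l.NeBot] {v : ι → X → ℝ} {u : X → ℝ} {C : ℝ} (hC : 0 ≤ C) {η : ι → ℝ}
    (hη : Tendsto η l (𝓝 0)) (hv : ∀ᶠ j in l, ∀ x y, |v j x - v j y| ≤ C * dist x y + η j)
    (hlim : ∀ x, Tendsto (v · x) l (𝓝 (u x))) : TendstoUniformlyOn v u l K := by
  have hu (x y : X) : |u x - u y| ≤ C * dist x y :=
    le_of_tendsto_of_tendsto ((hlim x).sub (hlim y)).abs
      (by simpa using hη.const_add (C * dist x y)) (hv.mono fun j hj => hj x y)
  rw [Metric.tendstoUniformlyOn_iff]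
  intro ε hε
  set δ := ε / (4 * (C + 1)) with hδ
  have hCδ : C * δ ≤ ε / 4 := by
    rw [hδ, mul_div_assoc', div_le_div_iff₀ (by positivity) (by positivity)]
    nlinarith
  obtain ⟨t, ht, hcover⟩ := Metric.totallyBounded_iff.1 hK δ (by positivity)
  have centers_close : ∀ᶠ j in l, ∀ c ∈ t, |v j c - u c| < ε / 4 :=
    (eventually_all_finite ht).2 fun c _ => by
      simpa [Real.dist_eq] using Metric.tendsto_nhds.1 (hlim c) (ε / 4) (by positivity)
  have hη_small : ∀ᶠ j in l, η j < ε / 4 := hη.eventually_lt_const (by positivity)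
  filter_upwards [hv, centers_close, hη_small] with j hvj hcj hηj x hx
  obtain ⟨c, hc, hxc⟩ := mem_iUnion₂.1 (hcover hx)
  have hdist : C * dist x c ≤ C * δ := by gcongr; exact (mem_ball.1 hxc).le
  calc dist (u x) (v j x) = |(u x - u c) - (v j c - u c) - (v j x - v j c)| := by
        rw [Real.dist_eq]; ring_nf
    _ ≤ |u x - u c| + |v j c - u c| + |v j x - v j c| := by grw [abs_sub, abs_sub]
    _ < ε := by linarith [hu x c, hcj c hc, hvj x c]

theorem tendstoUniformly_mul_of_bounded {F G : ι → X → ℝ} {f g : X → ℝ}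
    (hF : TendstoUniformly F f l) (hG : TendstoUniformly G g l) {A B : ℝ} (hf : ∀ x, |f x| ≤ A)
    (hg : ∀ x, |g x| ≤ B) :
    TendstoUniformly (fun j x => F j x * G j x) (fun x => f x * g x) l := by
  rw [Metric.tendstoUniformly_iff] at hF hG ⊢
  intro ε hε
  set δ := min 1 (ε / (2 + |A| + |B|))
  have hδ : 0 < δ := by positivity
  have hδε : δ * (2 + |A| + |B|) ≤ ε := (le_div_iff₀ (by positivity)).1 (min_le_right _ _)
  filter_upwards [hF δ hδ, hG δ hδ] with j hFj hGj x
  have hfx := (hf x).trans (le_abs_self A)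
  have hgx := (hg x).trans (le_abs_self B)
  specialize hFj x
  specialize hGj x
  rw [Real.dist_eq] at hFj hGj ⊢
  calc |f x * g x - F j x * G j x|
      = |(f x - F j x) * g x + f x * (g x - G j x) - (f x - F j x) * (g x - G j x)| := by ring_nf
    _ ≤ |f x - F j x| * |g x| + |f x| * |g x - G j x| + |f x - F j x| * |g x - G j x| := by
        grw [abs_sub, abs_add_le, abs_mul, abs_mul, abs_mul]
    _ ≤ δ * |B| + |A| * δ + δ * 1 := by
        gcongr
        exact hGj.le.trans (min_le_left _ _)
    _ < ε := by linarith

theorem tendsto_setIntegral_of_tendstoUniformly [MeasurableSpace X] {μ : Measure X} {s : Set X}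
    (hs : μ s ≠ ∞) {F : ι → X → ℝ} {f : X → ℝ} (hF : TendstoUniformly F f l)
    (hFint : ∀ᶠ j in l, IntegrableOn (F j) s μ) (hfint : IntegrableOn f s μ) :
    Tendsto (fun j => ∫ x in s, F j x ∂μ) l (𝓝 (∫ x in s, f x ∂μ)) := by
  rw [Metric.tendsto_nhds]
  intro ε hε
  have hδ : 0 < ε / (μ.real s + 1) := by positivity
  filter_upwards [Metric.tendstoUniformly_iff.1 hF _ hδ, hFint] with j hj hjint
  rw [Real.dist_eq, ← integral_sub hjint hfint, ← Real.norm_eq_abs]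
  calc ‖∫ x in s, F j x - f x ∂μ‖ ≤ ε / (μ.real s + 1) * μ.real s :=
        norm_setIntegral_le_of_norm_le_const hs.lt_top fun x _ => by
          simpa [Real.norm_eq_abs, ← Real.dist_eq, dist_comm] using (hj x).le
    _ < ε := by
        rw [div_mul_eq_mul_div, div_lt_iff₀ (by positivity)]
        linarith

end UniformLimits

/-! ### The torsion function of a convex set -/

/-- `u` is a torsion function of `Ω`: it vanishes outside `Ω` and `-Δu = 1` weakly in `Ω`. The last
field, `-Δu ≤ 1` weakly on the whole space, records that the nonnegative function `u` has no
concave kink across the boundary. -/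
structure IsTorsionFunction {n : ℕ} (Ω : Set (𝔼 n)) (u : 𝔼 n → ℝ) : Prop where
  continuous : Continuous u
  nonneg : ∀ x, 0 ≤ u x
  eq_zero_of_notMem : ∀ x ∉ Ω, u x = 0
  integral_mul_laplacian : ∀ φ : 𝔼 n → ℝ, ContDiff ℝ 2 φ → HasCompactSupport φ →
    tsupport φ ⊆ Ω → ∫ x, u x * laplacian φ x = -∫ x, φ x
  neg_integral_le : ∀ φ : 𝔼 n → ℝ, ContDiff ℝ 2 φ → HasCompactSupport φ → (∀ x, 0 ≤ φ x) →
    -∫ x, φ x ≤ ∫ x, u x * laplacian φ x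

section TorsionLimit

variable {n : ℕ} {Ω : Set (𝔼 n)} {l : Filter ℝ} [l.NeBot] {u φ : 𝔼 n → ℝ} {M : ℝ}

theorem eventually_torsionIterate_le (hn : n ≠ 0) (hΩb : Bornology.IsBounded Ω) :
    ∃ M, 0 ≤ M ∧ ∀ᶠ h in 𝓝[>] 0, ∀ k x, torsionIterate Ω h k x ≤ M := by
  obtain ⟨R, hR⟩ := hΩb.subset_ball 0
  refine ⟨(max R 0 + 1) ^ 2 / (2 * n), by positivity, ?_⟩
  filter_upwards [Ioo_mem_nhdsGT one_pos] with h hh k x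
  have hR' : Ω ⊆ ball 0 (max R 0) := hR.trans (ball_subset_ball (le_max_left R 0))
  refine (torsionIterate_le_of_subset_ball hn hh.1.le hR').trans ?_
  have := hh.1
  have := hh.2
  gcongr

theorem abs_discreteTorsion_sub_le (hn : n ≠ 0) (hΩo : IsOpen Ω) (hΩc : Convex ℝ Ω) {h : ℝ}
    (hh : 0 ≤ h) (hM : 0 ≤ M) (hv : ∀ k x, torsionIterate Ω h k x ≤ M) (x y : 𝔼 n) :
    |discreteTorsion Ω h x - discreteTorsion Ω h y| ≤ (√(2 * M) + h) * (dist x y + h) := by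
  rw [abs_sub_le_iff]
  have h₁ := discreteTorsion_add_le hn hΩo hΩc hh hM hv y (x - y)
  have h₂ := discreteTorsion_add_le hn hΩo hΩc hh hM hv x (y - x)
  rw [add_sub_cancel, ← dist_eq_norm] at h₁ h₂
  rw [dist_comm y x] at h₂
  constructor <;> linarith

theorem eq_zero_of_tendsto_discreteTorsion {x : 𝔼 n} {c : ℝ}
    (hc : Tendsto (discreteTorsion Ω · x) l (𝓝 c)) (hx : x ∉ Ω) : c = 0 :=
  tendsto_nhds_unique hc (by simpa only [discreteTorsion_of_notMem hx] using tendsto_const_nhds)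

theorem exists_tendstoUniformly_discreteTorsion (hn : n ≠ 0) (hΩo : IsOpen Ω)
    (hΩb : Bornology.IsBounded Ω) (hΩc : Convex ℝ Ω) :
    ∃ l : Filter ℝ, l.NeBot ∧ l ≤ 𝓝[>] 0 ∧ ∃ u, TendstoUniformly (discreteTorsion Ω) u l := by
  obtain ⟨M, hM, hv⟩ := eventually_torsionIterate_le hn hΩb
  let l : Ultrafilter ℝ := .of (𝓝[>] 0)
  have hl : (l : Filter ℝ) ≤ 𝓝[>] 0 := Ultrafilter.of_le _
  have hpointwise (x : 𝔼 n) : ∃ c, Tendsto (discreteTorsion Ω · x) l (𝓝 c) := by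
    have hmem : ∀ᶠ h in l, discreteTorsion Ω h x ∈ Icc 0 M :=
      (hv.filter_mono hl).mono fun h hh => ⟨discreteTorsion_nonneg, discreteTorsion_le hh⟩
    obtain ⟨c, -, hc⟩ := isCompact_Icc.ultrafilter_le_nhds (l.map (discreteTorsion Ω · x))
      (le_principal_iff.2 hmem)
    exact ⟨c, hc⟩
  choose u hu using hpointwise
  have hlip : ∀ᶠ h in l, ∀ x y, |discreteTorsion Ω h x - discreteTorsion Ω h y| ≤
      (√(2 * M) + 1) * dist x y + (√(2 * M) + 1) * h := by
    filter_upwards [hl hv, hl (Ioo_mem_nhdsGT one_pos)] with h hvh hh x y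
    refine (abs_discreteTorsion_sub_le hn hΩo hΩc hh.1.le hM hvh x y).trans ?_
    rw [← mul_add]
    have := hh.1
    have := hh.2
    gcongr
  have hη : Tendsto (fun h => (√(2 * M) + 1) * h) l (𝓝 0) := by
    simpa using (tendsto_id.mono_left (hl.trans nhdsWithin_le_nhds)).const_mul (√(2 * M) + 1)
  have hunif := tendstoUniformlyOn_of_dist_le
    (hΩb.isCompact_closure.totallyBounded.subset subset_closure) (by positivity) hη hlip hu
  refine ⟨l, inferInstance, hl, u, Metric.tendstoUniformly_iff.2 fun ε hε => ?_⟩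
  filter_upwards [Metric.tendstoUniformlyOn_iff.1 hunif ε hε] with h hh x
  by_cases hx : x ∈ Ω
  · exact hh x hx
  · simpa only [eq_zero_of_tendsto_discreteTorsion (hu x) hx, discreteTorsion_of_notMem hx,
      dist_self] using hε

theorem abs_sub_le_of_tendstoUniformly_discreteTorsion (hn : n ≠ 0) (hΩo : IsOpen Ω)
    (hΩc : Convex ℝ Ω) (hl : l ≤ 𝓝[>] 0) (hu : TendstoUniformly (discreteTorsion Ω) u l)
    (hv : ∀ᶠ h in l, ∃ M, ∀ k x, torsionIterate Ω h k x ≤ M) (hM : ∀ x, u x ≤ M) (x y : 𝔼 n) :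
    |u x - u y| ≤ √(2 * M) * dist x y := by
  have hM0 : 0 ≤ M := 
    (ge_of_tendsto' (hu.tendsto_at x) fun _ => discreteTorsion_nonneg).trans (hM x)
  have hh : Tendsto (fun h => h) l (𝓝 0) := tendsto_id.mono_left (hl.trans nhdsWithin_le_nhds)
  have almost {δ : ℝ} (hδ : 0 < δ) : |u x - u y| ≤ √(2 * (M + δ)) * dist x y := by
    have hrhs : Tendsto (fun h => (√(2 * (M + δ)) + h) * (dist x y + h)) l
        (𝓝 (√(2 * (M + δ)) * dist x y)) := by
      simpa using (hh.const_add (√(2 * (M + δ)))).mul (hh.const_add (dist x y))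
    refine le_of_tendsto_of_tendsto ((hu.tendsto_at x).sub (hu.tendsto_at y)).abs hrhs ?_
    filter_upwards [hl self_mem_nhdsWithin, hv, Metric.tendstoUniformly_iff.1 hu δ hδ]
      with h hh ⟨N, hN⟩ hclose
    refine abs_discreteTorsion_sub_le hn hΩo hΩc (mem_Ioi.1 hh).le (by positivity)
      (fun k z => ?_) x y
    have := (abs_lt.1 (hclose z)).1
    linarith [torsionIterate_le_discreteTorsion hN k z, hM z]
  have hsqrt : Tendsto (fun δ => √(2 * (M + δ)) * dist x y) (𝓝[>] 0)
      (𝓝 (√(2 * M) * dist x y)) := by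
    have : Continuous fun δ => √(2 * (M + δ)) * dist x y := by fun_prop
    simpa using this.tendsto 0 |>.mono_left nhdsWithin_le_nhds
  exact ge_of_tendsto hsqrt (eventually_mem_nhdsWithin.mono fun δ hδ => almost hδ)

theorem integrable_comp_add_mul_discreteTorsion (hΩo : IsOpen Ω) {h : ℝ}
    (hM : ∀ k x, torsionIterate Ω h k x ≤ M) (hφ : Continuous φ) (hφc : HasCompactSupport φ)
    (a : 𝔼 n) : Integrable fun x => φ (x + a) * discreteTorsion Ω h x :=
  integrable_comp_add_mul hφ hφc (measurable_discreteTorsion hΩo.measurableSet)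
    (fun _ => (abs_of_nonneg discreteTorsion_nonneg).trans_le (discreteTorsion_le hM)) a

theorem tendsto_integral_discreteLaplacian_mul (hΩo : IsOpen Ω)
    (hΩb : Bornology.IsBounded Ω) (hl : l ≤ 𝓝[>] 0)
    (hu : TendstoUniformly (discreteTorsion Ω) u l) (hucont : Continuous u)
    (hv : ∀ᶠ h in l, ∃ M, ∀ k x, torsionIterate Ω h k x ≤ M) (hφ : ContDiff ℝ 2 φ)
    (hφc : HasCompactSupport φ) :
    Tendsto (fun h => ∫ x, discreteLaplacian h φ x * discreteTorsion Ω h x) l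
      (𝓝 (∫ x, laplacian φ x * u x)) := by
  have hu0 : ∀ x ∉ Ω, u x = 0 := fun x => eq_zero_of_tendsto_discreteTorsion (hu.tendsto_at x)
  have hlap := continuous_laplacian hφ
  have hlapc := hasCompactSupport_laplacian hφc
  obtain ⟨A, hA⟩ := hlap.bounded_above_of_compact_support hlapc
  obtain ⟨B, hB⟩ := hucont.bounded_above_of_compact_support
    (.intro hΩb.isCompact_closure fun x hx => hu0 x fun hxΩ => hx (subset_closure hxΩ))
  have huniform := tendstoUniformly_mul_of_bounded
    (fun s hs => (tendstoUniformly_discreteLaplacian hφ hφc s hs).filter_mono hl) hu hA hB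
  have key := tendsto_setIntegral_of_tendstoUniformly (μ := volume) hΩb.measure_lt_top.ne huniform
    (hv.mono fun h ⟨M, hM⟩ => (integrable_discreteLaplacian_mul
      (integrable_comp_add_mul_discreteTorsion hΩo hM hφ.continuous hφc) h).integrableOn)
    ((hlap.mul hucont).integrable_of_hasCompactSupport hlapc.mul_right).integrableOn
  rw [setIntegral_eq_integral_of_forall_compl_eq_zero fun x hx => by rw [hu0 x hx, mul_zero]] at key
  refine key.congr fun h => setIntegral_eq_integral_of_forall_compl_eq_zero fun x hx => ?_
  rw [discreteTorsion_of_notMem hx, mul_zero]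

theorem discreteLaplacian_discreteTorsion_of_mem (hn : n ≠ 0) {h : ℝ} (hh : h ≠ 0)
    (hM : ∀ k x, torsionIterate Ω h k x ≤ M) {x : 𝔼 n} (hx : x ∈ Ω) :
    discreteLaplacian h (discreteTorsion Ω h) x = -1 := by
  rw [discreteLaplacian_eq_walkMean_sub hn, eq_sub_of_add_eq (discreteTorsion_eq_of_mem hM hx).symm,
    sub_right_comm, sub_self, zero_sub]
  field_simp

theorem neg_one_le_discreteLaplacian_discreteTorsion (hn : n ≠ 0) {h : ℝ} (hh : h ≠ 0)
    (hM : ∀ k x, torsionIterate Ω h k x ≤ M) (x : 𝔼 n) :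
    -1 ≤ discreteLaplacian h (discreteTorsion Ω h) x := by
  have hmean := discreteTorsion_le_walkMean_add hM x
  calc (-1 : ℝ) = 2 * n / h ^ 2 * -(h ^ 2 / (2 * n)) := by field_simp
    _ ≤ 2 * n / h ^ 2 * (walkMean h (discreteTorsion Ω h) x - discreteTorsion Ω h x) := by
        gcongr
        linarith
    _ = _ := (discreteLaplacian_eq_walkMean_sub hn h _ x).symm

theorem isTorsionFunction_of_tendstoUniformly (hn : n ≠ 0) (hΩo : IsOpen Ω)
    (hΩb : Bornology.IsBounded Ω) (hl : l ≤ 𝓝[>] 0)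
    (hu : TendstoUniformly (discreteTorsion Ω) u l) (hucont : Continuous u) :
    IsTorsionFunction Ω u := by
  obtain ⟨M, -, hM⟩ := eventually_torsionIterate_le (Ω := Ω) hn hΩb
  have hM : ∀ᶠ h in l, 0 < h ∧ ∀ k x, torsionIterate Ω h k x ≤ M :=
    (eventually_mem_nhdsWithin.and hM).filter_mono hl
  have hweak {φ : 𝔼 n → ℝ} (hφ : ContDiff ℝ 2 φ) (hφc : HasCompactSupport φ) :
      Tendsto (fun h => ∫ x, φ x * discreteLaplacian h (discreteTorsion Ω h) x) l
        (𝓝 (∫ x, u x * laplacian φ x)) := by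
    simp only [mul_comm (u _)]
    refine (tendsto_integral_discreteLaplacian_mul hΩo hΩb hl hu hucont
      (hM.mono fun h hh => ⟨M, hh.2⟩) hφ hφc).congr' (hM.mono fun h hh => ?_)
    exact integral_discreteLaplacian_mul
      (integrable_comp_add_mul_discreteTorsion hΩo hh.2 hφ.continuous hφc) h
  refine ⟨hucont, fun x => ge_of_tendsto' (hu.tendsto_at x) fun _ => discreteTorsion_nonneg,
    fun x => eq_zero_of_tendsto_discreteTorsion (hu.tendsto_at x), fun φ hφ hφc hφΩ => ?_,
    fun φ hφ hφc hφ0 => ?_⟩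
  · refine tendsto_nhds_unique (hweak hφ hφc) (tendsto_const_nhds.congr' (hM.mono fun h hh => ?_))
    rw [← integral_neg]
    congr 1 with x
    by_cases hx : x ∈ Ω
    · rw [discreteLaplacian_discreteTorsion_of_mem hn hh.1.ne' hh.2 hx, mul_neg_one]
    · simp [image_eq_zero_of_notMem_tsupport fun hxφ => hx (hφΩ hxφ)]
  · refine ge_of_tendsto (hweak hφ hφc) (hM.mono fun h hh => ?_)
    rw [← integral_neg]
    have hint := integrable_comp_add_mul_discreteTorsion hΩo hh.2 hφ.continuous hφc
    refine integral_mono (hφ.continuous.integrable_of_hasCompactSupport hφc).neg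
      (integrable_mul_discreteLaplacian hint h) fun x => ?_
    have := neg_one_le_discreteLaplacian_discreteTorsion hn hh.1.ne' hh.2 x
    simpa using mul_le_mul_of_nonneg_left this (hφ0 x)

theorem exists_isTorsionFunction_abs_sub_le (hn : n ≠ 0) (hΩo : IsOpen Ω)
    (hΩb : Bornology.IsBounded Ω) (hΩc : Convex ℝ Ω) :
    ∃ u, IsTorsionFunction Ω u ∧
      ∀ M, (∀ x, u x ≤ M) → ∀ x y, |u x - u y| ≤ √(2 * M) * dist x y := by
  obtain ⟨l, _, hl, u, hu⟩ := exists_tendstoUniformly_discreteTorsion hn hΩo hΩb hΩc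
  obtain ⟨N, -, hN⟩ := eventually_torsionIterate_le (Ω := Ω) hn hΩb
  replace hN := hN.filter_mono hl
  have hlip (M : ℝ) := abs_sub_le_of_tendstoUniformly_discreteTorsion hn hΩo hΩc hl hu
    (hN.mono fun h hh => ⟨N, hh⟩) (M := M)
  have huN (x : 𝔼 n) : u x ≤ N :=
    le_of_tendsto (hu.tendsto_at x) (hN.mono fun h hh => discreteTorsion_le hh)
  have hucont : Continuous u := (LipschitzWith.of_dist_le_mul (K := (√(2 * N)).toNNReal)
    fun x y => by simpa [Real.dist_eq] using hlip N huN x y).continuous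
  exact ⟨u, isTorsionFunction_of_tendstoUniformly hn hΩo hΩb hl hu hucont, hlip⟩

end TorsionLimit

/-! ### Mollification -/

section Mollify

variable {n : ℕ} (ρ : ContDiffBump (0 : 𝔼 n)) {v : 𝔼 n → ℝ}

/-- The mollification of `v` at scale `ρ.rOut`: the convolution of `v` with the bump `ρ`, normalized
to have integral one. -/
noncomputable def mollify (v : 𝔼 n → ℝ) : 𝔼 n → ℝ :=
  convolution (ρ.normed volume) v (ContinuousLinearMap.lsmul ℝ ℝ) volume

theorem mollify_apply (v : 𝔼 n → ℝ) (x : 𝔼 n) :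
    mollify ρ v x = ∫ t, ρ.normed volume t * v (x - t) :=
  rfl

theorem integrable_normed_mul_comp_sub (hv : Continuous v) (x : 𝔼 n) :
    Integrable fun t => ρ.normed volume t * v (x - t) :=
  (ρ.continuous_normed.mul (hv.comp (continuous_const.sub continuous_id)))
    |>.integrable_of_hasCompactSupport ρ.hasCompactSupport_normed.mul_right

theorem contDiff_mollify (hv : Continuous v) {k : ℕ∞} : ContDiff ℝ k (mollify ρ v) :=
  ρ.hasCompactSupport_normed.contDiff_convolution_left _ ρ.contDiff_normed hv.locallyIntegrable

theorem hasCompactSupport_mollify (hv : HasCompactSupport v) :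
    HasCompactSupport (mollify ρ v) :=
  HasCompactSupport.convolution _ ρ.hasCompactSupport_normed hv

theorem mollify_nonneg {x : 𝔼 n} (h : ∀ y ∈ ball x ρ.rOut, 0 ≤ v y) : 0 ≤ mollify ρ v x := by
  refine integral_nonneg fun t => ?_
  by_cases ht : t ∈ ball 0 ρ.rOut
  · exact mul_nonneg (ρ.nonneg_normed t) (h _ (by simpa using ht))
  · rw [← ρ.support_normed_eq (μ := volume), Function.notMem_support] at ht
    simp [ht]

theorem abs_mollify_sub_le (hv : Continuous v) {x : 𝔼 n} {ε : ℝ}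
    (h : ∀ y ∈ ball x ρ.rOut, |v y - v x| ≤ ε) : |mollify ρ v x - v x| ≤ ε :=
  ContDiffBump.dist_normed_convolution_le hv.aestronglyMeasurable h

theorem abs_mollify_sub_mollify_le (hv : Continuous v) {K : ℝ}
    (h : ∀ x y, |v x - v y| ≤ K * dist x y) (x y : 𝔼 n) :
    |mollify ρ v x - mollify ρ v y| ≤ K * dist x y := by
  rw [mollify_apply, mollify_apply, ← integral_sub (integrable_normed_mul_comp_sub ρ hv x)
    (integrable_normed_mul_comp_sub ρ hv y)]
  have hint : Integrable fun t => ρ.normed volume t * (K * dist x y) :=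
    ρ.integrable_normed.mul_const _
  have hbound : ∀ t, ‖ρ.normed volume t * v (x - t) - ρ.normed volume t * v (y - t)‖ ≤
      ρ.normed volume t * (K * dist x y) := fun t => by
    rw [← mul_sub, norm_mul, Real.norm_of_nonneg (ρ.nonneg_normed t), Real.norm_eq_abs]
    gcongr
    · exact ρ.nonneg_normed t
    · simpa using h (x - t) (y - t)
  exact (norm_integral_le_of_norm_le hint (Eventually.of_forall hbound)).trans_eq
    (by rw [integral_mul_const, ρ.integral_normed, one_mul])

theorem norm_fderiv_mollify_le (hv : Continuous v) {K : ℝ} (hK : 0 ≤ K)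
    (h : ∀ x y, |v x - v y| ≤ K * dist x y) (x : 𝔼 n) : ‖fderiv ℝ (mollify ρ v) x‖ ≤ K :=
  norm_fderiv_le_of_lipschitz ℝ (C := ⟨K, hK⟩)
    (LipschitzWith.of_dist_le_mul fun x y => abs_mollify_sub_mollify_le ρ hv h x y)

theorem fderiv_convolution_apply {ψ : 𝔼 n → ℝ} (hψ : ContDiff ℝ 1 ψ) (hψc : HasCompactSupport ψ)
    (hv : Continuous v) (x e : 𝔼 n) :
    fderiv ℝ (convolution v ψ (ContinuousLinearMap.mul ℝ ℝ) volume) x e =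
      convolution v (fun y => fderiv ℝ ψ y e) (ContinuousLinearMap.mul ℝ ℝ) volume x := by
  rw [(hψc.hasFDerivAt_convolution_right _ hv.locallyIntegrable hψ x).fderiv,
    convolution_precompR_apply _ hv.locallyIntegrable (hψc.fderiv ℝ)
      (hψ.continuous_fderiv one_ne_zero)]

theorem fderiv_comp_const_sub_apply {ψ : 𝔼 n → ℝ} (hψ : Differentiable ℝ ψ) (x y e : 𝔼 n) :
    fderiv ℝ (fun z => ψ (x - z)) y e = -fderiv ℝ ψ (x - y) e := by
  have hsub : HasFDerivAt (fun z : 𝔼 n => x - z) (-ContinuousLinearMap.id ℝ (𝔼 n)) y :=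
    (hasFDerivAt_id y).const_sub x
  have hcomp : HasFDerivAt (fun z => ψ (x - z)) _ y := (hψ (x - y)).hasFDerivAt.comp y hsub
  simp [hcomp.fderiv]

theorem fderiv_fderiv_comp_const_sub_apply {ψ : 𝔼 n → ℝ} (hψ : ContDiff ℝ 2 ψ) (x y e : 𝔼 n) :
    fderiv ℝ (fun z => fderiv ℝ (fun z' => ψ (x - z')) z e) y e =
      fderiv ℝ (fun z => fderiv ℝ ψ z e) (x - y) e := by
  simp only [fderiv_comp_const_sub_apply (hψ.differentiable two_ne_zero), fderiv_fun_neg, neg_apply,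
    fderiv_comp_const_sub_apply ((contDiff_one_fderiv_apply hψ e).differentiable one_ne_zero),
    neg_neg]

theorem laplacian_convolution {ψ : 𝔼 n → ℝ} (hψ : ContDiff ℝ 2 ψ) (hψc : HasCompactSupport ψ)
    (hv : Continuous v) (x : 𝔼 n) :
    laplacian (convolution v ψ (ContinuousLinearMap.mul ℝ ℝ) volume) x =
      ∫ y, v y * laplacian (fun z => ψ (x - z)) y := by
  simp only [laplacian, fderiv_fderiv_comp_const_sub_apply hψ, Finset.mul_sum]
  rw [integral_finsetSum _ fun i _ => ?_]
  · refine Finset.sum_congr rfl fun i _ => ?_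
    simp only [fderiv_convolution_apply (hψ.of_le one_le_two) hψc hv]
    exact fderiv_convolution_apply (contDiff_one_fderiv_apply hψ _) (hψc.fderiv_apply ℝ _) hv x _
  · exact (hv.mul ((continuous_fderiv_fderiv_apply hψ _).comp (continuous_const.sub continuous_id)))
      |>.integrable_of_hasCompactSupport (((hψc.fderiv_apply ℝ _).fderiv_apply ℝ _).comp_homeomorph
        (Homeomorph.subLeft x)).mul_left

theorem laplacian_mollify (hv : Continuous v) (x : 𝔼 n) :
    laplacian (mollify ρ v) x = ∫ y, v y * laplacian (fun z => ρ.normed volume (x - z)) y := by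
  rw [← laplacian_convolution (ρ.contDiff_normed (n := 2)) ρ.hasCompactSupport_normed hv, mollify,
    ← convolution_flip]
  congr 2
  ext
  simp

theorem contDiff_normed_const_sub (x : 𝔼 n) : ContDiff ℝ 2 fun z => ρ.normed volume (x - z) :=
  (ρ.contDiff_normed (n := 2)).comp (contDiff_const.sub contDiff_id)

theorem hasCompactSupport_normed_const_sub (x : 𝔼 n) :
    HasCompactSupport fun z => ρ.normed volume (x - z) :=
  ρ.hasCompactSupport_normed.comp_homeomorph (Homeomorph.subLeft x)

theorem tsupport_normed_const_sub (x : 𝔼 n) :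
    tsupport (fun z => ρ.normed volume (x - z)) = closedBall x ρ.rOut := by
  have := tsupport_comp_eq_preimage (ρ.normed volume) (Homeomorph.subLeft x)
  refine this.trans ?_
  ext z
  simp [ρ.tsupport_normed_eq, dist_comm z, dist_eq_norm]

theorem integral_normed_const_sub (x : 𝔼 n) : ∫ z, ρ.normed volume (x - z) = 1 := by
  rw [integral_sub_left_eq_self, ρ.integral_normed]

theorem exists_seq_contDiffBump_rOut_tendsto_zero (n : ℕ) :
    ∃ ρ : ℕ → ContDiffBump (0 : 𝔼 n), Tendsto (fun k => (ρ k).rOut) atTop (𝓝 0) :=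
  ⟨fun k => ⟨1 / (k + 1) / 2, 1 / (k + 1), by positivity, half_lt_self (by positivity)⟩,
    tendsto_one_div_add_atTop_nhds_zero_nat⟩

end Mollify

/-! ### The sharp gradient bound for the torsion function -/

section TorsionMollify

variable {n : ℕ} {Ω : Set (𝔼 n)} {u : 𝔼 n → ℝ}

theorem tendsto_volumeRadius_cthickening (hΩb : Bornology.IsBounded Ω) (hΩc : Convex ℝ Ω) :
    Tendsto (fun δ => volumeRadius (cthickening δ Ω)) (𝓝 0) (𝓝 (volumeRadius Ω)) := by
  have hclosure : volume (closure Ω) = volume Ω :=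
    measure_congr (closure_ae_eq_of_null_frontier (hΩc.addHaar_frontier volume))
  have hvol : Tendsto (fun δ => volume.real (cthickening δ Ω)) (𝓝 0) (𝓝 (volume.real Ω)) := by
    rw [measureReal_def, ← hclosure]
    exact (ENNReal.tendsto_toReal hΩb.closure.measure_lt_top.ne).comp
      (tendsto_measure_cthickening ⟨1, one_pos, hΩb.cthickening.measure_lt_top.ne⟩)
  exact (hvol.rpow_const (Or.inr (by positivity))).div_const _

namespace IsTorsionFunction

theorem neg_laplacian_mollify_le_one (hu : IsTorsionFunction Ω u) (ρ : ContDiffBump (0 : 𝔼 n))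
    (x : 𝔼 n) : -laplacian (mollify ρ u) x ≤ 1 := by
  rw [neg_le, laplacian_mollify ρ hu.continuous, ← integral_normed_const_sub ρ x]
  exact hu.neg_integral_le _ (contDiff_normed_const_sub ρ x)
    (hasCompactSupport_normed_const_sub ρ x) fun z => ρ.nonneg_normed _

theorem laplacian_mollify_eq (hu : IsTorsionFunction Ω u) {ρ : ContDiffBump (0 : 𝔼 n)} {x : 𝔼 n}
    (hx : closedBall x ρ.rOut ⊆ Ω) : laplacian (mollify ρ u) x = -1 := by
  rw [laplacian_mollify ρ hu.continuous, ← integral_normed_const_sub ρ x]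
  exact hu.integral_mul_laplacian _ (contDiff_normed_const_sub ρ x)
    (hasCompactSupport_normed_const_sub ρ x) ((tsupport_normed_const_sub ρ x).trans_subset hx)

theorem hasCompactSupport (hu : IsTorsionFunction Ω u) (hΩb : Bornology.IsBounded Ω) :
    HasCompactSupport u :=
  HasCompactSupport.of_support_subset_isCompact hΩb.isCompact_closure fun x hx =>
    subset_closure (not_imp_comm.1 (hu.eq_zero_of_notMem x) hx)

theorem setOf_mollify_pos_subset (hu : IsTorsionFunction Ω u) (ρ : ContDiffBump (0 : 𝔼 n)) :
    {x | 0 < mollify ρ u x} ⊆ cthickening ρ.rOut Ω := by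
  intro x hx
  by_contra hxΩ
  have vanish (y : 𝔼 n) (hy : y ∈ closedBall x ρ.rOut) : u y = 0 :=
    hu.eq_zero_of_notMem y fun hyΩ => hxΩ
      (mem_cthickening_of_dist_le x y _ _ hyΩ (by rwa [dist_comm]))
  have hux := vanish x (mem_closedBall_self ρ.rOut_pos.le)
  have := abs_mollify_sub_le ρ hu.continuous (x := x) (ε := 0) fun y hy => by
    rw [vanish y (ball_subset_closedBall hy), hux, sub_zero, abs_zero]
  rw [abs_nonpos_iff, hux, sub_zero] at this
  exact hx.ne' this

theorem le_volumeRadius_sq (hu : IsTorsionFunction Ω u) (hn : n ≠ 0)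
    (hΩb : Bornology.IsBounded Ω) (hΩc : Convex ℝ Ω) (x : 𝔼 n) :
    2 * n * u x ≤ volumeRadius Ω ^ 2 := by
  obtain ⟨ρ, hρ⟩ := exists_seq_contDiffBump_rOut_tendsto_zero n
  have hmollify : Tendsto (fun k => 2 * n * mollify (ρ k) u x) atTop (𝓝 (2 * n * u x)) :=
    (ContDiffBump.convolution_tendsto_right_of_continuous hρ hu.continuous x).const_mul _
  have hradius : Tendsto (fun k => volumeRadius (cthickening (ρ k).rOut Ω) ^ 2) atTop
      (𝓝 (volumeRadius Ω ^ 2)) :=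
    ((tendsto_volumeRadius_cthickening hΩb hΩc).comp hρ).pow 2
  refine le_of_tendsto_of_tendsto' hmollify hradius fun k => ?_
  refine (le_volumeRadius_sq_of_neg_laplacian_le_one hn (contDiff_mollify (ρ k) hu.continuous)
    (hasCompactSupport_mollify (ρ k) (hu.hasCompactSupport hΩb))
    (hu.neg_laplacian_mollify_le_one (ρ k)) x).trans ?_
  gcongr
  · exact volumeRadius_nonneg _
  · exact volumeRadius_mono (hu.setOf_mollify_pos_subset (ρ k)) hΩb.cthickening.measure_lt_top.ne

end IsTorsionFunction

theorem exists_isTorsionFunction_abs_sub_le_volumeRadius (hn : n ≠ 0) (hΩo : IsOpen Ω)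
    (hΩb : Bornology.IsBounded Ω) (hΩc : Convex ℝ Ω) :
    ∃ u, IsTorsionFunction Ω u ∧ ∀ x y, |u x - u y| ≤ volumeRadius Ω / √n * dist x y := by
  obtain ⟨u, hu, hlip⟩ := exists_isTorsionFunction_abs_sub_le hn hΩo hΩb hΩc
  have hconst : √(2 * (volumeRadius Ω ^ 2 / (2 * n))) = volumeRadius Ω / √n := by
    rw [← mul_div_assoc, mul_div_mul_left _ _ two_ne_zero, Real.sqrt_div (sq_nonneg _),
      Real.sqrt_sq (volumeRadius_nonneg Ω)]
  refine ⟨u, hu, hconst ▸ hlip _ fun x => ?_⟩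
  rw [le_div_iff₀' (by positivity)]
  exact hu.le_volumeRadius_sq hn hΩb hΩc x

end TorsionMollify

/-! ### The boundary of a bounded convex set has finite area -/

section FrontierMeasure

variable {m : ℕ}

theorem hausdorffMeasure_pi_fin : (μH[(m : ℝ)] : Measure (Fin m → ℝ)) = volume := by
  simpa using hausdorffMeasure_pi_real (ι := Fin m)

theorem lipschitzWith_one_insertNth (i : Fin (m + 1)) (c : ℝ) :
    LipschitzWith 1 fun z : Fin m → ℝ => Fin.insertNth (α := fun _ => ℝ) i c z := by
  refine LipschitzWith.of_dist_le_mul fun z w => ?_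
  rw [NNReal.coe_one, one_mul, dist_pi_le_iff dist_nonneg]
  refine Fin.succAboveCases i ?_ fun k => ?_
  · simp
  · simpa using dist_le_pi_dist z w k

theorem hausdorffMeasure_cube_face_lt_top (i : Fin (m + 1)) (c R : ℝ) :
    μH[(m : ℝ)] {x : 𝔼(m + 1) | x i = c ∧ ‖WithLp.ofLp x‖ ≤ R} < ⊤ := by
  have hlip := (PiLp.lipschitzWith_toLp 2 fun _ : Fin (m + 1) => ℝ).comp
    (lipschitzWith_one_insertNth i c)
  have hsub : {x : 𝔼(m + 1) | x i = c ∧ ‖WithLp.ofLp x‖ ≤ R} ⊆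
      (WithLp.toLp 2 ∘ fun z : Fin m → ℝ => Fin.insertNth (α := fun _ => ℝ) i c z) ''
        closedBall 0 R := by
    rintro x ⟨hx, hR⟩
    refine ⟨i.removeNth (WithLp.ofLp x), ?_, ?_⟩
    · rw [mem_closedBall_zero_iff, pi_norm_le_iff_of_nonneg ((norm_nonneg _).trans hR)]
      exact fun k => (norm_le_pi_norm (WithLp.ofLp x) _).trans hR
    · simp [← hx]
  refine (measure_mono hsub).trans_lt
    ((hlip.lipschitzOnWith.hausdorffMeasure_image_le m.cast_nonneg).trans_lt ?_)
  refine ENNReal.mul_lt_top (ENNReal.rpow_lt_top_of_nonneg m.cast_nonneg ENNReal.coe_ne_top) ?_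
  rw [hausdorffMeasure_pi_fin]
  exact isBounded_closedBall.measure_lt_top

theorem hausdorffMeasure_cube_boundary_lt_top {R : ℝ} (hR : 0 < R) :
    μH[(m : ℝ)] {x : 𝔼(m + 1) | ‖WithLp.ofLp x‖ = R} < ⊤ := by
  have hsub : {x : 𝔼(m + 1) | ‖WithLp.ofLp x‖ = R} ⊆ ⋃ i,
      ({x | x i = R ∧ ‖WithLp.ofLp x‖ ≤ R} ∪ {x | x i = -R ∧ ‖WithLp.ofLp x‖ ≤ R}) := by
    intro x (hx : ‖WithLp.ofLp x‖ = R)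
    have hle (j : Fin (m + 1)) : |x j| ≤ R := (norm_le_pi_norm (WithLp.ofLp x) j).trans hx.le
    obtain ⟨j, hj⟩ : ∃ j, |x j| = R := by
      by_contra! hne
      exact ((pi_norm_lt_iff hR).2 fun j => (hle j).lt_of_ne (hne j)).ne hx
    exact mem_iUnion.2 ⟨j, ((abs_eq hR.le).1 hj).imp (⟨·, hx.le⟩) (⟨·, hx.le⟩)⟩
  refine (measure_mono hsub).trans_lt ((measure_iUnion_le _).trans_lt ?_)
  rw [tsum_fintype]
  exact ENNReal.sum_lt_top.2 fun i _ => measure_union_lt_top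
    (hausdorffMeasure_cube_face_lt_top i R R) (hausdorffMeasure_cube_face_lt_top i (-R) R)

theorem norm_sub_le_norm_sub_of_inner_nonpos {E : Type*} [NormedAddCommGroup E]
    [InnerProductSpace ℝ E] {x y p q : E} (hp : inner ℝ (y - x) (p - x) ≤ 0)
    (hq : inner ℝ (x - y) (q - y) ≤ 0) : ‖x - y‖ ≤ ‖p - q‖ := by
  have hinner : ‖x - y‖ ^ 2 ≤ inner ℝ (x - y) (p - q) := by
    have hsplit : p - q = (x - y) + (p - x) - (q - y) := by abel
    rw [← neg_sub, inner_neg_left] at hp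
    rw [hsplit, inner_sub_right, inner_add_right, real_inner_self_eq_norm_sq]
    linarith
  have := hinner.trans (real_inner_le_norm _ _)
  by_contra! hlt
  nlinarith [norm_nonneg (p - q)]

theorem exists_norm_ofLp_eq_forall_inner_nonpos {Ω : Set (𝔼(m + 1))} {x : 𝔼(m + 1)} {R : ℝ}
    (hΩo : IsOpen Ω) (hΩc : Convex ℝ Ω) (hx : x ∈ frontier Ω) (hR : ‖WithLp.ofLp x‖ ≤ R) :
    ∃ z : 𝔼(m + 1), ‖WithLp.ofLp z‖ = R ∧ ∀ w ∈ closure Ω, inner ℝ (w - x) (z - x) ≤ 0 := by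
  obtain ⟨ν, hν, hpos⟩ := exists_unit_forall_inner_sub_pos hΩo hΩc
    (closure_nonempty_iff.1 ⟨x, frontier_subset_closure hx⟩) (hΩo.frontier_eq ▸ hx).2
  have hnonneg : ∀ w ∈ closure Ω, 0 ≤ inner ℝ ν (w - x) := fun w hw =>
    closure_minimal (fun w hw => (hpos w hw).le)
      (isClosed_le continuous_const (by fun_prop : Continuous fun w => inner ℝ ν (w - x))) hw
  have hν0 : 0 < ‖WithLp.ofLp ν‖ := by
    rw [norm_pos_iff, Ne, WithLp.ofLp_eq_zero, ← norm_eq_zero, hν]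
    exact one_ne_zero
  have hR0 : 0 ≤ R := (norm_nonneg _).trans hR
  have hT : 0 ≤ 2 * R / ‖WithLp.ofLp ν‖ := by positivity
  have hcont : Continuous fun t : ℝ => ‖WithLp.ofLp (x - t • ν)‖ := by fun_prop
  have hend : R ≤ ‖WithLp.ofLp (x - (2 * R / ‖WithLp.ofLp ν‖) • ν)‖ := by
    have := norm_sub_norm_le ((2 * R / ‖WithLp.ofLp ν‖) • WithLp.ofLp ν) (WithLp.ofLp x)
    rw [norm_smul, Real.norm_of_nonneg hT, div_mul_cancel₀ _ hν0.ne', norm_sub_rev] at this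
    rw [WithLp.ofLp_sub, WithLp.ofLp_smul]
    linarith
  obtain ⟨t, ht, htR⟩ :=
    intermediate_value_Icc hT hcont.continuousOn ⟨by simpa using hR, hend⟩
  refine ⟨x - t • ν, htR, fun w hw => ?_⟩
  rw [sub_sub_cancel_left, inner_neg_right, inner_smul_right, real_inner_comm, neg_nonpos]
  exact mul_nonneg ht.1 (hnonneg w hw)

theorem hausdorffMeasure_frontier_lt_top {Ω : Set (𝔼(m + 1))} (hΩo : IsOpen Ω)
    (hΩb : Bornology.IsBounded Ω) (hΩc : Convex ℝ Ω) : μH[(m : ℝ)] (frontier Ω) < ⊤ := by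
  obtain ⟨R, hR, hΩR⟩ := hΩb.closure.exists_pos_norm_le
  have hsup (x : frontier Ω) : ‖WithLp.ofLp x.1‖ ≤ R :=
    ((pi_norm_le_iff_of_nonneg (norm_nonneg _)).2 (PiLp.norm_apply_le x.1)).trans
      (hΩR _ (frontier_subset_closure x.2))
  choose p hpR hp using fun x : frontier Ω =>
    exists_norm_ofLp_eq_forall_inner_nonpos hΩo hΩc x.2 (hsup x)
  -- `p x` projects back to `x` under the nearest-point projection onto `closure Ω`.
  have hanti : AntilipschitzWith 1 p := AntilipschitzWith.of_le_mul_dist fun x y => by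
    rw [NNReal.coe_one, one_mul, Subtype.dist_eq, dist_eq_norm, dist_eq_norm]
    exact norm_sub_le_norm_sub_of_inner_nonpos (hp x y (frontier_subset_closure y.2))
      (hp y x (frontier_subset_closure x.2))
  calc μH[(m : ℝ)] (frontier Ω) = μH[(m : ℝ)] (univ : Set (frontier Ω)) := by
        rw [← (isometry_subtype_coe (s := frontier Ω)).hausdorffMeasure_image
          (Or.inl m.cast_nonneg), image_univ, Subtype.range_coe]
    _ ≤ μH[(m : ℝ)] (p '' univ) := by
        simpa using hanti.le_hausdorffMeasure_image m.cast_nonneg univ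
    _ ≤ μH[(m : ℝ)] {x : 𝔼(m + 1) | ‖WithLp.ofLp x‖ = R} :=
        measure_mono (image_subset_iff.2 fun x _ => hpR x)
    _ < ⊤ := hausdorffMeasure_cube_boundary_lt_top hR

end FrontierMeasure

/-! ### Integrals of directional derivatives over a convex set -/

section LipschitzImage

variable {X Y : Type*} [MetricSpace X] [MeasurableSpace X] [BorelSpace X]
  [MetricSpace Y] [MeasurableSpace Y] [BorelSpace Y] {h : X → Y} {A : Set X} {d : ℝ}

theorem setLIntegral_image_le_of_lipschitzWith_one (hh : LipschitzWith 1 h) (hd : 0 ≤ d)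
    {G : Y → ℝ≥0∞} (hG : Measurable G) :
    ∫⁻ y in h '' A, G y ∂μH[d] ≤ ∫⁻ x in A, G (h x) ∂μH[d] := by
  have hmeas := hh.continuous.measurable
  rw [← lintegral_map hG hmeas]
  refine lintegral_mono' (Measure.le_iff.2 fun B hB => ?_) le_rfl
  rw [Measure.restrict_apply hB, Measure.map_apply hmeas hB, Measure.restrict_apply (hmeas hB),
    inter_comm, ← image_inter_preimage, inter_comm]
  simpa using hh.lipschitzOnWith.hausdorffMeasure_image_le hd (s := h ⁻¹' B ∩ A)

theorem exists_measurable_setLIntegral_image_le [PolishSpace X] [SecondCountableTopology Y]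
    (hh : LipschitzWith 1 h) (hd : 0 ≤ d) (hA : MeasurableSet A) (hinj : InjOn h A)
    {G : X → ℝ≥0∞} (hG : Measurable G) :
    ∃ a : Y → ℝ≥0∞, Measurable a ∧ (∀ x ∈ A, a (h x) = G x) ∧
      ∫⁻ y in h '' A, a y ∂μH[d] ≤ ∫⁻ x in A, G x ∂μH[d] := by
  obtain ⟨a, ha, haG⟩ := (hh.continuous.continuousOn.measurableEmbedding hA hinj)
    |>.exists_measurable_extend (hG.comp measurable_subtype_coe) fun _ => ⟨0⟩
  have haG' : ∀ x ∈ A, a (h x) = G x := fun x hx => congrFun haG ⟨x, hx⟩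
  exact ⟨a, ha, haG', (setLIntegral_image_le_of_lipschitzWith_one hh hd ha).trans_eq
    (setLIntegral_congr_fun hA haG')⟩

end LipschitzImage

section UpperBoundary

variable {E : Type*} [NormedAddCommGroup E] [NormedSpace ℝ E] {Ω : Set E} {e x : E}

/-- The part of the boundary of `Ω` through which lines of direction `e` leave `Ω`. -/
def upperBoundary (Ω : Set E) (e : E) : Set E :=
  frontier Ω ∩ {x | ∃ s > (0 : ℝ), x - s • e ∈ Ω}

theorem measurableSet_upperBoundary [MeasurableSpace E] [BorelSpace E] (hΩo : IsOpen Ω) (e : E) :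
    MeasurableSet (upperBoundary Ω e) := by
  have hunion : {x | ∃ s > (0 : ℝ), x - s • e ∈ Ω} = ⋃ s > (0 : ℝ), (· - s • e) ⁻¹' Ω := by
    ext
    simp
  refine measurableSet_frontier.inter (IsOpen.measurableSet ?_)
  rw [hunion]
  exact isOpen_biUnion fun s _ => hΩo.preimage (continuous_id.sub continuous_const)

theorem notMem_closure_of_mem_upperBoundary (hΩo : IsOpen Ω) (hΩc : Convex ℝ Ω)
    (hx : x ∈ upperBoundary Ω e) {r : ℝ} (hr : 0 < r) : x + r • e ∉ closure Ω := by
  obtain ⟨hxfr, s, hs, hxs⟩ := hx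
  intro hxr
  rw [← hΩo.interior_eq] at hxs
  have hmem : x ∈ openSegment ℝ (x - s • e) (x + r • e) := by
    refine ⟨r / (r + s), s / (r + s), by positivity, by positivity, by field_simp, ?_⟩
    match_scalars <;> field_simp
    ring
  exact hxfr.2 (hΩc.openSegment_interior_closure_subset_interior hxs hxr hmem)

theorem disjoint_upperBoundary_neg (hΩo : IsOpen Ω) (hΩc : Convex ℝ Ω) (e : E) :
    Disjoint (upperBoundary Ω e) (upperBoundary Ω (-e)) := by
  refine disjoint_left.2 fun x hx ⟨_, s, hs, hxs⟩ =>
    notMem_closure_of_mem_upperBoundary hΩo hΩc hx hs (subset_closure ?_)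
  rwa [smul_neg, sub_neg_eq_add] at hxs

theorem injOn_upperBoundary {Y : Type*} {p : E → Y} (hΩo : IsOpen Ω) (hΩc : Convex ℝ Ω)
    (hp : ∀ x y, p x = p y → ∃ r : ℝ, y = x + r • e) : InjOn p (upperBoundary Ω e) := by
  intro x hx y hy hxy
  obtain ⟨r, rfl⟩ := hp x y hxy
  rcases lt_trichotomy r 0 with hr | rfl | hr
  · refine absurd (frontier_subset_closure hx.1) ?_
    simpa using notMem_closure_of_mem_upperBoundary hΩo hΩc hy (neg_pos.2 hr)
  · simp
  · exact absurd (frontier_subset_closure hy.1)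
      (notMem_closure_of_mem_upperBoundary hΩo hΩc hx hr)

theorem exists_eq_Ioo_of_isOpen_of_convex {S : Set ℝ} (hSo : IsOpen S) (hSc : Convex ℝ S)
    (hSb : Bornology.IsBounded S) (hne : S.Nonempty) : ∃ a b, a < b ∧ S = Ioo a b := by
  have hsub : S ⊆ Ioo (sInf S) (sSup S) := by
    rw [← interior_Icc]
    exact hSo.subset_interior_iff.2
      (subset_Icc_csInf_csSup hSb.bddBelow hSb.bddAbove)
  have heq : S = Ioo (sInf S) (sSup S) := hsub.antisymm
    (IsConnected.Ioo_csInf_csSup_subset ⟨hne, hSc.isPreconnected⟩ hSb.bddBelow hSb.bddAbove)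
  obtain ⟨t, ht⟩ := hne
  exact ⟨_, _, (hsub ht).1.trans (hsub ht).2, heq⟩

theorem exists_line_inter_eq_Ioo (hΩo : IsOpen Ω) (hΩb : Bornology.IsBounded Ω)
    (hΩc : Convex ℝ Ω) (he : e ≠ 0) (hne : {t : ℝ | x + t • e ∈ Ω}.Nonempty) :
    ∃ a b : ℝ, a < b ∧ {t : ℝ | x + t • e ∈ Ω} = Ioo a b := by
  have hcont : Continuous fun t : ℝ => x + t • e := by fun_prop
  refine exists_eq_Ioo_of_isOpen_of_convex (hΩo.preimage hcont) ?_ ?_ hne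
  · exact (hΩc.translate_preimage_right x).is_linear_preimage
      (IsLinearMap.isLinearMap_smul' e)
  · have hanti : AntilipschitzWith ‖e‖₊⁻¹ fun t : ℝ => x + t • e :=
      AntilipschitzWith.of_le_mul_dist fun s t => by
        simp [dist_eq_norm, ← sub_smul, norm_smul, mul_comm ‖e‖⁻¹, norm_ne_zero_iff.2 he]
    exact hanti.isBounded_preimage hΩb

theorem add_smul_mem_upperBoundary (hΩo : IsOpen Ω) {a b : ℝ} (hab : a < b)
    (hS : {t : ℝ | x + t • e ∈ Ω} = Ioo a b) : x + b • e ∈ upperBoundary Ω e := by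
  have hcont : Continuous fun t : ℝ => x + t • e := by fun_prop
  have hmem (t : ℝ) : x + t • e ∈ Ω ↔ t ∈ Ioo a b := hS ▸ Iff.rfl
  refine ⟨hΩo.frontier_eq ▸ ⟨?_, fun hb => ((hmem b).1 hb).2.false⟩, (b - a) / 2, by linarith, ?_⟩
  · have hb : b ∈ closure (Ioo a b) := by
      rw [closure_Ioo hab.ne]
      exact right_mem_Icc.2 hab.le
    exact map_mem_closure (f := fun t : ℝ => x + t • e) hcont hb fun t ht => (hmem t).2 ht
  · rw [add_sub_assoc, ← sub_smul, hmem]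
    constructor <;> linarith

theorem setIntegral_line_fderiv {g : E → ℝ} (hg : ContDiff ℝ 1 g) {a b : ℝ} (hab : a < b)
    (hS : {t : ℝ | x + t • e ∈ Ω} = Ioo a b) :
    ∫ t in {t : ℝ | x + t • e ∈ Ω}, fderiv ℝ g (x + t • e) e = g (x + b • e) - g (x + a • e) := by
  have hcont : Continuous fun t : ℝ => fderiv ℝ g (x + t • e) e :=
    ((hg.continuous_fderiv one_ne_zero).comp (by fun_prop)).clm_apply continuous_const
  have hderiv (t : ℝ) : HasDerivAt (fun t : ℝ => g (x + t • e)) (fderiv ℝ g (x + t • e) e) t := by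
    have hline : HasDerivAt (fun t : ℝ => x + t • e) e t := by
      simpa using ((hasDerivAt_id t).smul_const e).const_add x
    exact ((hg.differentiable one_ne_zero) _).hasFDerivAt.comp_hasDerivAt t hline
  rw [hS, ← integral_Ioc_eq_integral_Ioo, ← intervalIntegral.integral_of_le hab.le]
  exact intervalIntegral.integral_eq_sub_of_hasDerivAt (fun t _ => hderiv t)
    (hcont.intervalIntegrable a b)

theorem exists_setIntegral_line_fderiv_eq_sub (hΩo : IsOpen Ω) (hΩb : Bornology.IsBounded Ω)
    (hΩc : Convex ℝ Ω) (he : e ≠ 0) (hne : {t : ℝ | x + t • e ∈ Ω}.Nonempty)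
    {g : E → ℝ} (hg : ContDiff ℝ 1 g) :
    ∃ a b : ℝ, x + b • e ∈ upperBoundary Ω e ∧ x + a • e ∈ upperBoundary Ω (-e) ∧
      ∫ t in {t : ℝ | x + t • e ∈ Ω}, fderiv ℝ g (x + t • e) e =
        g (x + b • e) - g (x + a • e) := by
  obtain ⟨a, b, hab, hS⟩ := exists_line_inter_eq_Ioo hΩo hΩb hΩc he hne
  have hSneg : {t : ℝ | x + t • -e ∈ Ω} = Ioo (-b) (-a) := by
    rw [← neg_Ioo, ← hS]
    ext
    simp
  refine ⟨a, b, add_smul_mem_upperBoundary hΩo hab hS, ?_, setIntegral_line_fderiv hg hab hS⟩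
  simpa using add_smul_mem_upperBoundary hΩo (neg_lt_neg hab) hSneg

end UpperBoundary

section DirectionalFlux

variable {m : ℕ} {Ω : Set (𝔼(m + 1))}

/-- The splitting of a point of `ℝᵐ⁺¹` into its first coordinate and the remaining ones. -/
noncomputable def splitHead (m : ℕ) : 𝔼(m + 1) ≃ᵐ ℝ × (Fin m → ℝ) :=
  (MeasurableEquiv.toLp 2 (Fin (m + 1) → ℝ)).symm.trans
    (MeasurableEquiv.piFinSuccAbove (fun _ => ℝ) 0)

theorem measurePreserving_splitHead : MeasurePreserving (splitHead m) :=
  (volume_preserving_piFinSuccAbove (fun _ => ℝ) 0).comp (PiLp.volume_preserving_ofLp _)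

theorem splitHead_add_smul_single (x : 𝔼(m + 1)) (t : ℝ) :
    splitHead m (x + t • EuclideanSpace.single 0 1) =
      ((splitHead m x).1 + t, (splitHead m x).2) := by
  ext i
  · simp [splitHead]
  · simp [splitHead, Fin.tail]

theorem splitHead_symm_eq (t : ℝ) (y : Fin m → ℝ) :
    (splitHead m).symm (t, y) =
      (splitHead m).symm (0, y) + t • EuclideanSpace.single 0 1 := by
  rw [MeasurableEquiv.symm_apply_eq, splitHead_add_smul_single]
  simp

theorem exists_add_smul_single_of_splitHead_snd_eq {x y : 𝔼(m + 1)}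
    (h : (splitHead m x).2 = (splitHead m y).2) :
    ∃ r : ℝ, y = x + r • EuclideanSpace.single 0 1 := by
  refine ⟨(splitHead m y).1 - (splitHead m x).1, (splitHead m).injective ?_⟩
  rw [splitHead_add_smul_single, h, add_sub_cancel]

theorem lipschitzWith_one_splitHead_snd :
    LipschitzWith 1 fun x : 𝔼(m + 1) => (splitHead m x).2 := by
  refine LipschitzWith.of_dist_le_mul fun x y => ?_
  rw [NNReal.coe_one, one_mul, dist_pi_le_iff dist_nonneg]
  intro j
  simpa [dist_eq_norm, splitHead, Fin.tail] using PiLp.norm_apply_le (x - y) j.succ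

theorem setIntegral_eq_integral_integral_splitHead (hΩo : IsOpen Ω) {h : 𝔼(m + 1) → ℝ}
    (hh : IntegrableOn h Ω) :
    ∫ x in Ω, h x =
      ∫ y, ∫ t in {t | (splitHead m).symm (t, y) ∈ Ω}, h ((splitHead m).symm (t, y)) := by
  have hsymm := (measurePreserving_splitHead (m := m)).symm
  have hint : Integrable fun z => Ω.indicator h ((splitHead m).symm z) :=
    hsymm.integrable_comp_of_integrable (hh.integrable_indicator hΩo.measurableSet)
  rw [← integral_indicator hΩo.measurableSet,
    ← hsymm.integral_comp (splitHead m).symm.measurableEmbedding, Measure.volume_eq_prod,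
    integral_prod_symm _ hint]
  refine integral_congr_ae (Eventually.of_forall fun y => ?_)
  have hmeas : MeasurableSet {t | (splitHead m).symm (t, y) ∈ Ω} :=
    (splitHead m).symm.measurable.comp (by fun_prop : Measurable fun t : ℝ => (t, y))
      hΩo.measurableSet
  exact integral_indicator hmeas

theorem integrableOn_of_continuous_of_isBounded {n : ℕ} {D : Set (𝔼 n)} {g : 𝔼 n → ℝ}
    (hg : Continuous g) (hD : Bornology.IsBounded D) : IntegrableOn g D :=
  (hg.locallyIntegrable.integrableOn_isCompact hD.isCompact_closure).mono_set subset_closure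

theorem exists_measurable_setLIntegral_splitHead_snd_le (hΩo : IsOpen Ω) (hΩc : Convex ℝ Ω)
    {e : 𝔼(m + 1)} (he : e = EuclideanSpace.single 0 1 ∨ e = -EuclideanSpace.single 0 1)
    {G : 𝔼(m + 1) → ℝ≥0∞} (hG : Measurable G) :
    ∃ a : (Fin m → ℝ) → ℝ≥0∞, (∀ x ∈ upperBoundary Ω e, a (splitHead m x).2 = G x) ∧
      Measurable a ∧ ∫⁻ y, a y ≤ ∫⁻ x in upperBoundary Ω e, G x ∂μH[(m : ℝ)] := by
  have hA := measurableSet_upperBoundary hΩo e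
  have hinj : InjOn (fun x => (splitHead m x).2) (upperBoundary Ω e) :=
    injOn_upperBoundary hΩo hΩc fun x y hxy => by
      obtain ⟨r, hr⟩ := exists_add_smul_single_of_splitHead_snd_eq hxy
      rcases he with rfl | rfl
      exacts [⟨r, hr⟩, ⟨-r, by rwa [smul_neg, neg_smul, neg_neg]⟩]
  obtain ⟨a, ha, haG, hle⟩ := exists_measurable_setLIntegral_image_le
    lipschitzWith_one_splitHead_snd m.cast_nonneg hA hinj hG
  have himage := hA.image_of_continuousOn_injOn
    (lipschitzWith_one_splitHead_snd (m := m)).continuous.continuousOn hinj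
  refine ⟨indicator _ a, fun x hx => ?_, ha.indicator himage, ?_⟩
  · rw [indicator_of_mem (mem_image_of_mem _ hx), haG x hx]
  · rwa [lintegral_indicator himage, ← hausdorffMeasure_pi_fin]

theorem enorm_setIntegral_slice_fderiv_le (hΩo : IsOpen Ω) (hΩb : Bornology.IsBounded Ω)
    (hΩc : Convex ℝ Ω) {g : 𝔼(m + 1) → ℝ} (hg : ContDiff ℝ 1 g) {a b : (Fin m → ℝ) → ℝ≥0∞}
    (ha : ∀ x ∈ upperBoundary Ω (EuclideanSpace.single 0 1), a (splitHead m x).2 = ‖g x‖ₑ)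
    (hb : ∀ x ∈ upperBoundary Ω (-EuclideanSpace.single 0 1), b (splitHead m x).2 = ‖g x‖ₑ)
    (y : Fin m → ℝ) :
    ‖∫ t in {t | (splitHead m).symm (t, y) ∈ Ω},
      fderiv ℝ g ((splitHead m).symm (t, y)) (EuclideanSpace.single 0 1)‖ₑ ≤ a y + b y := by
  set e₀ : 𝔼(m + 1) := EuclideanSpace.single 0 1
  set x := (splitHead m).symm (0, y)
  have hx (t : ℝ) : (splitHead m).symm (t, y) = x + t • e₀ := splitHead_symm_eq t y
  have hxy (t : ℝ) : (splitHead m (x + t • e₀)).2 = y := by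
    rw [splitHead_add_smul_single, MeasurableEquiv.apply_symm_apply]
  simp only [hx]
  rcases {t : ℝ | x + t • e₀ ∈ Ω}.eq_empty_or_nonempty with hempty | hne
  · simp [hempty]
  · obtain ⟨s, t, ht, hs, heq⟩ :=
      exists_setIntegral_line_fderiv_eq_sub hΩo hΩb hΩc (by simp [e₀]) hne hg
    rw [heq, ← hxy t, ha _ ht, hxy, ← hxy s, hb _ hs]
    exact enorm_sub_le

theorem enorm_setIntegral_fderiv_single_zero_le (hΩo : IsOpen Ω) (hΩb : Bornology.IsBounded Ω)
    (hΩc : Convex ℝ Ω) {g : 𝔼(m + 1) → ℝ} (hg : ContDiff ℝ 1 g) :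
    ‖∫ x in Ω, fderiv ℝ g x (EuclideanSpace.single 0 1)‖ₑ ≤
      ∫⁻ x in frontier Ω, ‖g x‖ₑ ∂μH[(m : ℝ)] := by
  set e₀ : 𝔼(m + 1) := EuclideanSpace.single 0 1
  have hgm : Measurable fun x => ‖g x‖ₑ := hg.continuous.measurable.enorm
  obtain ⟨a, haG, ha, hale⟩ :=
    exists_measurable_setLIntegral_splitHead_snd_le hΩo hΩc (e := e₀) (Or.inl rfl) hgm
  obtain ⟨b, hbG, -, hble⟩ :=
    exists_measurable_setLIntegral_splitHead_snd_le hΩo hΩc (e := -e₀) (Or.inr rfl) hgm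
  have hint : IntegrableOn (fun x => fderiv ℝ g x e₀) Ω :=
    integrableOn_of_continuous_of_isBounded
      ((hg.continuous_fderiv one_ne_zero).clm_apply continuous_const) hΩb
  calc ‖∫ x in Ω, fderiv ℝ g x e₀‖ₑ ≤ ∫⁻ y, a y + b y := by
        rw [setIntegral_eq_integral_integral_splitHead hΩo hint]
        exact (enorm_integral_le_lintegral_enorm _).trans (lintegral_mono fun y =>
          enorm_setIntegral_slice_fderiv_le hΩo hΩb hΩc hg haG hbG y)
    _ ≤ (∫⁻ x in upperBoundary Ω e₀, ‖g x‖ₑ ∂μH[(m : ℝ)]) +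
          ∫⁻ x in upperBoundary Ω (-e₀), ‖g x‖ₑ ∂μH[(m : ℝ)] := by
        rw [lintegral_add_left ha]
        exact add_le_add hale hble
    _ = ∫⁻ x in upperBoundary Ω e₀ ∪ upperBoundary Ω (-e₀), ‖g x‖ₑ ∂μH[(m : ℝ)] :=
        (lintegral_union (measurableSet_upperBoundary hΩo _)
          (disjoint_upperBoundary_neg hΩo hΩc _)).symm
    _ ≤ ∫⁻ x in frontier Ω, ‖g x‖ₑ ∂μH[(m : ℝ)] :=
        lintegral_mono_set (union_subset inter_subset_left inter_subset_left)

theorem enorm_setIntegral_fderiv_le_of_norm_eq_one (hΩo : IsOpen Ω) (hΩb : Bornology.IsBounded Ω)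
    (hΩc : Convex ℝ Ω) {g : 𝔼(m + 1) → ℝ} (hg : ContDiff ℝ 1 g) {e : 𝔼(m + 1)}
    (he : ‖e‖ = 1) :
    ‖∫ x in Ω, fderiv ℝ g x e‖ₑ ≤ ∫⁻ x in frontier Ω, ‖g x‖ₑ ∂μH[(m : ℝ)] := by
  set e₀ : 𝔼(m + 1) := EuclideanSpace.single 0 1
  set U : 𝔼(m + 1) ≃ₗᵢ[ℝ] 𝔼(m + 1) := (ℝ ∙ (e₀ - e))ᗮ.reflection
  have hU : U e₀ = e := Submodule.reflection_sub (by simp [e₀, he])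
  have hfderiv (y : 𝔼(m + 1)) : fderiv ℝ (g ∘ U) y e₀ = fderiv ℝ g (U y) e := by
    have := U.toContinuousLinearEquiv.comp_right_fderiv (f := g) (x := y)
    exact (DFunLike.congr_fun this e₀).trans (congrArg _ hU)
  have hfrontier : frontier (U ⁻¹' Ω) = U ⁻¹' frontier Ω :=
    (U.toHomeomorph.preimage_frontier Ω).symm
  have hflux : ‖∫ y in U ⁻¹' Ω, fderiv ℝ (g ∘ U) y e₀‖ₑ ≤
      ∫⁻ y in frontier (U ⁻¹' Ω), ‖g (U y)‖ₑ ∂μH[(m : ℝ)] :=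
    enorm_setIntegral_fderiv_single_zero_le (hΩo.preimage U.continuous)
      (U.antilipschitz.isBounded_preimage hΩb) (hΩc.linear_preimage U.toLinearMap)
      (hg.comp U.contDiff)
  simp only [hfderiv, hfrontier] at hflux
  rw [U.measurePreserving.setIntegral_preimage_emb U.toMeasurableEquiv.measurableEmbedding
    fun x => fderiv ℝ g x e] at hflux
  refine hflux.trans_eq ?_
  exact (U.toIsometryEquiv.measurePreserving_hausdorffMeasure m).setLIntegral_comp_preimage_emb
    U.toMeasurableEquiv.measurableEmbedding (fun x => ‖g x‖ₑ) (frontier Ω)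

theorem integrableOn_frontier {f : 𝔼(m + 1) → ℝ} (hΩo : IsOpen Ω) (hΩb : Bornology.IsBounded Ω)
    (hΩc : Convex ℝ Ω) (hf : ContinuousOn f (frontier Ω)) :
    IntegrableOn f (frontier Ω) μH[(m : ℝ)] := by
  have hcompact : IsCompact (frontier Ω) :=
    hΩb.isCompact_closure.of_isClosed_subset isClosed_frontier frontier_subset_closure
  obtain ⟨C, hC⟩ := hcompact.exists_bound_of_continuousOn hf
  exact IntegrableOn.of_bound (hausdorffMeasure_frontier_lt_top hΩo hΩb hΩc)
    (hf.aestronglyMeasurable measurableSet_frontier) C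
    (ae_restrict_of_forall_mem measurableSet_frontier hC)

theorem setIntegral_fderiv_le (hΩo : IsOpen Ω) (hΩb : Bornology.IsBounded Ω) (hΩc : Convex ℝ Ω)
    {g : 𝔼(m + 1) → ℝ} (hg : ContDiff ℝ 1 g) (c : 𝔼(m + 1)) :
    ∫ x in Ω, fderiv ℝ g x c ≤ ‖c‖ * ∫ x in frontier Ω, |g x| ∂μH[(m : ℝ)] := by
  rcases eq_or_ne c 0 with rfl | hc
  · simp
  have hint := integrableOn_frontier hΩo hΩb hΩc hg.continuous.continuousOn
  have hunit := enorm_setIntegral_fderiv_le_of_norm_eq_one hΩo hΩb hΩc hg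
    (norm_smul_inv_norm (𝕜 := ℝ) hc)
  have hreal : ‖∫ x in Ω, fderiv ℝ g x ((‖c‖⁻¹ : ℝ) • c)‖ ≤
      ∫ x in frontier Ω, ‖g x‖ ∂μH[(m : ℝ)] := by
    rw [integral_norm_eq_lintegral_enorm hint.aestronglyMeasurable, ← toReal_enorm]
    exact ENNReal.toReal_mono hint.2.ne hunit
  simp only [map_smul, smul_eq_mul, integral_const_mul] at hreal
  rw [← inv_mul_le_iff₀ (norm_pos_iff.2 hc)]
  exact (le_abs_self _).trans hreal

end DirectionalFlux

/-! ### The divergence bound -/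

section Divergence

/-- The divergence of a vector field on `ℝⁿ`. -/
noncomputable def divergence {n : ℕ} (X : 𝔼 n → 𝔼 n) (x : 𝔼 n) : ℝ :=
  ∑ i, fderiv ℝ (fun y => X y i) x (EuclideanSpace.single i 1)

variable {n : ℕ} {X Y : 𝔼 n → 𝔼 n}

theorem contDiff_apply_of_contDiff (hX : ContDiff ℝ 1 X) (i : Fin n) :
    ContDiff ℝ 1 fun y => X y i :=
  (contDiff_euclidean.1 hX) i

theorem continuous_divergence (hX : ContDiff ℝ 1 X) : Continuous (divergence X) :=
  continuous_finsetSum _ fun i _ =>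
    ((contDiff_apply_of_contDiff hX i).continuous_fderiv one_ne_zero).clm_apply continuous_const

theorem divergence_sub (hX : ContDiff ℝ 1 X) (hY : ContDiff ℝ 1 Y) (x : 𝔼 n) :
    divergence (fun y => X y - Y y) x = divergence X x - divergence Y x := by
  have hdiff {Z : 𝔼 n → 𝔼 n} (hZ : ContDiff ℝ 1 Z) (i : Fin n) :
      DifferentiableAt ℝ (fun y => Z y i) x :=
    (contDiff_apply_of_contDiff hZ i).differentiable one_ne_zero x
  simp only [divergence, PiLp.sub_apply, ← Finset.sum_sub_distrib]
  exact Finset.sum_congr rfl fun i _ => by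
    rw [fderiv_fun_sub (hdiff hX i) (hdiff hY i), sub_apply]

theorem divergence_sum_smul_const {ι : Type*} [Fintype ι] {ψ : ι → 𝔼 n → ℝ}
    (hψ : ∀ k, ContDiff ℝ 1 (ψ k)) (c : ι → 𝔼 n) (x : 𝔼 n) :
    divergence (fun y => ∑ k, ψ k y • c k) x = ∑ k, fderiv ℝ (ψ k) x (c k) := by
  have hcoord (i : Fin n) : fderiv ℝ (fun y => (∑ k, ψ k y • c k) i) x
      (EuclideanSpace.single i 1) =
        ∑ k, fderiv ℝ (ψ k) x (c k i • EuclideanSpace.single i 1) := by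
    have hderiv : HasFDerivAt (fun y => ∑ k, ψ k y * c k i)
        (∑ k, c k i • fderiv ℝ (ψ k) x) x :=
      HasFDerivAt.fun_sum fun k _ =>
        ((hψ k).differentiable one_ne_zero x).hasFDerivAt.mul_const (c k i)
    have hfun : (fun y => (∑ k, ψ k y • c k) i) = fun y => ∑ k, ψ k y * c k i := by
      ext y
      simp
    rw [hfun, hderiv.fderiv]
    simp
  have hbasis (v : 𝔼 n) : ∑ i, v i • EuclideanSpace.single i (1 : ℝ) = v := by
    simpa using (EuclideanSpace.basisFun (Fin n) ℝ).sum_repr v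
  simp only [divergence, hcoord]
  rw [Finset.sum_comm]
  exact Finset.sum_congr rfl fun k _ => by rw [← map_sum, hbasis]

theorem exists_contDiff_partition_norm_sub_le {E F : Type*} [NormedAddCommGroup E]
    [NormedSpace ℝ E] [FiniteDimensional ℝ E] [NormedAddCommGroup F] {K : Set E}
    (hK : IsCompact K) {X : E → F} (hX : Continuous X) {η : ℝ} (hη : 0 < η) :
    ∃ (t : Finset F) (ψ : t → E → ℝ), (∀ c, ContDiff ℝ 1 (ψ c)) ∧ (∀ c x, 0 ≤ ψ c x) ∧
      (∀ x ∈ K, ∑ c, ψ c x = 1) ∧ ∀ c x, ψ c x ≠ 0 → ‖X x - c‖ ≤ η := by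
  obtain ⟨t, -, htfin, hcover⟩ := (hK.image hX).finite_cover_balls hη
  lift t to Finset F using htfin
  obtain ⟨ψ, hψ⟩ := SmoothPartitionOfUnity.exists_isSubordinate (modelWithCornersSelf ℝ E)
    hK.isClosed (fun c : t => X ⁻¹' ball c.1 η) (fun c => isOpen_ball.preimage hX) (by
      simpa [← preimage_iUnion, iUnion_subtype, image_subset_iff] using hcover)
  refine ⟨t, fun c => ψ c, fun c => ?_, ψ.nonneg, fun x hx => ?_, fun c x hx => ?_⟩
  · exact (ψ c).contMDiff.contDiff.of_le (by simp)
  · rw [← finsum_eq_sum_of_fintype, ψ.sum_eq_one hx]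
  · exact (mem_ball_iff_norm.1 (hψ c (subset_tsupport _ hx))).le

theorem sum_mul_le_of_forall_ne_zero {ι : Type*} {s : Finset ι} {w a : ι → ℝ} {M : ℝ}
    (hw : ∀ i ∈ s, 0 ≤ w i) (hsum : ∑ i ∈ s, w i = 1) (ha : ∀ i ∈ s, w i ≠ 0 → a i ≤ M) :
    ∑ i ∈ s, w i * a i ≤ M := by
  calc ∑ i ∈ s, w i * a i ≤ ∑ i ∈ s, w i * M := Finset.sum_le_sum fun i hi => by
        rcases eq_or_ne (w i) 0 with h0 | h0
        · simp [h0]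
        · exact mul_le_mul_of_nonneg_left (ha i hi h0) (hw i hi)
    _ = M := by rw [← Finset.sum_mul, hsum, one_mul]

theorem exists_contDiff_sum_smul_approx {E F : Type*} [NormedAddCommGroup E] [NormedSpace ℝ E]
    [FiniteDimensional ℝ E] [NormedAddCommGroup F] [NormedSpace ℝ F] {K : Set E}
    (hK : IsCompact K) {X : E → F} (hX : Continuous X) {η : ℝ} (hη : 0 < η) :
    ∃ (t : Finset F) (ψ : t → E → ℝ), (∀ c, ContDiff ℝ 1 (ψ c)) ∧ (∀ c x, 0 ≤ ψ c x) ∧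
      (∀ x ∈ K, ‖X x - ∑ c, ψ c x • c.1‖ ≤ η) ∧
      ∀ x ∈ K, ∑ c, ‖c.1‖ * ψ c x ≤ ‖X x‖ + η := by
  obtain ⟨t, ψ, hψ, hψ0, hsum, hψη⟩ := exists_contDiff_partition_norm_sub_le hK hX hη
  refine ⟨t, ψ, hψ, hψ0, fun x hx => ?_, fun x hx => ?_⟩
  · have hXsum : X x - ∑ c, ψ c x • c.1 = ∑ c, ψ c x • (X x - c) := by
      simp only [smul_sub, Finset.sum_sub_distrib, ← Finset.sum_smul, hsum x hx, one_smul]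
    rw [hXsum]
    refine (norm_sum_le _ _).trans ?_
    simp only [norm_smul, Real.norm_of_nonneg (hψ0 _ x)]
    exact sum_mul_le_of_forall_ne_zero (fun c _ => hψ0 c x) (hsum x hx) fun c _ => hψη c x
  · simp only [mul_comm ‖_‖]
    refine sum_mul_le_of_forall_ne_zero (fun c _ => hψ0 c x) (hsum x hx) fun c _ hc => ?_
    exact (norm_le_norm_add_norm_sub _ _).trans (add_le_add_right (hψη c x hc) _)

end Divergence

section DivergenceFlux

variable {m : ℕ} {Ω : Set (𝔼(m + 1))} {X : 𝔼(m + 1) → 𝔼(m + 1)}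

theorem setIntegral_divergence_le_of_norm_le (hΩo : IsOpen Ω) (hΩb : Bornology.IsBounded Ω)
    (hΩc : Convex ℝ Ω) (hX : ContDiff ℝ 1 X) {η : ℝ} (hη : ∀ x ∈ frontier Ω, ‖X x‖ ≤ η) :
    ∫ x in Ω, divergence X x ≤ (m + 1) * (η * μH[(m : ℝ)].real (frontier Ω)) := by
  have hcoord (i : Fin (m + 1)) :
      ∫ x in Ω, fderiv ℝ (fun y => X y i) x (EuclideanSpace.single i 1) ≤
        η * μH[(m : ℝ)].real (frontier Ω) := by
    have hXi := contDiff_apply_of_contDiff hX i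
    have hint := (integrableOn_frontier hΩo hΩb hΩc hXi.continuous.continuousOn).abs
    refine (setIntegral_fderiv_le hΩo hΩb hΩc hXi _).trans ?_
    rw [PiLp.norm_single, norm_one, one_mul, mul_comm, ← smul_eq_mul, ← setIntegral_const]
    exact setIntegral_mono_on hint
      (integrableOn_frontier hΩo hΩb hΩc continuousOn_const) measurableSet_frontier
      fun x hx => (PiLp.norm_apply_le (X x) i).trans (hη x hx)
  simp only [divergence]
  rw [integral_finsetSum _ fun i _ => ?_]
  · simpa using Finset.sum_le_card_nsmul Finset.univ _ _ fun i _ => hcoord i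
  · exact integrableOn_of_continuous_of_isBounded
      (((contDiff_apply_of_contDiff hX i).continuous_fderiv one_ne_zero).clm_apply
        continuous_const) hΩb

theorem setIntegral_divergence_sum_smul_const_le (hΩo : IsOpen Ω) (hΩb : Bornology.IsBounded Ω)
    (hΩc : Convex ℝ Ω) {ι : Type*} [Fintype ι] {ψ : ι → 𝔼(m + 1) → ℝ}
    (hψ : ∀ k, ContDiff ℝ 1 (ψ k)) (hψ0 : ∀ k x, 0 ≤ ψ k x) (c : ι → 𝔼(m + 1)) :
    ∫ x in Ω, divergence (fun y => ∑ k, ψ k y • c k) x ≤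
      ∫ x in frontier Ω, ∑ k, ‖c k‖ * ψ k x ∂μH[(m : ℝ)] := by
  simp only [divergence_sum_smul_const hψ]
  rw [integral_finsetSum _ fun k _ => ?_, integral_finsetSum _ fun k _ => ?_]
  · refine Finset.sum_le_sum fun k _ => (setIntegral_fderiv_le hΩo hΩb hΩc (hψ k) (c k)).trans_eq ?_
    simp only [abs_of_nonneg (hψ0 k _), integral_const_mul]
  · exact integrableOn_frontier hΩo hΩb hΩc (continuous_const.mul (hψ k).continuous).continuousOn
  · exact integrableOn_of_continuous_of_isBounded
      (((hψ k).continuous_fderiv one_ne_zero).clm_apply continuous_const) hΩb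

theorem setIntegral_divergence_le_add (hΩo : IsOpen Ω) (hΩb : Bornology.IsBounded Ω)
    (hΩc : Convex ℝ Ω) (hX : ContDiff ℝ 1 X) {η : ℝ} (hη : 0 < η) :
    ∫ x in Ω, divergence X x ≤ (∫ x in frontier Ω, ‖X x‖ ∂μH[(m : ℝ)]) +
      (m + 2) * (η * μH[(m : ℝ)].real (frontier Ω)) := by
  obtain ⟨t, ψ, hψ, hψ0, hXZ, hnorm⟩ :=
    exists_contDiff_sum_smul_approx hΩb.isCompact_closure hX.continuous hη
  set Z : 𝔼(m + 1) → 𝔼(m + 1) := fun x => ∑ c, ψ c x • c.1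
  have hZ : ContDiff ℝ 1 Z := ContDiff.sum fun c _ => (hψ c).smul contDiff_const
  have hrem := setIntegral_divergence_le_of_norm_le hΩo hΩb hΩc (hX.sub hZ) fun x hx =>
    hXZ x (frontier_subset_closure hx)
  have hintX := integrableOn_frontier hΩo hΩb hΩc hX.continuous.norm.continuousOn
  have hintη := integrableOn_frontier hΩo hΩb hΩc (continuousOn_const (c := η))
  have hmain : ∫ x in Ω, divergence Z x ≤ (∫ x in frontier Ω, ‖X x‖ ∂μH[(m : ℝ)]) +
      η * μH[(m : ℝ)].real (frontier Ω) := by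
    refine (setIntegral_divergence_sum_smul_const_le hΩo hΩb hΩc hψ hψ0 _).trans ?_
    rw [mul_comm, ← smul_eq_mul, ← setIntegral_const, ← integral_add hintX hintη]
    refine setIntegral_mono_on ?_ (hintX.add hintη) measurableSet_frontier fun x hx =>
      hnorm x (frontier_subset_closure hx)
    exact integrableOn_frontier hΩo hΩb hΩc
      (continuous_finsetSum _ fun c _ => continuous_const.mul (hψ c).continuous).continuousOn
  have hsplit : ∫ x in Ω, divergence (fun y => X y - Z y) x =
      (∫ x in Ω, divergence X x) - ∫ x in Ω, divergence Z x := by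
    simp only [divergence_sub hX hZ]
    exact integral_sub (integrableOn_of_continuous_of_isBounded (continuous_divergence hX) hΩb)
      (integrableOn_of_continuous_of_isBounded (continuous_divergence hZ) hΩb)
  linarith

theorem setIntegral_divergence_le (hΩo : IsOpen Ω) (hΩb : Bornology.IsBounded Ω)
    (hΩc : Convex ℝ Ω) (hX : ContDiff ℝ 1 X) :
    ∫ x in Ω, divergence X x ≤ ∫ x in frontier Ω, ‖X x‖ ∂μH[(m : ℝ)] := by
  have hlim : Tendsto (fun η => (∫ x in frontier Ω, ‖X x‖ ∂μH[(m : ℝ)]) +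
      (m + 2) * (η * μH[(m : ℝ)].real (frontier Ω))) (𝓝[>] 0)
      (𝓝 ((∫ x in frontier Ω, ‖X x‖ ∂μH[(m : ℝ)]) +
        (m + 2) * (0 * μH[(m : ℝ)].real (frontier Ω)))) :=
    (Continuous.tendsto (by fun_prop) 0).mono_left nhdsWithin_le_nhds
  rw [zero_mul, mul_zero, add_zero] at hlim
  exact ge_of_tendsto hlim (eventually_mem_nhdsWithin.mono fun η hη =>
    setIntegral_divergence_le_add hΩo hΩb hΩc hX hη)

end DivergenceFlux

/-! ### Pointwise subharmonic functions are weakly subharmonic -/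

section WeakSubharmonicity

theorem tendsto_second_difference {E : Type*} [NormedAddCommGroup E] [NormedSpace ℝ E] {f : E → ℝ}
    {y : E} (hf : ∀ᶠ z in 𝓝 y, DifferentiableAt ℝ f z)
    (hf' : DifferentiableAt ℝ (fun z => fderiv ℝ f z) y) (e : E) :
    Tendsto (fun h : ℝ => (f (y + h • e) + f (y - h • e) - 2 * f y) / h ^ 2) (𝓝[>] 0)
      (𝓝 (fderiv ℝ (fun z => fderiv ℝ f z e) y e)) := by
  have hline (c : ℝ) : HasDerivAt (fun h : ℝ => y + (c * h) • e) (c • e) 0 := by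
    simpa using (((hasDerivAt_id (0 : ℝ)).const_mul c).smul_const e).const_add y
  have hline' (c : ℝ) : Tendsto (fun h : ℝ => y + (c * h) • e) (𝓝 0) (𝓝 y) := by
    simpa using (hline c).continuousAt.tendsto
  have hfirst (c : ℝ) : ∀ᶠ h : ℝ in 𝓝 0, HasDerivAt (fun h : ℝ => f (y + (c * h) • e))
      (c * fderiv ℝ f (y + (c * h) • e) e) h := by
    filter_upwards [(hline' c).eventually hf] with h hh
    simpa [Function.comp_def] using hh.hasFDerivAt.comp_hasDerivAt h
      ((((hasDerivAt_id h).const_mul c).smul_const e).const_add y)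
  have hsecond (c : ℝ) : HasDerivAt (fun h : ℝ => fderiv ℝ f (y + (c * h) • e) e)
      (c * fderiv ℝ (fun z => fderiv ℝ f z e) y e) 0 := by
    have hy : DifferentiableAt ℝ (fun z => fderiv ℝ f z e) (y + (c * 0) • e) := by
      simpa using hf'.clm_apply (differentiableAt_const e)
    simpa [Function.comp_def] using hy.hasFDerivAt.comp_hasDerivAt (0 : ℝ) (hline c)
  have hcont (c : ℝ) : Tendsto (fun h : ℝ => f (y + (c * h) • e)) (𝓝[>] 0) (𝓝 (f y)) :=
    (hf.self_of_nhds.continuousAt.tendsto.comp (hline' c)).mono_left nhdsWithin_le_nhds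
  refine HasDerivAt.lhopital_zero_nhdsGT (f' := fun h => fderiv ℝ f (y + h • e) e -
    fderiv ℝ f (y - h • e) e) (g' := fun h => 2 * h) ?_ (.of_forall fun h => by
      simpa using hasDerivAt_pow 2 h) (eventually_mem_nhdsWithin.mono fun h hh => by
      simpa using (mem_Ioi.1 hh).ne') ?_ ?_ ?_
  · filter_upwards [nhdsWithin_le_nhds (hfirst 1), nhdsWithin_le_nhds (hfirst (-1))] with h hp hm
    simpa [sub_eq_add_neg] using (hp.fun_add hm).sub_const (2 * f y)
  · simpa [sub_eq_add_neg, two_mul] using ((hcont 1).add (hcont (-1))).sub_const (2 * f y)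
  · simpa using ((continuous_pow 2).tendsto' (0 : ℝ) 0 (by simp)).mono_left nhdsWithin_le_nhds
  · have hslope := ((hsecond 1).fun_sub (hsecond (-1))).tendsto_slope_zero_right.const_mul 2⁻¹
    convert hslope using 2 with h
    · simp [sub_eq_add_neg]
      ring
    · ring

variable {n : ℕ} {Ω : Set (𝔼 n)} {f φ : 𝔼 n → ℝ} {c M : ℝ}

theorem tendsto_discreteLaplacian {y : 𝔼 n} (hf : ∀ᶠ z in 𝓝 y, DifferentiableAt ℝ f z)
    (hdf : DifferentiableAt ℝ (fun z => fderiv ℝ f z) y) :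
    Tendsto (fun h => discreteLaplacian h f y) (𝓝[>] 0) (𝓝 (laplacian f y)) := by
  simp only [discreteLaplacian_eq_sum_smul]
  exact tendsto_finsetSum _ fun i _ => tendsto_second_difference hf hdf _

/-- The sup-convolution of `f` with the paraboloid `c‖·‖²`. It approximates `f` from above as
`c → ∞`, is semiconvex, so that its difference quotients are bounded below, and inherits
subharmonicity from `f`. -/
noncomputable def supConvolution (c : ℝ) (f : 𝔼 n → ℝ) (x : 𝔼 n) : ℝ :=
  ⨆ y, (f y - c * ‖x - y‖ ^ 2)

theorem sub_le_of_abs_le (hc : 0 ≤ c) (hM : ∀ x, |f x| ≤ M) (x y : 𝔼 n) :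
    f y - c * ‖x - y‖ ^ 2 ≤ M :=
  (sub_le_self _ (by positivity)).trans (le_of_abs_le (hM y))

theorem bddAbove_range_sub (hc : 0 ≤ c) (hM : ∀ x, |f x| ≤ M) (x : 𝔼 n) :
    BddAbove (range fun y => f y - c * ‖x - y‖ ^ 2) :=
  ⟨M, forall_mem_range.2 (sub_le_of_abs_le hc hM x)⟩

theorem sub_le_supConvolution (hc : 0 ≤ c) (hM : ∀ x, |f x| ≤ M) (x y : 𝔼 n) :
    f y - c * ‖x - y‖ ^ 2 ≤ supConvolution c f x :=
  le_ciSup (bddAbove_range_sub hc hM x) y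

theorem le_supConvolution (hc : 0 ≤ c) (hM : ∀ x, |f x| ≤ M) (x : 𝔼 n) :
    f x ≤ supConvolution c f x := by
  simpa using sub_le_supConvolution hc hM x x

theorem abs_supConvolution_le (hc : 0 ≤ c) (hM : ∀ x, |f x| ≤ M) (x : 𝔼 n) :
    |supConvolution c f x| ≤ M :=
  abs_le.2 ⟨(neg_le_of_abs_le (hM x)).trans (le_supConvolution hc hM x),
    ciSup_le (sub_le_of_abs_le hc hM x)⟩

theorem measurable_supConvolution (hc : 0 ≤ c) (hM : ∀ x, |f x| ≤ M) :
    Measurable (supConvolution c f) :=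
  (lowerSemicontinuous_ciSup (bddAbove_range_sub hc hM) fun y =>
    (by fun_prop : Continuous fun x => f y - c * ‖x - y‖ ^ 2).lowerSemicontinuous).measurable

theorem exists_supConvolution_eq (hc : 0 < c) (hf : Continuous f) (hM : ∀ x, |f x| ≤ M) (x : 𝔼 n) :
    ∃ y, supConvolution c f x = f y - c * ‖x - y‖ ^ 2 := by
  have hnorm : Tendsto (fun y => ‖x - y‖) (cocompact (𝔼 n)) atTop := by
    exact tendsto_norm_cocompact_atTop.comp
      (Homeomorph.subLeft x).isClosedEmbedding.tendsto_cocompact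
  have hlim : Tendsto (fun y => f y - c * ‖x - y‖ ^ 2) (cocompact (𝔼 n)) atBot := by
    refine tendsto_atBot_mono (fun y => sub_le_sub_right (le_of_abs_le (hM y)) _) ?_
    simpa [sub_eq_add_neg] using tendsto_atBot_add_const_left _ M (tendsto_neg_atTop_atBot.comp
      (((tendsto_pow_atTop two_ne_zero).comp hnorm).const_mul_atTop hc))
  obtain ⟨y, hy⟩ := (by fun_prop : Continuous fun y => f y - c * ‖x - y‖ ^ 2).exists_forall_ge hlim
  exact ⟨y, (ciSup_le hy).antisymm (sub_le_supConvolution hc.le hM x y)⟩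

theorem mul_dist_sq_le_of_supConvolution_eq (hc : 0 ≤ c) (hM : ∀ x, |f x| ≤ M) {x y : 𝔼 n}
    (hy : supConvolution c f x = f y - c * ‖x - y‖ ^ 2) : c * dist x y ^ 2 ≤ f y - f x := by
  rw [dist_eq_norm]
  linarith [le_supConvolution hc hM x]

theorem discreteLaplacian_le_discreteLaplacian_supConvolution (hc : 0 ≤ c) (hM : ∀ x, |f x| ≤ M)
    {x y : 𝔼 n} (hy : supConvolution c f x = f y - c * ‖x - y‖ ^ 2) (h : ℝ) :
    discreteLaplacian h f y ≤ discreteLaplacian h (supConvolution c f) x := by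
  refine Finset.sum_le_sum fun i _ => div_le_div_of_nonneg_right ?_ (sq_nonneg h)
  have hplus := sub_le_supConvolution hc hM (x + .single i h) (y + .single i h)
  have hminus := sub_le_supConvolution hc hM (x - .single i h) (y - .single i h)
  rw [add_sub_add_right_eq_sub] at hplus
  rw [sub_sub_sub_cancel_right] at hminus
  linarith

theorem neg_le_discreteLaplacian_supConvolution (hc : 0 < c) (hf : Continuous f)
    (hM : ∀ x, |f x| ≤ M) {h : ℝ} (hh : h ≠ 0) (x : 𝔼 n) :
    -(n * (2 * c)) ≤ discreteLaplacian h (supConvolution c f) x := by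
  obtain ⟨y, hy⟩ := exists_supConvolution_eq hc hf hM x
  have hterm (i : Fin n) : -(2 * c) ≤ (supConvolution c f (x + .single i h) +
      supConvolution c f (x - .single i h) - 2 * supConvolution c f x) / h ^ 2 := by
    rw [le_div_iff₀ (by positivity), hy]
    have hplus := sub_le_supConvolution hc.le hM (x + .single i h) y
    have hminus := sub_le_supConvolution hc.le hM (x - .single i h) y
    rw [add_sub_right_comm] at hplus
    rw [sub_right_comm] at hminus
    have hparallelogram : ‖x - y + .single i h‖ ^ 2 + ‖x - y - .single i h‖ ^ 2 =
        2 * (‖x - y‖ ^ 2 + h ^ 2) := by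
      simpa [sq] using parallelogram_law_with_norm ℝ (x - y) (.single i h)
    linear_combination hplus + hminus + c * hparallelogram
  simpa [discreteLaplacian] using Finset.card_nsmul_le_sum Finset.univ _ _ fun i _ => hterm i

theorem discreteLaplacian_eq_zero_of_notMem_cthickening {h : ℝ} (hh : |h| ≤ 1) {x : 𝔼 n}
    (hx : x ∉ cthickening 1 (tsupport φ)) : discreteLaplacian h φ x = 0 := by
  have hzero (z : 𝔼 n) (hz : dist x z ≤ 1) : φ z = 0 :=
    image_eq_zero_of_notMem_tsupport fun hzφ => hx (mem_cthickening_of_dist_le x z 1 _ hzφ hz)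
  refine Finset.sum_eq_zero fun i _ => ?_
  rw [hzero _ (by simpa using hh), hzero _ (by simpa using hh), hzero x (by simp)]
  simp

theorem tendsto_integral_mul_discreteLaplacian (hφ : ContDiff ℝ 2 φ) (hφc : HasCompactSupport φ)
    {v : 𝔼 n → ℝ} (hv : Measurable v) (hM : ∀ x, |v x| ≤ M) :
    Tendsto (fun h => ∫ x, φ x * discreteLaplacian h v x) (𝓝[>] 0)
      (𝓝 (∫ x, v x * laplacian φ x)) := by
  have hint := integrable_comp_add_mul hφ.continuous hφc hv hM
  have hlap := continuous_laplacian hφ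
  have hlapc := hasCompactSupport_laplacian hφc
  obtain ⟨A, hA⟩ := hlap.bounded_above_of_compact_support hlapc
  have huniform := tendstoUniformly_mul_of_bounded (tendstoUniformly_discreteLaplacian hφ hφc)
    (G := fun _ => v) (fun s hs => .of_forall fun _ x => mem_uniformity_of_eq hs rfl) hA hM
  have key := tendsto_setIntegral_of_tendstoUniformly (μ := volume)
    (hφc.isCompact.cthickening (r := 1)).measure_lt_top.ne huniform
    (.of_forall fun h => (integrable_discreteLaplacian_mul hint h).integrableOn)
    (by simpa using (integrable_comp_add_mul hlap hlapc hv hM 0).integrableOn)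
  rw [setIntegral_eq_integral_of_forall_compl_eq_zero fun x hx => by
    rw [image_eq_zero_of_notMem_tsupport fun hxφ => hx (self_subset_cthickening _
      (tsupport_laplacian_subset φ hxφ)), zero_mul]] at key
  simp only [mul_comm (v _)]
  refine key.congr' ?_
  filter_upwards [Ioc_mem_nhdsGT one_pos] with h hh
  rw [← integral_discreteLaplacian_mul hint]
  refine setIntegral_eq_integral_of_forall_compl_eq_zero fun x hx => ?_
  rw [discreteLaplacian_eq_zero_of_notMem_cthickening (by rw [abs_of_pos hh.1]; exact hh.2) hx,
    zero_mul]

theorem integral_mul_laplacian_nonneg_of_discreteLaplacian {v : 𝔼 n → ℝ} {B : ℝ}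
    (hv : Measurable v) (hM : ∀ x, |v x| ≤ M)
    (hB : ∀ᶠ h in 𝓝[>] 0, ∀ x, -B ≤ discreteLaplacian h v x) (hφ : ContDiff ℝ 2 φ)
    (hφc : HasCompactSupport φ) (hφ0 : ∀ x, 0 ≤ φ x)
    (hsub : ∀ x ∈ tsupport φ, ∀ δ < 0, ∀ᶠ h in 𝓝[>] 0, δ < discreteLaplacian h v x) :
    0 ≤ ∫ x, v x * laplacian φ x := by
  have hint (h : ℝ) : Integrable fun x => φ x * discreteLaplacian h v x :=
    integrable_mul_discreteLaplacian (integrable_comp_add_mul hφ.continuous hφc hv hM) h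
  have hnegPart : Tendsto (fun h => ∫ x, min (φ x * discreteLaplacian h v x) 0) (𝓝[>] 0)
      (𝓝 (∫ _ : 𝔼 n, (0 : ℝ))) := by
    refine tendsto_integral_filter_of_dominated_convergence (fun x => φ x * |B|)
      (.of_forall fun h => ((hint h).inf (integrable_zero _ _ _)).aestronglyMeasurable) ?_
      ((hφ.continuous.integrable_of_hasCompactSupport hφc).mul_const _) (.of_forall fun x => ?_)
    · filter_upwards [hB] with h hh
      refine .of_forall fun x => ?_
      rw [Real.norm_of_nonpos (min_le_right _ _), neg_le]
      refine le_min ?_ (by simpa using mul_nonneg (hφ0 x) (abs_nonneg B))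
      rw [← mul_neg]
      exact mul_le_mul_of_nonneg_left ((neg_le_neg (le_abs_self B)).trans (hh x)) (hφ0 x)
    · by_cases hx : x ∈ tsupport φ
      · have hmin : Tendsto (fun h => min (discreteLaplacian h v x) 0) (𝓝[>] 0) (𝓝 0) :=
          tendsto_order.2 ⟨fun δ hδ => (hsub x hx δ hδ).mono fun h hh => lt_min hh hδ,
            fun δ hδ => .of_forall fun h => (min_le_right _ _).trans_lt hδ⟩
        simpa [mul_min_of_nonneg _ _ (hφ0 x)] using hmin.const_mul (φ x)
      · simp [image_eq_zero_of_notMem_tsupport hx]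
  rw [integral_zero] at hnegPart
  exact le_of_tendsto_of_tendsto' hnegPart (tendsto_integral_mul_discreteLaplacian hφ hφc hv hM)
    fun h => integral_mono ((hint h).inf (integrable_zero _ _ _)) (hint h) fun x => min_le_left _ _

theorem integral_supConvolution_mul_laplacian_nonneg (hc : 0 < c) (hf : Continuous f)
    (hM : ∀ x, |f x| ≤ M) (hφ : ContDiff ℝ 2 φ) (hφc : HasCompactSupport φ) (hφ0 : ∀ x, 0 ≤ φ x)
    (hsub : ∀ x ∈ tsupport φ, ∀ y, c * dist x y ^ 2 ≤ f y - f x →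
      ∀ δ < 0, ∀ᶠ h in 𝓝[>] 0, δ < discreteLaplacian h f y) :
    0 ≤ ∫ x, supConvolution c f x * laplacian φ x := by
  refine integral_mul_laplacian_nonneg_of_discreteLaplacian (measurable_supConvolution hc.le hM)
    (abs_supConvolution_le hc.le hM) (eventually_mem_nhdsWithin.mono fun h hh =>
      neg_le_discreteLaplacian_supConvolution hc hf hM (ne_of_gt hh)) hφ hφc hφ0
    fun x hx δ hδ => ?_
  obtain ⟨y, hy⟩ := exists_supConvolution_eq hc hf hM x
  filter_upwards [hsub x hx y (mul_dist_sq_le_of_supConvolution_eq hc.le hM hy) δ hδ] with h hh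
  exact hh.trans_le (discreteLaplacian_le_discreteLaplacian_supConvolution hc.le hM hy h)

theorem eventually_dist_lt_of_mul_dist_sq_le (hM : ∀ x, |f x| ≤ M) {δ : ℝ} (hδ : 0 < δ) :
    ∀ᶠ c in atTop, ∀ x y, c * dist x y ^ 2 ≤ f y - f x → dist x y < δ := by
  filter_upwards [eventually_gt_atTop (2 * M / δ ^ 2)] with c hc x y hxy
  rw [div_lt_iff₀ (by positivity)] at hc
  by_contra! hfar
  have hM0 : 0 ≤ M := (abs_nonneg _).trans (hM x)
  have hc0 : 0 < c := pos_of_mul_pos_left (hc.trans_le' (by positivity)) (by positivity)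
  have hsq : c * δ ^ 2 ≤ c * dist x y ^ 2 := by gcongr
  linarith [le_of_abs_le (hM y), neg_le_of_abs_le (hM x)]

theorem tendsto_supConvolution (hf : Continuous f) (hM : ∀ x, |f x| ≤ M) (x : 𝔼 n) :
    Tendsto (fun c => supConvolution c f x) atTop (𝓝 (f x)) := by
  rw [Metric.tendsto_nhds]
  intro ε hε
  obtain ⟨δ, hδ, hfδ⟩ := Metric.continuous_iff.1 hf x ε hε
  filter_upwards [eventually_dist_lt_of_mul_dist_sq_le hM hδ, eventually_gt_atTop 0]
    with c hnear hc
  obtain ⟨y, hy⟩ := exists_supConvolution_eq hc hf hM x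
  have hxy := hfδ y (dist_comm x y ▸ hnear x y (mul_dist_sq_le_of_supConvolution_eq hc.le hM hy))
  have hpenalty : 0 ≤ c * ‖x - y‖ ^ 2 := by positivity
  rw [Real.dist_eq, abs_lt] at hxy ⊢
  constructor <;> linarith [le_supConvolution hc.le hM x]

theorem integral_mul_laplacian_nonneg (hf : Continuous f) (hM : ∀ x, |f x| ≤ M) (hΩo : IsOpen Ω)
    (hf1 : ∀ x ∈ Ω, DifferentiableAt ℝ f x)
    (hf2 : ∀ x ∈ Ω, DifferentiableAt ℝ (fun y => fderiv ℝ f y) x)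
    (hsub : ∀ x ∈ Ω, 0 ≤ laplacian f x) (hφ : ContDiff ℝ 2 φ) (hφc : HasCompactSupport φ)
    (hφ0 : ∀ x, 0 ≤ φ x) (hφΩ : tsupport φ ⊆ Ω) : 0 ≤ ∫ x, f x * laplacian φ x := by
  obtain ⟨δ, hδ, hδΩ⟩ := hφc.isCompact.exists_thickening_subset_open hΩo hφΩ
  have hlap := continuous_laplacian hφ
  have hlapc := hasCompactSupport_laplacian hφc
  have hlimit : Tendsto (fun c => ∫ x, supConvolution c f x * laplacian φ x) atTop
      (𝓝 (∫ x, f x * laplacian φ x)) := by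
    refine tendsto_integral_filter_of_dominated_convergence (fun x => M * ‖laplacian φ x‖) ?_ ?_
      ((hlap.integrable_of_hasCompactSupport hlapc).norm.const_mul M)
      (.of_forall fun x => (tendsto_supConvolution hf hM x).mul_const _)
    · filter_upwards [eventually_ge_atTop 0] with c hc
      exact ((measurable_supConvolution hc hM).mul hlap.measurable).aestronglyMeasurable
    · filter_upwards [eventually_ge_atTop 0] with c hc
      refine .of_forall fun x => ?_
      rw [norm_mul]
      exact mul_le_mul_of_nonneg_right (abs_supConvolution_le hc hM x) (norm_nonneg _)
  refine ge_of_tendsto hlimit ?_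
  filter_upwards [eventually_dist_lt_of_mul_dist_sq_le hM hδ, eventually_gt_atTop 0]
    with c hnear hc
  refine integral_supConvolution_mul_laplacian_nonneg hc hf hM hφ hφc hφ0
    fun x hx y hxy d hd => ?_
  have hy : y ∈ Ω := hδΩ (mem_thickening_iff.2 ⟨x, hx, dist_comm x y ▸ hnear x y hxy⟩)
  exact (tendsto_discreteLaplacian (mem_of_superset (hΩo.mem_nhds hy) hf1) (hf2 y hy)).eventually
    (lt_mem_nhds (hd.trans_le (hsub y hy)))

end WeakSubharmonicity

/-! ### Smooth subharmonic approximation up to the boundary -/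

section SmoothApproximation

theorem exists_continuous_hasCompactSupport_eqOn {X : Type*} [TopologicalSpace X] [T2Space X]
    [NormalSpace X] [LocallyCompactSpace X] {K : Set X} {f : X → ℝ} (hK : IsCompact K)
    (hf : ContinuousOn f K) : ∃ g : X → ℝ, Continuous g ∧ HasCompactSupport g ∧ EqOn g f K := by
  obtain ⟨g, hg⟩ := ContinuousMap.exists_restrict_eq hK.isClosed ⟨K.domRestrict f, hf.domRestrict⟩
  obtain ⟨χ, hχ, -, hχc, -⟩ :=
    exists_continuous_one_zero_of_isCompact hK isClosed_empty (disjoint_empty K)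
  have hgf (x : X) (hx : x ∈ K) : g x = f x := DFunLike.congr_fun hg ⟨x, hx⟩
  exact ⟨fun x => χ x * g x, by fun_prop, hχc.mul_right, fun x hx => by simp [hχ hx, hgf x hx]⟩

variable {n : ℕ} {Ω : Set (𝔼 n)} {f g F : 𝔼 n → ℝ}

theorem laplacian_congr_of_eventuallyEq {x : 𝔼 n} (hfg : f =ᶠ[𝓝 x] g) :
    laplacian f x = laplacian g x := by
  have hpartial (e : 𝔼 n) : (fun y => fderiv ℝ f y e) =ᶠ[𝓝 x] fun y => fderiv ℝ g y e :=
    hfg.fderiv.mono fun _ hy => DFunLike.congr_fun hy e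
  simp only [laplacian, (hpartial _).fderiv_eq]

theorem laplacian_add_const (F : 𝔼 n → ℝ) (c : ℝ) (x : 𝔼 n) :
    laplacian (fun y => F y + c) x = laplacian F x := by
  simp only [laplacian, fderiv_add_const]

theorem fderiv_comp_homothety {E : Type*} [NormedAddCommGroup E] [NormedSpace ℝ E] {G : E → ℝ}
    (hG : Differentiable ℝ G) (c : E) (s : ℝ) (x e : E) :
    fderiv ℝ (fun y => G (AffineMap.homothety c s y)) x e =
      s * fderiv ℝ G (AffineMap.homothety c s x) e := by
  have hhom : HasFDerivAt (AffineMap.homothety c s) (s • ContinuousLinearMap.id ℝ E) x :=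
    (((hasFDerivAt_id x).sub_const c).const_smul s).add_const c
  have hcomp : HasFDerivAt (fun y => G (AffineMap.homothety c s y)) _ x :=
    (hG _).hasFDerivAt.comp x hhom
  simp [hcomp.fderiv]

theorem laplacian_comp_homothety (hF : ContDiff ℝ 2 F) (c : 𝔼 n) (s : ℝ) (x : 𝔼 n) :
    laplacian (fun y => F (AffineMap.homothety c s y)) x =
      s ^ 2 * laplacian F (AffineMap.homothety c s x) := by
  simp only [laplacian, fderiv_comp_homothety (hF.differentiable two_ne_zero), Finset.mul_sum]
  refine Finset.sum_congr rfl fun i _ => ?_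
  have hpartial := (contDiff_one_fderiv_apply hF (EuclideanSpace.single i 1)).differentiable
    one_ne_zero
  have hcomp : Differentiable ℝ fun y =>
      fderiv ℝ F (AffineMap.homothety c s y) (EuclideanSpace.single i 1) :=
    hpartial.comp (((differentiable_id.sub_const c).const_smul s).add_const c)
  rw [fderiv_const_mul (hcomp x), smul_apply, fderiv_comp_homothety hpartial, smul_eq_mul, sq,
    mul_assoc]

theorem laplacian_mollify_nonneg (hf : Continuous f) (hfc : HasCompactSupport f) (hΩo : IsOpen Ω)
    (hf1 : ∀ x ∈ Ω, DifferentiableAt ℝ f x)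
    (hf2 : ∀ x ∈ Ω, DifferentiableAt ℝ (fun y => fderiv ℝ f y) x)
    (hsub : ∀ x ∈ Ω, 0 ≤ laplacian f x) {ρ : ContDiffBump (0 : 𝔼 n)} {x : 𝔼 n}
    (hx : closedBall x ρ.rOut ⊆ Ω) : 0 ≤ laplacian (mollify ρ f) x := by
  obtain ⟨M, hM⟩ := hf.bounded_above_of_compact_support hfc
  rw [laplacian_mollify ρ hf]
  exact integral_mul_laplacian_nonneg hf hM hΩo hf1 hf2 hsub (contDiff_normed_const_sub ρ x)
    (hasCompactSupport_normed_const_sub ρ x) (fun _ => ρ.nonneg_normed _)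
    (tsupport_normed_const_sub ρ x ▸ hx)

theorem homothety_mem_of_mem_closure (hΩo : IsOpen Ω) (hΩc : Convex ℝ Ω) {c x : 𝔼 n} (hc : c ∈ Ω)
    (hx : x ∈ closure Ω) {s : ℝ} (hs : s ∈ Ico 0 1) : AffineMap.homothety c s x ∈ Ω := by
  have := hΩc.combo_interior_closure_mem_interior (hΩo.interior_eq.symm ▸ hc) hx (sub_pos.2 hs.2)
    hs.1 (sub_add_cancel 1 s)
  rwa [hΩo.interior_eq, ← AffineMap.lineMap_apply_module, ← AffineMap.homothety_eq_lineMap] at this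

theorem exists_homothety_dist_lt (hΩb : Bornology.IsBounded Ω) (c : 𝔼 n) {δ : ℝ} (hδ : 0 < δ) :
    ∃ s ∈ Ico (0 : ℝ) 1, ∀ x ∈ closure Ω, dist (AffineMap.homothety c s x) x < δ := by
  obtain ⟨R, hR⟩ := hΩb.closure.subset_closedBall c
  have hlim : Tendsto (fun s : ℝ => |1 - s| * R) (𝓝[<] 1) (𝓝 0) :=
    tendsto_nhdsWithin_of_tendsto_nhds (Continuous.tendsto' (by fun_prop) _ _ (by simp))
  obtain ⟨s, hsδ, hs⟩ := ((hlim.eventually_lt_const hδ).and (Ioo_mem_nhdsLT one_pos)).exists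
  refine ⟨s, Ioo_subset_Ico_self hs, fun x hx => lt_of_le_of_lt ?_ hsδ⟩
  rw [dist_homothety_self, Real.norm_eq_abs]
  gcongr
  exact mem_closedBall'.1 (hR hx)

theorem exists_contDiff_subharmonic_approx (hf : Continuous f) (hfc : HasCompactSupport f)
    (hΩo : IsOpen Ω) (hΩb : Bornology.IsBounded Ω) (hΩc : Convex ℝ Ω) (hΩne : Ω.Nonempty)
    (hf1 : ∀ x ∈ Ω, DifferentiableAt ℝ f x)
    (hf2 : ∀ x ∈ Ω, DifferentiableAt ℝ (fun y => fderiv ℝ f y) x)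
    (hsub : ∀ x ∈ Ω, 0 ≤ laplacian f x) {η : ℝ} (hη : 0 < η) :
    ∃ F : 𝔼 n → ℝ, ContDiff ℝ 2 F ∧ (∀ x ∈ Ω, 0 ≤ laplacian F x) ∧
      ∀ x ∈ closure Ω, |F x - f x| ≤ η := by
  obtain ⟨c, hc⟩ := hΩne
  obtain ⟨δ, hδ, hfδ⟩ := Metric.uniformContinuous_iff.1
    (hf.uniformContinuous_of_tendsto_cocompact hfc.is_zero_at_infty) (η / 2) (half_pos hη)
  obtain ⟨s, hs, hsδ⟩ := exists_homothety_dist_lt hΩb c hδ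
  have hcont : Continuous (AffineMap.homothety c s) := AffineMap.homothety_continuous c s
  obtain ⟨ε, hε, hεΩ⟩ := (hΩb.isCompact_closure.image hcont).exists_cthickening_subset_open hΩo
    (image_subset_iff.2 fun x hx => homothety_mem_of_mem_closure hΩo hΩc hc hx hs)
  have hr : 0 < min δ ε := lt_min hδ hε
  let ρ : ContDiffBump (0 : 𝔼 n) := ⟨min δ ε / 2, min δ ε, half_pos hr, half_lt_self hr⟩
  refine ⟨fun x => mollify ρ f (AffineMap.homothety c s x), ?_, fun x hx => ?_, fun x hx => ?_⟩
  · exact (contDiff_mollify ρ hf).comp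
      (((contDiff_id.sub contDiff_const).const_smul s).add contDiff_const)
  · rw [laplacian_comp_homothety (contDiff_mollify ρ hf)]
    refine mul_nonneg (sq_nonneg s) (laplacian_mollify_nonneg hf hfc hΩo hf1 hf2 hsub ?_)
    exact (closedBall_subset_closedBall (min_le_right δ ε)).trans <|
      (closedBall_subset_cthickening (mem_image_of_mem _ (subset_closure hx)) ε).trans hεΩ
  · have hmollify := abs_mollify_sub_le ρ hf (x := AffineMap.homothety c s x) fun y hy =>
      (hfδ ((mem_ball.1 hy).trans_le (min_le_left δ ε))).le
    have hhom : |f (AffineMap.homothety c s x) - f x| ≤ η / 2 := (hfδ (hsδ x hx)).le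
    linarith [abs_sub_le (mollify ρ f (AffineMap.homothety c s x))
      (f (AffineMap.homothety c s x)) (f x)]

end SmoothApproximation

/-! ### Green's identity against the torsion function -/

section Green

open scoped Gradient

variable {n : ℕ} {w F : 𝔼 n → ℝ}

theorem norm_gradient (F : 𝔼 n → ℝ) (x : 𝔼 n) : ‖∇ F x‖ = ‖fderiv ℝ F x‖ :=
  (InnerProductSpace.toDual ℝ (𝔼 n)).symm.norm_map _

theorem gradient_apply (F : 𝔼 n → ℝ) (x : 𝔼 n) (i : Fin n) :
    ∇ F x i = fderiv ℝ F x (EuclideanSpace.single i 1) := by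
  simp [← inner_gradient_left, EuclideanSpace.inner_single_right]

theorem contDiff_gradient (hF : ContDiff ℝ 2 F) : ContDiff ℝ 1 (∇ F) :=
  contDiff_euclidean.2 fun i => by
    simpa only [gradient_apply] using contDiff_one_fderiv_apply hF _

theorem contDiff_smul_gradient (hw : ContDiff ℝ 2 w) (hF : ContDiff ℝ 2 F) :
    ContDiff ℝ 1 fun x => w x • ∇ F x :=
  (hw.of_le one_le_two).smul (contDiff_gradient hF)

theorem divergence_smul_gradient (hw : ContDiff ℝ 2 w) (hF : ContDiff ℝ 2 F) (x : 𝔼 n) :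
    divergence (fun y => w y • ∇ F y) x = inner ℝ (∇ w x) (∇ F x) + w x * laplacian F x := by
  have hpartial (i : Fin n) : fderiv ℝ (fun y => (w y • ∇ F y) i) x (EuclideanSpace.single i 1) =
      ∇ F x i * ∇ w x i + w x * fderiv ℝ (fun y => ∇ F y i) x (EuclideanSpace.single i 1) := by
    have hFi := contDiff_apply_of_contDiff (contDiff_gradient hF) i
    simp only [PiLp.smul_apply, smul_eq_mul]
    rw [fderiv_fun_mul (hw.differentiable two_ne_zero x) (hFi.differentiable one_ne_zero x)]
    simp only [add_apply, smul_apply, smul_eq_mul, gradient_apply w]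
    ring
  simp only [divergence, hpartial, Finset.sum_add_distrib, ← Finset.mul_sum, gradient_apply F,
    laplacian, PiLp.inner_apply, RCLike.inner_apply, conj_trivial]

theorem divergence_smul_gradient_sub_smul_gradient (hw : ContDiff ℝ 2 w) (hF : ContDiff ℝ 2 F)
    (x : 𝔼 n) : divergence (fun y => w y • ∇ F y - F y • ∇ w y) x =
      w x * laplacian F x - F x * laplacian w x := by
  rw [divergence_sub (contDiff_smul_gradient hw hF) (contDiff_smul_gradient hF hw),
    divergence_smul_gradient hw hF, divergence_smul_gradient hF hw, real_inner_comm]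
  ring

end Green

section Barrier

open scoped Gradient

variable {m : ℕ} {Ω : Set (𝔼(m + 1))} {w F : 𝔼(m + 1) → ℝ}

theorem setIntegral_le_of_laplacian_eq_neg_one (hΩo : IsOpen Ω) (hΩb : Bornology.IsBounded Ω)
    (hΩc : Convex ℝ Ω) (hw : ContDiff ℝ 2 w) (hF : ContDiff ℝ 2 F) (hw0 : ∀ x ∈ Ω, 0 ≤ w x)
    (hwlap : ∀ x ∈ Ω, laplacian w x = -1) (hFlap : ∀ x ∈ Ω, 0 ≤ laplacian F x) :
    ∫ x in Ω, F x ≤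
      ∫ x in frontier Ω, ‖w x • ∇ F x - F x • ∇ w x‖ ∂μH[(m : ℝ)] := by
  have hX : ContDiff ℝ 1 fun x => w x • ∇ F x - F x • ∇ w x :=
    (contDiff_smul_gradient hw hF).sub (contDiff_smul_gradient hF hw)
  refine le_trans (setIntegral_mono_on ?_ ?_ hΩo.measurableSet fun x hx => ?_)
    (setIntegral_divergence_le hΩo hΩb hΩc hX)
  · exact integrableOn_of_continuous_of_isBounded hF.continuous hΩb
  · exact integrableOn_of_continuous_of_isBounded (continuous_divergence hX) hΩb
  · rw [divergence_smul_gradient_sub_smul_gradient hw hF, hwlap x hx]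
    linarith [mul_nonneg (hw0 x hx) (hFlap x hx)]

theorem exists_notMem_thickening_dist_eq {n : ℕ} {Ω : Set (𝔼 n)} (hΩo : IsOpen Ω)
    (hΩc : Convex ℝ Ω) (hΩne : Ω.Nonempty) {x : 𝔼 n} (hx : x ∉ Ω) {δ : ℝ} (hδ : 0 ≤ δ) :
    ∃ z ∉ thickening δ Ω, dist x z = δ := by
  obtain ⟨ν, hν, hpos⟩ := exists_unit_forall_inner_sub_pos hΩo hΩc hΩne hx
  refine ⟨x - δ • ν, fun hz => ?_, by simp [norm_smul, hν, abs_of_nonneg hδ]⟩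
  obtain ⟨y, hy, hdist⟩ := mem_thickening_iff.1 hz
  have hproj : inner ℝ ν (y - (x - δ • ν)) = inner ℝ ν (y - x) + δ := by
    rw [← sub_add, inner_add_right, real_inner_smul_right, real_inner_self_eq_norm_sq, hν]
    ring
  have hle : inner ℝ ν (y - (x - δ • ν)) ≤ dist (x - δ • ν) y := by
    simpa [hν, dist_eq_norm_sub'] using real_inner_le_norm ν (y - (x - δ • ν))
  linarith [hpos y hy]

theorem exists_torsion_barrier (hΩo : IsOpen Ω) (hΩb : Bornology.IsBounded Ω) (hΩc : Convex ℝ Ω)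
    (hΩne : Ω.Nonempty) {δ : ℝ} (hδ : 0 < δ) :
    ∃ w : 𝔼(m + 1) → ℝ, ContDiff ℝ 2 w ∧ (∀ x, 0 ≤ w x) ∧ (∀ x ∈ Ω, laplacian w x = -1) ∧
      (∀ x, ‖fderiv ℝ w x‖ ≤ volumeRadius (cthickening δ Ω) / √(m + 1 : ℕ)) ∧
      ∀ x ∈ frontier Ω, w x ≤ volumeRadius (cthickening δ Ω) / √(m + 1 : ℕ) * (2 * δ) := by
  obtain ⟨u, hu, hlip⟩ := exists_isTorsionFunction_abs_sub_le_volumeRadius (Ω := thickening δ Ω)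
    m.succ_ne_zero isOpen_thickening hΩb.thickening (hΩc.thickening δ)
  set K := volumeRadius (cthickening δ Ω) / √(m + 1 : ℕ)
  have hK : 0 ≤ K := div_nonneg (volumeRadius_nonneg _) (Real.sqrt_nonneg _)
  have hKlip (x y : 𝔼(m + 1)) : |u x - u y| ≤ K * dist x y := by
    refine (hlip x y).trans ?_
    unfold K
    gcongr
    exact volumeRadius_mono (thickening_subset_cthickening δ Ω) hΩb.cthickening.measure_lt_top.ne
  let ρ : ContDiffBump (0 : 𝔼(m + 1)) :=
    ⟨δ / 4, δ / 2, by positivity, by linarith⟩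
  refine ⟨mollify ρ u, contDiff_mollify ρ hu.continuous,
    fun x => mollify_nonneg ρ fun y _ => hu.nonneg y,
    fun x hx => hu.laplacian_mollify_eq fun y hy => ?_,
    norm_fderiv_mollify_le ρ hu.continuous hK hKlip, fun x hx => ?_⟩
  · exact mem_thickening_iff.2 ⟨x, hx, (mem_closedBall.1 hy).trans_lt (half_lt_self hδ)⟩
  · obtain ⟨z, hz, hxz⟩ := exists_notMem_thickening_dist_eq hΩo hΩc hΩne
      (hΩo.frontier_eq ▸ hx).2 hδ.le
    have hux : |u x - u z| ≤ K * δ := hxz ▸ hKlip x z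
    have hwx : |mollify ρ u x - u x| ≤ K * δ :=
      abs_mollify_sub_le ρ hu.continuous fun y hy => (hKlip y x).trans <|
        mul_le_mul_of_nonneg_left ((mem_ball.1 hy).le.trans (half_le_self hδ.le)) hK
    rw [hu.eq_zero_of_notMem z hz] at hux
    linarith [le_abs_self (u x - 0), le_abs_self (mollify ρ u x - u x)]

theorem setIntegral_le_add_of_contDiff (hΩo : IsOpen Ω) (hΩb : Bornology.IsBounded Ω)
    (hΩc : Convex ℝ Ω) (hΩne : Ω.Nonempty) (hF : ContDiff ℝ 2 F)
    (hFlap : ∀ x ∈ Ω, 0 ≤ laplacian F x) (hF0 : ∀ x ∈ frontier Ω, 0 ≤ F x) {δ : ℝ} (hδ : 0 < δ) :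
    ∫ x in Ω, F x ≤ volumeRadius (cthickening δ Ω) / √(m + 1 : ℕ) *
      ((2 * δ) * (∫ x in frontier Ω, ‖fderiv ℝ F x‖ ∂μH[(m : ℝ)]) +
        ∫ x in frontier Ω, F x ∂μH[(m : ℝ)]) := by
  obtain ⟨w, hw, hw0, hwlap, hwgrad, hwfr⟩ := exists_torsion_barrier hΩo hΩb hΩc hΩne hδ
  set K := volumeRadius (cthickening δ Ω) / √(m + 1 : ℕ)
  have hFgrad : IntegrableOn (fun x => ‖fderiv ℝ F x‖) (frontier Ω) μH[(m : ℝ)] :=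
    integrableOn_frontier hΩo hΩb hΩc (hF.continuous_fderiv two_ne_zero).norm.continuousOn
  have hFint : IntegrableOn F (frontier Ω) μH[(m : ℝ)] :=
    integrableOn_frontier hΩo hΩb hΩc hF.continuous.continuousOn
  have hX : Continuous fun x => w x • ∇ F x - F x • ∇ w x :=
    ((contDiff_smul_gradient hw hF).sub (contDiff_smul_gradient hF hw)).continuous
  have hbound (x : 𝔼(m + 1)) (hx : x ∈ frontier Ω) :
      ‖w x • ∇ F x - F x • ∇ w x‖ ≤ K * (2 * δ * ‖fderiv ℝ F x‖ + F x) := calc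
    _ ≤ w x * ‖fderiv ℝ F x‖ + F x * ‖fderiv ℝ w x‖ := by
      simpa [norm_smul, norm_gradient, abs_of_nonneg (hw0 x), abs_of_nonneg (hF0 x hx)]
        using norm_sub_le (w x • ∇ F x) (F x • ∇ w x)
    _ ≤ K * (2 * δ) * ‖fderiv ℝ F x‖ + F x * K := by
      gcongr
      exacts [hwfr x hx, hF0 x hx, hwgrad x]
    _ = K * (2 * δ * ‖fderiv ℝ F x‖ + F x) := by ring
  calc ∫ x in Ω, F x
      ≤ ∫ x in frontier Ω, ‖w x • ∇ F x - F x • ∇ w x‖ ∂μH[(m : ℝ)] :=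
        setIntegral_le_of_laplacian_eq_neg_one hΩo hΩb hΩc hw hF (fun x _ => hw0 x) hwlap hFlap
    _ ≤ ∫ x in frontier Ω, K * (2 * δ * ‖fderiv ℝ F x‖ + F x) ∂μH[(m : ℝ)] :=
        setIntegral_mono_on (integrableOn_frontier hΩo hΩb hΩc hX.norm.continuousOn)
          (((hFgrad.const_mul _).add hFint).const_mul K) isClosed_frontier.measurableSet hbound
    _ = _ := by
        rw [integral_const_mul, integral_add (hFgrad.const_mul _) hFint, integral_const_mul]

theorem setIntegral_le_of_contDiff (hΩo : IsOpen Ω) (hΩb : Bornology.IsBounded Ω)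
    (hΩc : Convex ℝ Ω) (hΩne : Ω.Nonempty) (hF : ContDiff ℝ 2 F)
    (hFlap : ∀ x ∈ Ω, 0 ≤ laplacian F x) (hF0 : ∀ x ∈ frontier Ω, 0 ≤ F x) :
    ∫ x in Ω, F x ≤
      volumeRadius Ω / √(m + 1 : ℕ) * ∫ x in frontier Ω, F x ∂μH[(m : ℝ)] := by
  have hradius := ((tendsto_volumeRadius_cthickening hΩb hΩc).div_const √(m + 1 : ℕ))
  have hgrad : Tendsto (fun δ : ℝ => 2 * δ * (∫ x in frontier Ω, ‖fderiv ℝ F x‖ ∂μH[(m : ℝ)]) +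
      ∫ x in frontier Ω, F x ∂μH[(m : ℝ)]) (𝓝 0) (𝓝 (∫ x in frontier Ω, F x ∂μH[(m : ℝ)])) :=
    Continuous.tendsto' (by fun_prop) _ _ (by simp)
  exact ge_of_tendsto ((hradius.mul hgrad).mono_left nhdsWithin_le_nhds)
    (eventually_mem_nhdsWithin.mono fun δ (hδ : δ ∈ Ioi 0) =>
      setIntegral_le_add_of_contDiff hΩo hΩb hΩc hΩne hF hFlap hF0 hδ)

end Barrier

section Bound

variable {m : ℕ} {Ω : Set (𝔼(m + 1))} {f : 𝔼(m + 1) → ℝ}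

theorem setIntegral_le_add_of_hasCompactSupport (hΩo : IsOpen Ω) (hΩb : Bornology.IsBounded Ω)
    (hΩc : Convex ℝ Ω) (hΩne : Ω.Nonempty) (hf : Continuous f) (hfc : HasCompactSupport f)
    (hf0 : ∀ x ∈ frontier Ω, 0 ≤ f x) (hf1 : ∀ x ∈ Ω, DifferentiableAt ℝ f x)
    (hf2 : ∀ x ∈ Ω, DifferentiableAt ℝ (fun y => fderiv ℝ f y) x)
    (hsub : ∀ x ∈ Ω, 0 ≤ laplacian f x) {η : ℝ} (hη : 0 < η) :
    ∫ x in Ω, f x ≤ volumeRadius Ω / √(m + 1 : ℕ) *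
      ((∫ x in frontier Ω, f x ∂μH[(m : ℝ)]) + 2 * η * μH[(m : ℝ)].real (frontier Ω)) := by
  obtain ⟨F, hF, hFlap, hFf⟩ :=
    exists_contDiff_subharmonic_approx hf hfc hΩo hΩb hΩc hΩne hf1 hf2 hsub hη
  have hFη : ContDiff ℝ 2 fun x => F x + η := hF.add contDiff_const
  have hle (x : 𝔼(m + 1)) (hx : x ∈ closure Ω) : f x ≤ F x + η := by
    linarith [(abs_le.1 (hFf x hx)).1]
  have hge (x : 𝔼(m + 1)) (hx : x ∈ frontier Ω) : F x + η ≤ f x + 2 * η := by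
    linarith [(abs_le.1 (hFf x (frontier_subset_closure hx))).2]
  have hfint : IntegrableOn f (frontier Ω) μH[(m : ℝ)] :=
    integrableOn_frontier hΩo hΩb hΩc hf.continuousOn
  have hconst : IntegrableOn (fun _ => 2 * η) (frontier Ω) μH[(m : ℝ)] :=
    integrableOn_frontier hΩo hΩb hΩc continuousOn_const
  calc ∫ x in Ω, f x
      ≤ ∫ x in Ω, F x + η :=
        setIntegral_mono_on (integrableOn_of_continuous_of_isBounded hf hΩb)
          (integrableOn_of_continuous_of_isBounded hFη.continuous hΩb) hΩo.measurableSet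
          fun x hx => hle x (subset_closure hx)
    _ ≤ volumeRadius Ω / √(m + 1 : ℕ) * ∫ x in frontier Ω, F x + η ∂μH[(m : ℝ)] :=
        setIntegral_le_of_contDiff hΩo hΩb hΩc hΩne hFη
          (fun x hx => (hFlap x hx).trans_eq (laplacian_add_const F η x).symm)
          fun x hx => (hf0 x hx).trans (hle x (frontier_subset_closure hx))
    _ ≤ volumeRadius Ω / √(m + 1 : ℕ) * ∫ x in frontier Ω, f x + 2 * η ∂μH[(m : ℝ)] :=
        mul_le_mul_of_nonneg_left
          (setIntegral_mono_on (integrableOn_frontier hΩo hΩb hΩc hFη.continuous.continuousOn)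
            (hfint.add hconst) isClosed_frontier.measurableSet hge)
          (div_nonneg (volumeRadius_nonneg Ω) (Real.sqrt_nonneg _))
    _ = _ := by
        rw [integral_add hfint hconst, setIntegral_const, smul_eq_mul, mul_comm (2 * η)]

theorem setIntegral_le_of_hasCompactSupport (hΩo : IsOpen Ω) (hΩb : Bornology.IsBounded Ω)
    (hΩc : Convex ℝ Ω) (hΩne : Ω.Nonempty) (hf : Continuous f) (hfc : HasCompactSupport f)
    (hf0 : ∀ x ∈ frontier Ω, 0 ≤ f x) (hf1 : ∀ x ∈ Ω, DifferentiableAt ℝ f x)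
    (hf2 : ∀ x ∈ Ω, DifferentiableAt ℝ (fun y => fderiv ℝ f y) x)
    (hsub : ∀ x ∈ Ω, 0 ≤ laplacian f x) :
    ∫ x in Ω, f x ≤
      volumeRadius Ω / √(m + 1 : ℕ) * ∫ x in frontier Ω, f x ∂μH[(m : ℝ)] := by
  have hlim : Tendsto (fun η : ℝ => volumeRadius Ω / √(m + 1 : ℕ) *
      ((∫ x in frontier Ω, f x ∂μH[(m : ℝ)]) + 2 * η * μH[(m : ℝ)].real (frontier Ω))) (𝓝[>] 0)
      (𝓝 (volumeRadius Ω / √(m + 1 : ℕ) * ∫ x in frontier Ω, f x ∂μH[(m : ℝ)])) :=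
    tendsto_nhdsWithin_of_tendsto_nhds (Continuous.tendsto' (by fun_prop) _ _ (by simp))
  exact ge_of_tendsto hlim (eventually_mem_nhdsWithin.mono fun η hη =>
    setIntegral_le_add_of_hasCompactSupport hΩo hΩb hΩc hΩne hf hfc hf0 hf1 hf2 hsub hη)

theorem setIntegral_le_volumeRadius_mul_setIntegral_frontier (hΩo : IsOpen Ω)
    (hΩb : Bornology.IsBounded Ω) (hΩc : Convex ℝ Ω) (hΩne : Ω.Nonempty)
    (hfc : ContinuousOn f (closure Ω)) (hf0 : ∀ x ∈ frontier Ω, 0 ≤ f x)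
    (hf1 : ∀ x ∈ Ω, DifferentiableAt ℝ f x)
    (hf2 : ∀ x ∈ Ω, DifferentiableAt ℝ (fun y => fderiv ℝ f y) x)
    (hsub : ∀ x ∈ Ω, 0 ≤ laplacian f x) :
    ∫ x in Ω, f x ≤
      volumeRadius Ω / √(m + 1 : ℕ) * ∫ x in frontier Ω, f x ∂μH[(m : ℝ)] := by
  obtain ⟨g, hg, hgc, hgf⟩ := exists_continuous_hasCompactSupport_eqOn hΩb.isCompact_closure hfc
  have hgerm (x : 𝔼(m + 1)) (hx : x ∈ Ω) : g =ᶠ[𝓝 x] f :=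
    (hgf.mono subset_closure).eventuallyEq_of_mem (hΩo.mem_nhds hx)
  rw [← setIntegral_congr_fun hΩo.measurableSet (hgf.mono subset_closure),
    ← setIntegral_congr_fun isClosed_frontier.measurableSet (hgf.mono frontier_subset_closure)]
  exact setIntegral_le_of_hasCompactSupport hΩo hΩb hΩc hΩne hg hgc
    (fun x hx => (hf0 x hx).trans_eq (hgf (frontier_subset_closure hx)).symm)
    (fun x hx => (hgerm x hx).differentiableAt_iff.2 (hf1 x hx))
    (fun x hx => (hgerm x hx).fderiv.differentiableAt_iff.2 (hf2 x hx))
    fun x hx => (hsub x hx).trans_eq (laplacian_congr_of_eventuallyEq (hgerm x hx)).symm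

end Bound

theorem subharmonic_boundary_bound_general {n : ℕ} (hn : 0 < n) {Ω : Set (𝔼 n)} (hΩo : IsOpen Ω)
    (hΩb : Bornology.IsBounded Ω) (hΩc : Convex ℝ Ω) (hΩne : Ω.Nonempty) {f : 𝔼 n → ℝ}
    (hfc : ContinuousOn f (closure Ω)) (hf0 : ∀ x ∈ frontier Ω, 0 ≤ f x)
    (hf1 : ∀ x ∈ Ω, DifferentiableAt ℝ f x)
    (hf2 : ∀ x ∈ Ω, DifferentiableAt ℝ (fun y => fderiv ℝ f y) x)
    (hsub : ∀ x ∈ Ω, 0 ≤ laplacian f x) :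
    ∫ x in Ω, f x ≤ ((volume Ω).toReal ^ (n : ℝ)⁻¹ /
      ((volume (ball (0 : 𝔼 n) 1)).toReal ^ (n : ℝ)⁻¹ * √n)) *
        ∫ x in frontier Ω, f x ∂μH[(n : ℝ) - 1] := by
  obtain ⟨m, rfl⟩ := Nat.exists_eq_succ_of_ne_zero hn.ne'
  have hdim : ((m.succ : ℕ) : ℝ) - 1 = m := by push_cast; ring
  rw [hdim, ← div_div]
  exact setIntegral_le_volumeRadius_mul_setIntegral_frontier hΩo hΩb hΩc hΩne hfc hf0 hf1 hf2 hsub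

/-- For a positive subharmonic function `f` on a bounded open convex set `Ω ⊂ ℝⁿ`,
`∫_Ω f ≤ |Ω|^(1/n) / (ω_n^(1/n) √n) ∫_{∂Ω} f`, where `ω_n` is the volume of the unit
ball in `ℝⁿ`. -/
theorem subharmonic_boundary_bound
    (n : ℕ) (hn : 0 < n)
    (Ω : Set (EuclideanSpace ℝ (Fin n)))
    (hΩo : IsOpen Ω) (hΩb : Bornology.IsBounded Ω)
    (hΩc : Convex ℝ Ω) (hΩne : (interior Ω).Nonempty)
    (f : EuclideanSpace ℝ (Fin n) → ℝ)
    (hfc : ContinuousOn f (closure Ω))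
    (hfpos : ∀ x ∈ Ω, 0 < f x)
    (hf1 : ∀ x ∈ Ω, DifferentiableAt ℝ f x)
    (hf2 : ∀ x ∈ Ω, DifferentiableAt ℝ (fun y => fderiv ℝ f y) x)
    (hsub : ∀ x ∈ Ω, 0 ≤ laplacian f x) :
    ∫ x in Ω, f x ≤
      ((volume Ω).toReal ^ ((n : ℝ)⁻¹) /
          ((volume (Metric.ball (0 : EuclideanSpace ℝ (Fin n)) 1)).toReal ^ ((n : ℝ)⁻¹) *
            Real.sqrt n)) *
        ∫ x in frontier Ω, f x ∂μH[(n : ℝ) - 1] :=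
  subharmonic_boundary_bound_general hn hΩo hΩb hΩc (hΩne.mono interior_subset) hfc
    (fun _ hx => le_on_closure (fun y hy => (hfpos y hy).le) continuousOn_const hfc
      (frontier_subset_closure hx)) hf1 hf2 hsub
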